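/- arXiv:2208.09404 — 3 statements merged into one kernel-verified Lean document; each statement's English description precedes it below -/
import Mathlib

section
/- Let U be an open subset of ℝ^{2n} with n ≥ 2, and let ω be a smooth differential 2-form on U that is nondegenerate at every point. Suppose ω = f · ω₀ and ω = g · ω₁ on U, where ω₀ and ω₁ are smooth closed 2-forms and f, g : U → ℝ are smooth positive functions. Then d(log f) = d(log g) on U. -/
/-- The exterior derivative of a 2-form `ω` (given as a smooth family of continuous bilinear
forms) evaluated at `x` on the triple of vectors `(u, v, w)`:
`(dω)ₓ(u,v,w) = (D_u ω)(v,w) - (D_v ω)(u,w) + (D_w ω)(u,v)`. -/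
noncomputable def extDeriv2 {m : ℕ}
    (ω : (Fin m → ℝ) → ((Fin m → ℝ) →L[ℝ] (Fin m → ℝ) →L[ℝ] ℝ))
    (x u v w : Fin m → ℝ) : ℝ :=
  fderiv ℝ ω x u v w - fderiv ℝ ω x v u w + fderiv ℝ ω x w u v

/-!
If `ω = f • η` with `η` closed, the Leibniz rule gives `dω = d(log |f|) ∧ ω`. Two such
factorizations of `ω` therefore yield `θ ∧ ω = 0` for the difference `θ` of the two logarithmic
differentials. If `θ a ≠ 0`, then in dimension at least three some nonzero `v` is killed by both
`θ` and `ω a`, and evaluating `θ ∧ ω` at `(a, v, w)` shows that `ω v w = 0` for every `w`,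
contradicting nondegeneracy.
-/

open Filter Topology

section Wedge

variable {R M : Type*} [CommRing R]

/-- The wedge product `θ ∧ B` of a 1-form with a 2-form, evaluated at `(u, v, w)`. The forms are
plain functions, so that it applies to linear and to continuous linear maps alike. The signs are
those of `extDeriv2`; the expression represents `θ ∧ B` when `B` is alternating. -/
def wedgeOneTwo (θ : M → R) (B : M → M → R) (u v w : M) : R :=
  θ u * B v w - θ v * B u w + θ w * B u v

variable [AddCommGroup M] [Module R M]

theorem ne_zero_of_separatingLeft_smul [Nontrivial M] {c : R} {B : M →ₗ[R] M →ₗ[R] R}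
    (hB : (c • B).SeparatingLeft) : c ≠ 0 := by
  rintro rfl
  obtain ⟨v, hv⟩ := exists_ne (0 : M)
  exact hv (hB v fun w ↦ by simp)

theorem exists_ne_zero_apply_eq_zero_of_two_lt_rank [StrongRankCondition R]
    (hM : 2 < Module.rank R M) (θ φ : M →ₗ[R] R) : ∃ v ≠ 0, θ v = 0 ∧ φ v = 0 := by
  have not_injective : ¬ Function.Injective (θ.prod φ) := fun hinj ↦ by
    have hle := LinearMap.lift_rank_le_of_injective _ hinj
    rw [← Module.finrank_eq_rank R (R × R), Module.finrank_prod, Module.finrank_self] at hle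
    exact hM.not_ge (by simpa [one_add_one_eq_two] using hle)
  rw [← LinearMap.ker_eq_bot] at not_injective
  obtain ⟨v, hv, hv0⟩ := Submodule.exists_mem_ne_zero_of_ne_bot not_injective
  exact ⟨v, hv0, by simpa using hv⟩

variable [IsDomain R] {B : M →ₗ[R] M →ₗ[R] R}

theorem eq_zero_of_wedgeOneTwo_eq_zero (hM : 2 < Module.rank R M) (hB : B.SeparatingLeft)
    {θ : M →ₗ[R] R} (h : ∀ u v w, wedgeOneTwo θ (B ·) u v w = 0) : θ = 0 := by
  ext a
  by_contra ha
  obtain ⟨v, hv0, hθv, hBav⟩ := exists_ne_zero_apply_eq_zero_of_two_lt_rank hM θ (B a)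
  refine hv0 (hB v fun w ↦ ?_)
  have hmul : θ a * B v w = 0 := by simpa [wedgeOneTwo, hθv, hBav] using h a v w
  exact (mul_eq_zero.mp hmul).resolve_left ha

theorem eq_of_wedgeOneTwo_eq (hM : 2 < Module.rank R M) (hB : B.SeparatingLeft)
    {θ₁ θ₂ : M →ₗ[R] R}
    (h : ∀ u v w, wedgeOneTwo θ₁ (B ·) u v w = wedgeOneTwo θ₂ (B ·) u v w) : θ₁ = θ₂ := by
  refine sub_eq_zero.mp (eq_zero_of_wedgeOneTwo_eq_zero hM hB fun u v w ↦ ?_)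
  have huvw := h u v w
  simp only [wedgeOneTwo, LinearMap.sub_apply] at huvw ⊢
  linear_combination huvw

end Wedge

section ExtDeriv

variable {m : ℕ} {ω η : (Fin m → ℝ) → ((Fin m → ℝ) →L[ℝ] (Fin m → ℝ) →L[ℝ] ℝ)}
  {f : (Fin m → ℝ) → ℝ} {x : Fin m → ℝ}

set_option maxSynthPendingDepth 3 in
theorem extDeriv2_smul (hf : DifferentiableAt ℝ f x) (hη : DifferentiableAt ℝ η x)
    (u v w : Fin m → ℝ) :
    extDeriv2 (fun y ↦ f y • η y) x u v w =
      wedgeOneTwo (fderiv ℝ f x) (η x ·) u v w + f x * extDeriv2 η x u v w := by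
  simp only [extDeriv2, wedgeOneTwo, fderiv_fun_smul hf hη, add_apply, smul_apply,
    ContinuousLinearMap.smulRight_apply, smul_eq_mul]
  ring

theorem extDeriv2_eq_wedgeOneTwo_fderiv_log (hf : DifferentiableAt ℝ f x) (hfx : f x ≠ 0)
    (hη : DifferentiableAt ℝ η x) (hclosed : ∀ u v w, extDeriv2 η x u v w = 0)
    (hω : ω =ᶠ[𝓝 x] fun y ↦ f y • η y) (u v w : Fin m → ℝ) :
    extDeriv2 ω x u v w =
      wedgeOneTwo (fderiv ℝ (fun y ↦ Real.log (f y)) x) (ω x ·) u v w := by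
  calc
    extDeriv2 ω x u v w = extDeriv2 (fun y ↦ f y • η y) x u v w := by
      simp only [extDeriv2, hω.fderiv_eq]
    _ = wedgeOneTwo (fderiv ℝ f x) (η x ·) u v w := by
      rw [extDeriv2_smul hf hη, hclosed, mul_zero, add_zero]
    _ = wedgeOneTwo (fderiv ℝ (fun y ↦ Real.log (f y)) x) (ω x ·) u v w := by
      simp only [wedgeOneTwo, fderiv.log hf hfx, hω.eq_of_nhds, smul_apply, smul_eq_mul]
      field_simp

end ExtDeriv

-- `Real.log t` is `log |t|`, so the equation is also meaningful where `f` or `g` is negative.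
theorem local_lee_forms_agree_general {m : ℕ} (hm : 2 < m)
    {U : Set (Fin m → ℝ)} (hU : IsOpen U)
    {ω ω₀ ω₁ : (Fin m → ℝ) → ((Fin m → ℝ) →L[ℝ] (Fin m → ℝ) →L[ℝ] ℝ)}
    (hnondeg : ∀ x ∈ U, ∀ v, (∀ w, ω x v w = 0) → v = 0)
    (hω₀ : DifferentiableOn ℝ ω₀ U) (hω₁ : DifferentiableOn ℝ ω₁ U)
    (hclosed₀ : ∀ x ∈ U, ∀ u v w, extDeriv2 ω₀ x u v w = 0)
    (hclosed₁ : ∀ x ∈ U, ∀ u v w, extDeriv2 ω₁ x u v w = 0)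
    {f g : (Fin m → ℝ) → ℝ}
    (hf : DifferentiableOn ℝ f U) (hg : DifferentiableOn ℝ g U)
    (hωf : ∀ x ∈ U, ω x = f x • ω₀ x) (hωg : ∀ x ∈ U, ω x = g x • ω₁ x) :
    ∀ x ∈ U, fderiv ℝ (fun y ↦ Real.log (f y)) x = fderiv ℝ (fun y ↦ Real.log (g y)) x := by
  intro x hx
  have hUx : U ∈ 𝓝 x := hU.mem_nhds hx
  have hsep : (ω x).toLinearMap₁₂.SeparatingLeft := hnondeg x hx
  have : Nonempty (Fin m) := ⟨⟨0, by lia⟩⟩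
  have hfx : f x ≠ 0 := ne_zero_of_separatingLeft_smul (B := (ω₀ x).toLinearMap₁₂)
    (by rw [hωf x hx] at hsep; exact hsep)
  have hgx : g x ≠ 0 := ne_zero_of_separatingLeft_smul (B := (ω₁ x).toLinearMap₁₂)
    (by rw [hωg x hx] at hsep; exact hsep)
  have hdf := extDeriv2_eq_wedgeOneTwo_fderiv_log (hf.differentiableAt hUx) hfx
    (hω₀.differentiableAt hUx) (hclosed₀ x hx) (eventually_of_mem hUx hωf)
  have hdg := extDeriv2_eq_wedgeOneTwo_fderiv_log (hg.differentiableAt hUx) hgx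
    (hω₁.differentiableAt hUx) (hclosed₁ x hx) (eventually_of_mem hUx hωg)
  have hrank : 2 < Module.rank ℝ (Fin m → ℝ) := by rw [rank_fin_fun]; exact_mod_cast hm
  exact ContinuousLinearMap.coe_injective <| eq_of_wedgeOneTwo_eq hrank hsep fun u v w ↦
    (hdf u v w).symm.trans (hdg u v w)

/-- Let `U ⊆ ℝ^{2n}` be open, `n ≥ 2`, and let `ω` be a smooth 2-form on `U`
that is nondegenerate at every point of `U`.  If `ω = f • ω₀ = g • ω₁` on `U` with `ω₀`, `ω₁`
smooth closed 2-forms and `f`, `g` smooth positive functions, then `d(log f) = d(log g)`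
on `U`. -/
theorem local_lee_forms_agree
    {n : ℕ} (hn : 2 ≤ n)
    (U : Set (Fin (2 * n) → ℝ)) (hU : IsOpen U)
    (ω ω₀ ω₁ : (Fin (2 * n) → ℝ) → ((Fin (2 * n) → ℝ) →L[ℝ] (Fin (2 * n) → ℝ) →L[ℝ] ℝ))
    (hω : ContDiffOn ℝ (⊤ : ℕ∞) ω U)
    (halt : ∀ x ∈ U, ∀ v, ω x v v = 0)
    (hnondeg : ∀ x ∈ U, ∀ v, (∀ w, ω x v w = 0) → v = 0)
    (hω₀ : ContDiffOn ℝ (⊤ : ℕ∞) ω₀ U) (hω₁ : ContDiffOn ℝ (⊤ : ℕ∞) ω₁ U)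
    (hclosed₀ : ∀ x ∈ U, ∀ u v w, extDeriv2 ω₀ x u v w = 0)
    (hclosed₁ : ∀ x ∈ U, ∀ u v w, extDeriv2 ω₁ x u v w = 0)
    (f g : (Fin (2 * n) → ℝ) → ℝ)
    (hf : ContDiffOn ℝ (⊤ : ℕ∞) f U) (hg : ContDiffOn ℝ (⊤ : ℕ∞) g U)
    (hfpos : ∀ x ∈ U, 0 < f x) (hgpos : ∀ x ∈ U, 0 < g x)
    (hωf : ∀ x ∈ U, ω x = f x • ω₀ x)
    (hωg : ∀ x ∈ U, ω x = g x • ω₁ x) :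
    ∀ x ∈ U, fderiv ℝ (fun y => Real.log (f y)) x = fderiv ℝ (fun y => Real.log (g y)) x :=
  local_lee_forms_agree_general (by lia) hU hnondeg (hω₀.differentiableOn (by simp))
    (hω₁.differentiableOn (by simp)) hclosed₀ hclosed₁ (hf.differentiableOn (by simp))
    (hg.differentiableOn (by simp)) hωf hωg
end

section
/- Let U be an open subset of ℝ^m, let α be a smooth closed 1-form on U, and let γ₀, γ₁ : [0,1] → U be smooth paths with γ₀(0) = γ₁(0) and γ₀(1) = γ₁(1) that are smoothly homotopic in U relative to their endpoints. Then ∫₀¹ α(γ₀(t))(γ₀′(t)) dt = ∫₀¹ α(γ₁(t))(γ₁′(t)) dt. -/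
open Set

/-!
Pulled back along the homotopy `H`, a closed form stays closed on the unit square, so its integral
around the boundary of the square vanishes. The two sides of the square on which `H` is constant
contribute nothing, and the other two sides contribute the two integrals being compared.
-/

section Square

open scoped unitInterval

variable {X : Type*} [TopologicalSpace X] {H : ℝ × ℝ → X}

/-- The path `t ↦ H (s, t)` traced by a map `H`, continuous on the unit square, along the vertical
segment over `s`. Packaging it as a `Path` gives access to `curveIntegral`. -/
def verticalPath (hH : ContinuousOn H (I ×ˢ I)) {s : ℝ} (hs : s ∈ I) : Path (H (s, 0)) (H (s, 1)) :=
  Path.ofLine (f := fun t ↦ H (s, t)) (hH.comp (by fun_prop) fun _ ht ↦ ⟨hs, ht⟩) rfl rfl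

/-- A map `H`, continuous on the unit square, regarded as a free homotopy between the paths it
traces along the vertical sides; the homotopy parameter is the first coordinate. -/
def squareHomotopy (hH : ContinuousOn H (I ×ˢ I)) :
    (verticalPath hH unitInterval.zero_mem : C(I, X)).Homotopy
      (verticalPath hH unitInterval.one_mem) where
  toFun x := H (x.1, x.2)
  continuous_toFun := hH.comp_continuous (by fun_prop) fun x ↦ ⟨x.1.2, x.2.2⟩
  map_zero_left _ := rfl
  map_one_left _ := rfl

theorem eqOn_extend_verticalPath (hH : ContinuousOn H (I ×ˢ I)) {s : ℝ} (hs : s ∈ I) :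
    EqOn (verticalPath hH hs).extend (fun t ↦ H (s, t)) I :=
  fun _ ht ↦ Path.extend_apply _ ht

theorem eqOn_extend_evalAt_squareHomotopy (hH : ContinuousOn H (I ×ˢ I)) (t : I) :
    EqOn ((squareHomotopy hH).evalAt t).extend (fun s ↦ H (s, t)) I :=
  fun _ hs ↦ Path.extend_apply _ hs

theorem eqOn_IccExtend_extend_squareHomotopy (hH : ContinuousOn H (I ×ˢ I)) :
    EqOn (fun x : ℝ × ℝ ↦ IccExtend zero_le_one ((squareHomotopy hH).extend x.1) x.2) H
      (I ×ˢ I) := by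
  rintro ⟨s, t⟩ ⟨hs, ht⟩
  dsimp only
  rw [IccExtend_of_mem _ _ ht, ContinuousMap.Homotopy.extend_apply_of_mem_I _ hs]
  rfl

theorem range_squareHomotopy_subset (hH : ContinuousOn H (I ×ˢ I)) {U : Set X}
    (hHU : MapsTo H (I ×ˢ I) U) : range (squareHomotopy hH) ⊆ U :=
  range_subset_iff.2 fun x ↦ hHU ⟨x.1.2, x.2.2⟩

end Square

section ClosedForm

open scoped unitInterval

variable {𝕜 E F : Type*} [RCLike 𝕜] [NormedAddCommGroup E] [NormedSpace 𝕜 E] [NormedSpace ℝ E]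
  [NormedAddCommGroup F] [NormedSpace 𝕜 F] [NormedSpace ℝ F]

theorem curveIntegral_eq_integral_of_eqOn_extend (ω : E → E →L[𝕜] F) {a b : E} {p : Path a b}
    {γ : ℝ → E} (hγ : EqOn p.extend γ I) :
    curveIntegral ω p = ∫ t in (0 : ℝ)..1, ω (γ t) (derivWithin γ I t) := by
  rw [curveIntegral_def]
  refine intervalIntegral.integral_congr fun t ht ↦ ?_
  rw [uIcc_of_le zero_le_one] at ht
  rw [curveIntegralFun_def, hγ ht, derivWithin_congr hγ (hγ ht)]

theorem curveIntegral_eq_zero_of_eqOn_extend_const (ω : E → E →L[𝕜] F) {a b c : E} {p : Path a b}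
    (hp : EqOn p.extend (fun _ ↦ c) I) : curveIntegral ω p = 0 := by
  simp [curveIntegral_eq_integral_of_eqOn_extend ω hp]

variable {ω : E → E →L[𝕜] F} {dω : E → E →L[ℝ] E →L[𝕜] F} {U : Set E} {H : ℝ × ℝ → E}

theorem curveIntegral_boundary_squareHomotopy (hω : ∀ x ∈ U, HasFDerivWithinAt ω (dω x) U x)
    (hdω : ∀ x ∈ U, ∀ u ∈ tangentConeAt ℝ U x, ∀ v ∈ tangentConeAt ℝ U x, dω x u v = dω x v u)
    (hH : ContDiffOn ℝ 2 H (I ×ˢ I)) (hHU : MapsTo H (I ×ˢ I) U) :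
    curveIntegral ω (verticalPath hH.continuousOn unitInterval.zero_mem)
        + curveIntegral ω ((squareHomotopy hH.continuousOn).evalAt 1)
      = curveIntegral ω (verticalPath hH.continuousOn unitInterval.one_mem)
        + curveIntegral ω ((squareHomotopy hH.continuousOn).evalAt 0) := by
  set φ := squareHomotopy hH.continuousOn
  have hφU : range φ ⊆ U := range_squareHomotopy_subset hH.continuousOn hHU
  have hω_range : ∀ x ∈ range φ, HasFDerivWithinAt ω (dω x) (range φ) x :=
    fun x hx ↦ (hω x (hφU hx)).mono hφU
  -- `ω` need not be continuous on `closure U`, so we work on `range φ`, which is compact.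
  refine φ.curveIntegral_add_curveIntegral_eq_of_hasFDerivWithinAt
    (fun _ _ _ _ ↦ mem_range_self _) hω_range ?_ ?_ ?_
  · rw [(isCompact_range (map_continuous φ)).isClosed.closure_eq]
    exact fun x hx ↦ (hω_range x hx).continuousWithinAt
  · exact fun x hx u hu v hv ↦
      hdω x (hφU hx) u (tangentConeAt_mono hφU hu) v (tangentConeAt_mono hφU hv)
  · rw [← Prod.mk_zero_zero, ← Prod.mk_one_one, ← Icc_prod_Icc]
    exact hH.congr (eqOn_IccExtend_extend_squareHomotopy hH.continuousOn)

theorem closed_one_form_integral_homotopy_invariant_general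
    (hω : ∀ x ∈ U, HasFDerivWithinAt ω (dω x) U x)
    (hdω : ∀ x ∈ U, ∀ u ∈ tangentConeAt ℝ U x, ∀ v ∈ tangentConeAt ℝ U x, dω x u v = dω x v u)
    {γ₀ γ₁ : ℝ → E} {a b : E} (hH : ContDiffOn ℝ 2 H (I ×ˢ I)) (hHU : MapsTo H (I ×ˢ I) U)
    (hH0 : ∀ t ∈ I, H (0, t) = γ₀ t) (hH1 : ∀ t ∈ I, H (1, t) = γ₁ t)
    (hHstart : ∀ s ∈ I, H (s, 0) = a) (hHend : ∀ s ∈ I, H (s, 1) = b) :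
    ∫ t in (0 : ℝ)..1, ω (γ₀ t) (derivWithin γ₀ I t)
      = ∫ t in (0 : ℝ)..1, ω (γ₁ t) (derivWithin γ₁ I t) := by
  have hHc := hH.continuousOn
  have h_left := curveIntegral_eq_integral_of_eqOn_extend ω
    ((eqOn_extend_verticalPath hHc unitInterval.zero_mem).trans hH0)
  have h_right := curveIntegral_eq_integral_of_eqOn_extend ω
    ((eqOn_extend_verticalPath hHc unitInterval.one_mem).trans hH1)
  have h_bottom := curveIntegral_eq_zero_of_eqOn_extend_const ω
    ((eqOn_extend_evalAt_squareHomotopy hHc 0).trans hHstart)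
  have h_top := curveIntegral_eq_zero_of_eqOn_extend_const ω
    ((eqOn_extend_evalAt_squareHomotopy hHc 1).trans hHend)
  have h_boundary := curveIntegral_boundary_squareHomotopy hω hdω hH hHU
  rwa [h_bottom, h_top, add_zero, add_zero, h_left, h_right] at h_boundary

end ClosedForm

/-- Let `α` be a smooth closed 1-form on an open set `U ⊆ ℝ^m`, and let
`γ₀, γ₁ : [0,1] → U` be smooth paths with the same endpoints which are smoothly homotopic in
`U` relative to their endpoints.  Then `∫₀¹ α(γ₀(t))(γ₀'(t)) dt = ∫₀¹ α(γ₁(t))(γ₁'(t)) dt`. -/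
theorem closed_one_form_integral_homotopy_invariant
    {m : ℕ} (U : Set (Fin m → ℝ)) (hU : IsOpen U)
    (α : (Fin m → ℝ) → ((Fin m → ℝ) →L[ℝ] ℝ))
    (hα : ContDiffOn ℝ (⊤ : ℕ∞) α U)
    (hαclosed : ∀ x ∈ U, ∀ u v, fderiv ℝ α x u v = fderiv ℝ α x v u)
    (γ₀ γ₁ : ℝ → (Fin m → ℝ))
    (hγ₀ : ContDiffOn ℝ (⊤ : ℕ∞) γ₀ (Icc 0 1)) (hγ₁ : ContDiffOn ℝ (⊤ : ℕ∞) γ₁ (Icc 0 1))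
    (hγ₀U : MapsTo γ₀ (Icc 0 1) U) (hγ₁U : MapsTo γ₁ (Icc 0 1) U)
    (hstart : γ₀ 0 = γ₁ 0) (hend : γ₀ 1 = γ₁ 1)
    -- a smooth homotopy `H : [0,1] × [0,1] → U` rel endpoints from `γ₀` to `γ₁`:
    (H : ℝ × ℝ → (Fin m → ℝ))
    (hH : ContDiffOn ℝ (⊤ : ℕ∞) H (Icc (0:ℝ) 1 ×ˢ Icc (0:ℝ) 1))
    (hHU : MapsTo H (Icc (0:ℝ) 1 ×ˢ Icc (0:ℝ) 1) U)
    (hH0 : ∀ t ∈ Icc (0:ℝ) 1, H (0, t) = γ₀ t)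
    (hH1 : ∀ t ∈ Icc (0:ℝ) 1, H (1, t) = γ₁ t)
    (hHstart : ∀ s ∈ Icc (0:ℝ) 1, H (s, 0) = γ₀ 0)
    (hHend : ∀ s ∈ Icc (0:ℝ) 1, H (s, 1) = γ₀ 1) :
    ∫ t in (0:ℝ)..1, α (γ₀ t) (derivWithin γ₀ (Icc 0 1) t)
      = ∫ t in (0:ℝ)..1, α (γ₁ t) (derivWithin γ₁ (Icc 0 1) t) := by
  have hα_deriv : ∀ x ∈ U, HasFDerivWithinAt α (fderiv ℝ α x) U x := fun x hx ↦
    ((hα.differentiableOn (by simp)).hasFDerivAt (hU.mem_nhds hx)).hasFDerivWithinAt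
  exact closed_one_form_integral_homotopy_invariant_general hα_deriv
    (fun x hx u _ v _ ↦ hαclosed x hx u v) (hH.of_le ENat.LEInfty.out)
    hHU hH0 hH1 hHstart hHend
end

section
/- Let n ≥ 1, let ω_st = Σ_{i=1}^{n} dp_i ∧ dq_i be the standard symplectic form on ℝ^{2n}, let B_R ⊂ ℝ^{2n} be the standard closed ball of radius R centered at 0, and let D²_r × ℝ^{2n−2} = {(p₁,q₁,p₂,q₂,…,p_n,q_n) : p₁² + q₁² ≤ r²}. If R > r > 0, then there is no smooth embedding φ : B_R → ℝ^{2n} with image contained in D²_r × ℝ^{2n−2} such that φ*ω_st = ω_st, where (φ*ω_st)_x(u,v) = ω_st(Dφ_x(u), Dφ_x(v)) is the pullback of ω_st along φ. -/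
open Metric Set

/-- The standard symplectic form `ω_st = ∑ᵢ dpᵢ ∧ dqᵢ` on `ℝ^{2n}`, realized as
`EuclideanSpace ℝ (Fin n ⊕ Fin n)` with `p`-coordinates indexed by `Sum.inl` and
`q`-coordinates indexed by `Sum.inr`:
`ω_st(u, v) = ∑ᵢ (uₚᵢ vqᵢ - vₚᵢ uqᵢ)`. -/
def omegaSt {n : ℕ} (u v : EuclideanSpace ℝ (Fin n ⊕ Fin n)) : ℝ :=
  ∑ i : Fin n, (u (Sum.inl i) * v (Sum.inr i) - v (Sum.inl i) * u (Sum.inr i))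

/-!
Given a symplectic embedding `φ` of a ball of radius `R > r` into the cylinder, fix
`r² < a < R²` and build a Hamiltonian `H ≥ 0` that vanishes near `φ 0`, rises radially inside the
image of the ball to a constant `m > π a`, and grows outside it like `κ q` with `π < κ < 2π`, where
the quadratic form `q`, equal to `p₁² + q₁²` plus a small multiple of the squares of the remaining
coordinates, is at most `a` on the image. Such an `m` is compatible with a radial slope less than
`π` precisely because `a < R²`.

The action functional of `H` on loops has a linking geometry: it is positive on a small sphere of
positive frequencies around the constant loop `φ 0`, and nonpositive on the boundary of a
half-cylinder spanned by the nonpositive frequencies and one direction of frequency `1`, as `κ > π`.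
A minimax argument, run on finite Fourier truncations and passed to the limit, yields a
`1`-periodic orbit of positive action. There is none: an orbit inside the image of the ball is
conjugated by `φ` to a rotation by less than a full turn, hence constant, and a nonconstant orbit
outside it has nonpositive action because `s f'(s) ≤ f(s)` for the profile `f` of `H = f ∘ q`.
-/

namespace GromovNonsqueezing

section ZeroOfPerturbation

open MeasureTheory Polynomial

lemma exists_polynomial_eval_eq_det_one_add_smul {E : Type*} [NormedAddCommGroup E]
    [NormedSpace ℝ E] [FiniteDimensional ℝ E] (M : E →L[ℝ] E) :
    ∃ p : ℝ[X], p.natDegree ≤ Module.finrank ℝ E ∧ ∀ t : ℝ, p.eval t = (1 + t • M).det := by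
  let b := Module.finBasis ℝ E
  let A := LinearMap.toMatrix b b (M : E →ₗ[ℝ] E)
  refine ⟨((X : ℝ[X]) • A.map C + (1 : Matrix _ _ ℝ).map C).det, ?_, fun t ↦ ?_⟩
  · simpa using natDegree_det_X_add_C_le A 1
  · have toMatrix_eq :
        LinearMap.toMatrix b b ((1 + t • M : E →L[ℝ] E) : E →ₗ[ℝ] E) = 1 + t • A := by
      rw [ContinuousLinearMap.toLinearMap_add, ContinuousLinearMap.toLinearMap_smul, map_add,
        map_smul]
      congr 1
      exact LinearMap.toMatrix_one b
    rw [ContinuousLinearMap.det, ← LinearMap.det_toMatrix b, toMatrix_eq, ← coe_evalRingHom,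
      RingHom.map_det]
    congr 1
    ext i j
    by_cases hij : i = j <;> simp [hij, add_comm, mul_comm t]

lemma det_one_add_pos {E : Type*} [NormedAddCommGroup E] [NormedSpace ℝ E]
    [FiniteDimensional ℝ E] {M : E →L[ℝ] E} (hM : ‖M‖ < 1) : 0 < (1 + M).det := by
  have : CompleteSpace E := FiniteDimensional.complete ℝ E
  have det_ne_zero : ∀ s ∈ Icc (0 : ℝ) 1, (1 + s • M).det ≠ 0 := fun s hs ↦ by
    have norm_lt : ‖-(s • M)‖ < 1 := by
      rw [norm_neg, norm_smul, Real.norm_of_nonneg hs.1]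
      nlinarith [hs.2, norm_nonneg M]
    have unit := isUnit_one_sub_of_norm_lt_one norm_lt
    rw [sub_neg_eq_add] at unit
    exact (LinearMap.isUnit_det _
      (unit.map (ContinuousLinearMap.toLinearMapRingHom (R₁ := ℝ) (M₁ := E)))).ne_zero
  have cont : ContinuousOn (fun s : ℝ ↦ (1 + s • M).det) (Icc 0 1) :=
    (ContinuousLinearMap.continuous_det.comp (by fun_prop)).continuousOn
  by_contra! hle
  obtain ⟨s, hs, hs0⟩ := intermediate_value_Icc' zero_le_one cont
    ⟨by simpa using hle, by simp [ContinuousLinearMap.det]⟩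
  exact det_ne_zero s hs hs0

lemma image_eq_self_of_eqOn_compl {α : Type*} {f : α → α} (hf : f.Bijective) {s : Set α}
    (hs : EqOn f id sᶜ) : f '' s = s := by
  rw [← compl_inj_iff, ← image_compl_eq hf, hs.image_eq, image_id]

/-- Lagrange interpolation expresses the value at `t` through the values at finitely many points
of `S`, with weights independent of `x`. -/
lemma integral_eval_eq_of_infinite {α : Type*} [MeasurableSpace α] {μ : Measure α} {P : α → ℝ[X]}
    {D : ℕ} (hdeg : ∀ x, (P x).natDegree ≤ D) {S : Set ℝ} (hS : S.Infinite)
    (hint : ∀ t ∈ S, Integrable (fun x ↦ (P x).eval t) μ) {c : ℝ}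
    (hc : ∀ t ∈ S, ∫ x, (P x).eval t ∂μ = c) (t : ℝ) : ∫ x, (P x).eval t ∂μ = c := by
  obtain ⟨s, hsS, hcard⟩ := hS.exists_subset_card_eq (D + 1)
  let w : ℝ → ℝ := fun i ↦ (Lagrange.basis s id i).eval t
  have eval_eq_sum : ∀ p : ℝ[X], p.natDegree ≤ D → p.eval t = ∑ i ∈ s, p.eval i * w i := by
    intro p hp
    have degree_lt : p.degree < s.card := by
      rw [hcard]
      exact degree_le_natDegree.trans_lt (by exact_mod_cast Nat.lt_succ_of_le hp)
    conv_lhs => rw [Lagrange.eq_interpolate (injOn_id _) degree_lt]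
    simp [Lagrange.interpolate_apply, eval_finsetSum, w]
  have sum_weights : ∑ i ∈ s, w i = 1 := by simpa using (eval_eq_sum 1 (by simp)).symm
  calc ∫ x, (P x).eval t ∂μ
      = ∫ x, ∑ i ∈ s, (P x).eval i * w i ∂μ := by simp only [eval_eq_sum _ (hdeg _)]
    _ = ∑ i ∈ s, (∫ x, (P x).eval i ∂μ) * w i := by
        rw [integral_finsetSum _ fun i hi ↦ (hint i (hsS hi)).mul_const _]
        simp only [integral_mul_const]
    _ = ∑ i ∈ s, c * w i := Finset.sum_congr rfl fun i hi ↦ by rw [hc i (hsS hi)]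
    _ = c := by rw [← Finset.mul_sum, sum_weights, mul_one]

lemma exists_setIntegral_mul_pow_ne {α : Type*} [MeasurableSpace α] {μ : Measure α}
    {K U : Set α} (hK : MeasurableSet K) (hμK : μ K < ⊤) (hU : MeasurableSet U) (hUK : U ⊆ K)
    (hμU : μ U ≠ 0) {d f g : α → ℝ} {D a b : ℝ} (ha : 0 ≤ a) (hab : a < b)
    (hd : ∀ x ∈ K, |d x| ≤ D) (hf : ∀ x ∈ K, |f x| ≤ a) (hg : ∀ x ∈ K, 0 ≤ g x)
    (hgU : ∀ x ∈ U, b ≤ g x) (hgi : ∀ m : ℕ, IntegrableOn (fun x ↦ g x ^ m) K μ) :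
    ∃ m : ℕ, ∫ x in K, d x * f x ^ m ∂μ ≠ ∫ x in K, g x ^ m ∂μ := by
  have hb : 0 < b := ha.trans_lt hab
  have hμU_top : μ U < ⊤ := (measure_mono hUK).trans_lt hμK
  have upper (m : ℕ) : ∫ x in K, d x * f x ^ m ∂μ ≤ D * a ^ m * μ.real K := by
    refine (Real.le_norm_self _).trans (norm_setIntegral_le_of_norm_le_const hμK fun x hx ↦ ?_)
    rw [norm_mul, norm_pow, Real.norm_eq_abs, Real.norm_eq_abs]
    have := (abs_nonneg _).trans (hd x hx)
    exact mul_le_mul (hd x hx) (pow_le_pow_left₀ (abs_nonneg _) (hf x hx) m) (by positivity) this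
  have lower (m : ℕ) : μ.real U * b ^ m ≤ ∫ x in K, g x ^ m ∂μ := calc
    μ.real U * b ^ m = ∫ _ in U, b ^ m ∂μ := by rw [setIntegral_const, smul_eq_mul]
    _ ≤ ∫ x in U, g x ^ m ∂μ := setIntegral_mono_on (integrableOn_const hμU_top.ne)
        ((hgi m).mono_set hUK) hU fun x hx ↦ pow_le_pow_left₀ hb.le (hgU x hx) m
    _ ≤ ∫ x in K, g x ^ m ∂μ := setIntegral_mono_set (hgi m)
        ((ae_restrict_iff' hK).2 (.of_forall fun x hx ↦ pow_nonneg (hg x hx) m))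
        (Filter.Eventually.of_forall hUK)
  by_contra! heq
  have lim : Filter.Tendsto (fun m : ℕ ↦ D * μ.real K * (a / b) ^ m) Filter.atTop
      (nhds (D * μ.real K * 0)) :=
    (tendsto_pow_atTop_nhds_zero_of_lt_one (by positivity) ((div_lt_one hb).2 hab)).const_mul _
  have measure_le : μ.real U ≤ D * μ.real K * 0 := by
    refine ge_of_tendsto' lim fun m ↦ ?_
    rw [div_pow, ← mul_div_assoc, le_div_iff₀ (by positivity)]
    linarith [upper m, lower m, heq m]
  have := ENNReal.toReal_pos hμU hμU_top.ne
  simp only [mul_zero] at measure_le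
  exact this.not_ge measure_le

lemma bijective_id_add {E : Type*} [NormedAddCommGroup E] [NormedSpace ℝ E] [CompleteSpace E]
    {v : E → E} {c : NNReal} (hv : LipschitzWith c v) (hc : c < 1) :
    (fun x ↦ x + v x).Bijective := by
  have approx : ApproximatesLinearOn (fun x ↦ x + v x)
      (ContinuousLinearEquiv.refl ℝ E : E →L[ℝ] E) univ c := fun x _ y _ ↦ by
    simpa [sub_sub, add_sub_add_comm] using hv.norm_sub_le x y
  have small : Subsingleton E ∨
      c < ‖((ContinuousLinearEquiv.refl ℝ E).symm : E →L[ℝ] E)‖₊⁻¹ := by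
    rcases subsingleton_or_nontrivial E with hE | hE
    · exact .inl hE
    · right
      rwa [ContinuousLinearEquiv.refl_symm, ContinuousLinearEquiv.coe_refl,
        ContinuousLinearMap.nnnorm_id, inv_one]
  exact ⟨injOn_univ.1 (approx.injOn small), approx.surjective small⟩

section InnerProduct

variable {E : Type*} [NormedAddCommGroup E] [InnerProductSpace ℝ E] [FiniteDimensional ℝ E]

lemma setIntegral_det_mul_comp_id_add [MeasurableSpace E] [BorelSpace E] {v : E → E}
    (hv : Differentiable ℝ v) {c : NNReal} (hvc : LipschitzWith c v) (hc : c < 1) {s : Set E}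
    (hs : MeasurableSet s) (hvs : ∀ x ∉ s, v x = 0) (Q : E → ℝ) :
    ∫ x in s, (1 + fderiv ℝ v x).det * Q (x + v x) = ∫ x in s, Q x := by
  have bij := bijective_id_add hvc hc
  have image_eq : (fun x ↦ x + v x) '' s = s :=
    image_eq_self_of_eqOn_compl bij fun x hx ↦ by simp [hvs x hx]
  have det_pos (x : E) : 0 < (1 + fderiv ℝ v x).det :=
    det_one_add_pos ((norm_fderiv_le_of_lipschitz ℝ hvc).trans_lt hc)
  have deriv (x : E) : HasFDerivAt (fun x ↦ x + v x) (1 + fderiv ℝ v x) x :=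
    (hasFDerivAt_id x).add (hv x).hasFDerivAt
  have change_var := integral_image_eq_integral_abs_det_fderiv_smul volume hs
    (fun x _ ↦ (deriv x).hasFDerivWithinAt) bij.injective.injOn Q
  rw [image_eq] at change_var
  simp only [change_var, abs_of_pos (det_pos _), smul_eq_mul]

lemma exists_polynomial_eval_eq_det_mul_pow (M : E →L[ℝ] E) (x y : E) (C : ℝ) (m : ℕ) :
    ∃ p : ℝ[X], p.natDegree ≤ Module.finrank ℝ E + 2 * m ∧
      ∀ t : ℝ, p.eval t = (1 + t • M).det * (C - ‖x + t • y‖ ^ 2) ^ m := by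
  obtain ⟨p, hp, hpe⟩ := exists_polynomial_eval_eq_det_one_add_smul M
  let q : ℝ[X] := .C (C - ‖x‖ ^ 2) - .C (2 * inner ℝ x y) * X - .C (‖y‖ ^ 2) * X ^ 2
  have q_deg : q.natDegree ≤ 2 := by
    simp only [q]
    compute_degree
  have q_eval (t : ℝ) : q.eval t = C - ‖x + t • y‖ ^ 2 := by
    rw [norm_add_sq_real, inner_smul_right, norm_smul, mul_pow, Real.norm_eq_abs, sq_abs]
    simp only [q, eval_sub, eval_mul, eval_C, eval_X, eval_pow]
    ring
  refine ⟨p * q ^ m, ?_, fun t ↦ by rw [eval_mul, eval_pow, hpe, q_eval]⟩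
  calc (p * q ^ m).natDegree ≤ p.natDegree + m * q.natDegree :=
        natDegree_mul_le.trans (by gcongr; exact natDegree_pow_le)
    _ ≤ Module.finrank ℝ E + 2 * m := by linarith [Nat.mul_le_mul_left m q_deg]

variable {u : E → E}

/-- Both sides agree for `t • u` in place of `u` when `t` is small, and the left-hand side is then
a polynomial in `t`. -/
lemma setIntegral_det_mul_pow_norm_sq [MeasurableSpace E] [BorelSpace E] (hu : ContDiff ℝ 1 u)
    (hc : HasCompactSupport u) {K : Set E} (hK : IsCompact K) (huK : ∀ x ∉ K, u x = 0)
    (C : ℝ) (m : ℕ) :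
    ∫ x in K, (1 + fderiv ℝ u x).det * (C - ‖x + u x‖ ^ 2) ^ m
      = ∫ x in K, (C - ‖x‖ ^ 2) ^ m := by
  obtain ⟨L, hL⟩ := hu.lipschitzWith_of_hasCompactSupport hc one_ne_zero
  choose P P_deg P_eval using fun x ↦
    exists_polynomial_eval_eq_det_mul_pow (fderiv ℝ u x) x (u x) C m
  have integrable (t : ℝ) : IntegrableOn (fun x ↦ (P x).eval t) K := by
    have det_cont : Continuous fun x ↦ (1 + t • fderiv ℝ u x).det :=
      ContinuousLinearMap.continuous_det.comp
        (continuous_const.add ((hu.continuous_fderiv one_ne_zero).const_smul t))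
    have := hu.continuous
    simp only [P_eval]
    exact ContinuousOn.integrableOn_compact hK (by fun_prop)
  have small_t : ∀ t ∈ Ioo (0 : ℝ) (1 / (L + 1)),
      ∫ x in K, (P x).eval t = ∫ x in K, (C - ‖x‖ ^ 2) ^ m := fun t ht ↦ by
    have lip_lt_one : ‖t‖₊ * L < 1 := by
      rw [← NNReal.coe_lt_coe]
      have := (lt_div_iff₀ (by positivity)).1 ht.2
      simp only [NNReal.coe_mul, coe_nnnorm, Real.norm_of_nonneg ht.1.le, NNReal.coe_one]
      linarith [ht.1]
    simpa only [P_eval, Pi.smul_apply,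
      fderiv_const_smul (hu.differentiable one_ne_zero _)] using
      setIntegral_det_mul_comp_id_add ((hu.differentiable one_ne_zero).const_smul t)
        ((lipschitzWith_smul t).comp hL) lip_lt_one hK.measurableSet
        (fun x hx ↦ by simp [huK x hx]) fun y ↦ (C - ‖y‖ ^ 2) ^ m
  simpa [P_eval] using integral_eval_eq_of_infinite P_deg (Ioo_infinite (by positivity))
    (fun t _ ↦ integrable t) small_t 1

/-- If `x + u x` stayed away from `0`, then `C - ‖x + u x‖ ^ 2` would be smaller than `C - ‖x‖ ^ 2`
is near `0`, and the integrals of large powers could not agree. -/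
lemma exists_add_eq_zero_of_contDiff (hu : ContDiff ℝ 1 u) (hc : HasCompactSupport u) :
    ∃ x, x + u x = 0 := by
  borelize E
  by_contra! hne
  obtain ⟨R, hR, hsupp⟩ := hc.isBounded.subset_closedBall_lt 0 0
  have u_eq_zero : ∀ x ∉ closedBall 0 R, u x = 0 := fun x hx ↦
    image_eq_zero_of_notMem_tsupport fun h ↦ hx (hsupp h)
  have := hu.continuous
  have compact := isCompact_closedBall (0 : E) R
  obtain ⟨x₀, -, isMin⟩ := compact.exists_isMinOn ⟨0, by simp [hR.le]⟩
    (f := fun x ↦ ‖x + u x‖) (by fun_prop)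
  obtain ⟨M, hM⟩ := compact.exists_bound_of_continuousOn (f := fun x ↦ x + u x) (by fun_prop)
  obtain ⟨D, hD⟩ := compact.exists_bound_of_continuousOn
    (f := fun x ↦ (1 + fderiv ℝ u x).det) (ContinuousLinearMap.continuous_det.comp
      (continuous_const.add (hu.continuous_fderiv one_ne_zero))).continuousOn
  let η := min ‖x₀ + u x₀‖ R
  have η_pos : 0 < η := lt_min (norm_pos_iff.2 (hne x₀)) hR
  have η_le : η ≤ R := min_le_right _ _
  have η_sq_le : η ^ 2 ≤ R ^ 2 := by gcongr
  let C := M ^ 2 + R ^ 2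
  obtain ⟨m, hm⟩ := exists_setIntegral_mul_pow_ne (μ := volume) (K := closedBall (0 : E) R)
    (U := closedBall 0 (η / 2)) (d := fun x ↦ (1 + fderiv ℝ u x).det)
    (f := fun x ↦ C - ‖x + u x‖ ^ 2) (g := fun x ↦ C - ‖x‖ ^ 2) (D := D) (a := C - η ^ 2)
    (b := C - (η / 2) ^ 2) measurableSet_closedBall measure_closedBall_lt_top
    measurableSet_closedBall (closedBall_subset_closedBall (by linarith))
    (measure_closedBall_pos _ _ (by positivity)).ne'
    (by simp only [C]; nlinarith) (by nlinarith) hD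
    (fun x hx ↦ by
      have lower : η ^ 2 ≤ ‖x + u x‖ ^ 2 := by gcongr; exact (min_le_left _ _).trans (isMin hx)
      have upper : ‖x + u x‖ ^ 2 ≤ M ^ 2 := by gcongr; exact hM x hx
      rw [abs_of_nonneg] <;> simp only [C] <;> nlinarith)
    (fun x hx ↦ by
      have : ‖x‖ ^ 2 ≤ R ^ 2 := by gcongr; simpa using hx
      simp only [C]; nlinarith)
    (fun x hx ↦ by gcongr; simpa using hx)
    (fun m ↦ ContinuousOn.integrableOn_compact compact (by fun_prop))
  exact hm (setIntegral_det_mul_pow_norm_sq hu hc compact u_eq_zero C m)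

end InnerProduct

section Continuous

variable {E : Type*} [NormedAddCommGroup E] [NormedSpace ℝ E] [FiniteDimensional ℝ E]

lemma exists_add_eq_zero_of_innerProductSpace {F : Type*} [NormedAddCommGroup F]
    [InnerProductSpace ℝ F] [FiniteDimensional ℝ F] {u : F → F} (hu : Continuous u)
    (hc : HasCompactSupport u) : ∃ x, x + u x = 0 := by
  by_contra! hne
  obtain ⟨δ, hδ, hle⟩ : ∃ δ > 0, ∀ x, δ ≤ ‖x + u x‖ := by
    obtain ⟨R, hR, hsupp⟩ := hc.isBounded.subset_closedBall_lt 0 0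
    obtain ⟨x₀, -, isMin⟩ := (isCompact_closedBall (0 : F) R).exists_isMinOn ⟨0, by simp [hR.le]⟩
      (f := fun x ↦ ‖x + u x‖) (by fun_prop)
    refine ⟨min ‖x₀ + u x₀‖ R, lt_min (norm_pos_iff.2 (hne x₀)) hR, fun x ↦ ?_⟩
    by_cases hx : x ∈ closedBall 0 R
    · exact (min_le_left _ _).trans (isMin hx)
    · rw [image_eq_zero_of_notMem_tsupport fun h ↦ hx (hsupp h), add_zero]
      exact (min_le_right _ _).trans (by simpa using hx : R < ‖x‖).le
  obtain ⟨g, g_contDiff, g_near, g_supp⟩ :=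
    hu.exists_contDiff_approx 1 (ε := fun _ ↦ δ) continuous_const fun _ ↦ hδ
  obtain ⟨x, hx⟩ := exists_add_eq_zero_of_contDiff (by simpa using g_contDiff) (hc.mono g_supp)
  refine (hle x).not_gt ?_
  calc ‖x + u x‖ = ‖u x - g x‖ := by rw [← sub_zero (x + u x), ← hx, add_sub_add_left_eq_sub]
    _ = dist (g x) (u x) := by rw [dist_comm, dist_eq_norm]
    _ < δ := g_near x

/-- A form of Brouwer's fixed point theorem. -/
theorem exists_add_eq_zero_of_hasCompactSupport {u : E → E} (hu : Continuous u)
    (hc : HasCompactSupport u) : ∃ x, x + u x = 0 := by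
  let e : E ≃L[ℝ] EuclideanSpace ℝ (Fin (Module.finrank ℝ E)) := toEuclidean
  have supp : HasCompactSupport (e ∘ u ∘ e.symm) :=
    (hc.comp_homeomorph e.symm.toHomeomorph).comp_left (map_zero e)
  obtain ⟨x, hx⟩ := exists_add_eq_zero_of_innerProductSpace (by fun_prop) supp
  exact ⟨e.symm x, e.injective (by simpa using hx)⟩

/-- A continuous cutoff that is `1` on the zeros of the homotopy and `0` on `frontier K` turns the
homotopy into a compactly supported perturbation of a translation. -/
theorem exists_homotopy_end_eq_zero {K : Set E} (hK : IsCompact K) {p : E} (hp : p ∈ K)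
    {T : ℝ → E → E} (hT : Continuous (Function.uncurry T)) (hT₀ : ∀ x ∈ K, T 0 x = x - p)
    (hfr : ∀ x ∈ frontier K, ∀ s ∈ Icc (0 : ℝ) 1, T s x ≠ 0) : ∃ x ∈ K, T 1 x = 0 := by
  classical
  let Z : Set E := Prod.snd '' ((Icc (0 : ℝ) 1 ×ˢ K) ∩ {q | Function.uncurry T q = 0})
  have Z_closed : IsClosed Z := (((isCompact_Icc.prod hK).inter_right
    (isClosed_singleton.preimage hT)).image continuous_snd).isClosed
  have disj : Disjoint (frontier K) Z := by
    rw [Set.disjoint_left]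
    rintro x hx ⟨⟨s, y⟩, ⟨⟨hs, -⟩, h⟩, rfl⟩
    exact hfr y hx s hs h
  obtain ⟨f, f_frontier, f_Z, f_mem⟩ :=
    exists_continuous_zero_one_of_isClosed isClosed_frontier Z_closed disj
  let u : E → E := fun x ↦ if x ∈ K then T (f x) x - (x - p) else 0
  have u_cont : Continuous u := by
    refine Continuous.if (fun x hx ↦ ?_) ?_ continuous_const
    · rw [f_frontier hx, Pi.zero_apply, hT₀ x (hK.isClosed.frontier_subset hx), sub_self]
    · have : Continuous fun x ↦ T (f x) x := hT.comp (f.continuous.prodMk continuous_id)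
      fun_prop
  have u_supp : HasCompactSupport u :=
    .of_support_subset_isCompact hK fun x hx ↦ by_contra fun h ↦ hx (if_neg h)
  obtain ⟨y, hy⟩ := exists_add_eq_zero_of_hasCompactSupport (u := fun y ↦ u (y + p))
    (by fun_prop) (u_supp.comp_homeomorph (Homeomorph.addRight p))
  have hyK : y + p ∈ K := by
    by_contra h
    rw [show u (y + p) = 0 from if_neg h, add_zero] at hy
    exact h (by rwa [hy, zero_add])
  have T_eq_zero : T (f (y + p)) (y + p) = 0 := by
    rwa [show u (y + p) = T (f (y + p)) (y + p) - (y + p - p) from if_pos hyK, add_sub_cancel_right,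
      add_sub_cancel] at hy
  have f_eq_one : f (y + p) = 1 := f_Z ⟨(f (y + p), y + p), ⟨⟨f_mem _, hyK⟩, T_eq_zero⟩, rfl⟩
  exact ⟨y + p, hyK, f_eq_one ▸ T_eq_zero⟩

end Continuous

end ZeroOfPerturbation

noncomputable section Fourier

open MeasureTheory Real

variable {V : Type*} [NormedAddCommGroup V] [InnerProductSpace ℝ V] {J : V →L[ℝ] V}

/-- An orthogonal complex structure on a real inner product space: `J² = -1` and `J` is
skew-adjoint. -/
structure IsOrthogonalComplexStructure (J : V →L[ℝ] V) : Prop where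
  apply_apply : ∀ x, J (J x) = -x
  inner_left : ∀ x y, inner ℝ (J x) y = -inner ℝ x (J y)

/-- The rotation `exp (θ J) = cos θ + sin θ J`. -/
def rotation (J : V →L[ℝ] V) (θ : ℝ) : V →L[ℝ] V :=
  cos θ • ContinuousLinearMap.id ℝ V + sin θ • J

lemma rotation_apply (J : V →L[ℝ] V) (θ : ℝ) (v : V) :
    rotation J θ v = cos θ • v + sin θ • J v := rfl

@[fun_prop]
lemma continuous_rotation (J : V →L[ℝ] V) : Continuous (rotation J) := by
  unfold rotation
  fun_prop

@[simp]
lemma rotation_zero (J : V →L[ℝ] V) (v : V) : rotation J 0 v = v := by simp [rotation_apply]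

lemma sin_two_pi_mul_intCast (k : ℤ) : sin (2 * π * k) = 0 := by
  simpa [mul_comm, mul_left_comm] using sin_int_mul_pi (2 * k)

lemma cos_two_pi_mul_intCast (k : ℤ) : cos (2 * π * k) = 1 := by
  rw [mul_comm, cos_int_mul_two_pi]

lemma rotation_two_pi_mul_intCast (J : V →L[ℝ] V) (k : ℤ) (v : V) :
    rotation J (2 * π * k) v = v := by
  simp [rotation_apply, sin_two_pi_mul_intCast, cos_two_pi_mul_intCast]

lemma map_rotation {B : V →L[ℝ] V} (hB : ∀ x, B (J x) = J (B x)) (θ : ℝ) (v : V) :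
    B (rotation J θ v) = rotation J θ (B v) := by
  simp [rotation_apply, hB]

lemma integral_inner_rotation (J : V →L[ℝ] V) (k : ℤ) (v w : V) :
    ∫ t in (0 : ℝ)..1, inner ℝ (rotation J (2 * π * k * t) v) w
      = if k = 0 then inner ℝ v w else 0 := by
  split_ifs with hk
  · simp [hk]
  have hfreq : 2 * π * (k : ℝ) ≠ 0 := by positivity
  simp only [rotation_apply, inner_add_left, real_inner_smul_left]
  rw [intervalIntegral.integral_add (Continuous.intervalIntegrable (by fun_prop) _ _)
      (Continuous.intervalIntegrable (by fun_prop) _ _),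
    intervalIntegral.integral_mul_const, intervalIntegral.integral_mul_const,
    intervalIntegral.integral_comp_mul_left cos hfreq,
    intervalIntegral.integral_comp_mul_left sin hfreq]
  simp [sin_two_pi_mul_intCast, cos_two_pi_mul_intCast]

namespace IsOrthogonalComplexStructure

variable (hJ : IsOrthogonalComplexStructure J)
include hJ

lemma norm_apply (v : V) : ‖J v‖ = ‖v‖ := by
  rw [← sq_eq_sq₀ (norm_nonneg _) (norm_nonneg _), ← real_inner_self_eq_norm_sq, hJ.inner_left,
    hJ.apply_apply, inner_neg_right, neg_neg, real_inner_self_eq_norm_sq]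

lemma inner_rotation_left (θ : ℝ) (v w : V) :
    inner ℝ (rotation J θ v) w = inner ℝ v (rotation J (-θ) w) := by
  simp [rotation_apply, inner_add_left, inner_add_right, real_inner_smul_left,
    real_inner_smul_right, hJ.inner_left]

lemma rotation_rotation (θ τ : ℝ) (v : V) :
    rotation J θ (rotation J τ v) = rotation J (θ + τ) v := by
  simp only [rotation_apply, map_add, map_smul, hJ.apply_apply, cos_add, sin_add]
  module

lemma norm_rotation (θ : ℝ) (v : V) : ‖rotation J θ v‖ = ‖v‖ := by
  rw [← sq_eq_sq₀ (norm_nonneg _) (norm_nonneg _), ← real_inner_self_eq_norm_sq,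
    hJ.inner_rotation_left, hJ.rotation_rotation, neg_add_cancel, rotation_zero,
    real_inner_self_eq_norm_sq]

lemma hasDerivAt_rotation_mul (a : ℝ) {y : ℝ → V} {y' : V} {t : ℝ} (hy : HasDerivAt y y' t) :
    HasDerivAt (fun t ↦ rotation J (a * t) (y t))
      (rotation J (a * t) y' + a • J (rotation J (a * t) (y t))) t := by
  have hangle : HasDerivAt (fun t : ℝ ↦ a * t) a t := by
    simpa using (hasDerivAt_id t).const_mul a
  have hsum := (hangle.cos.smul hy).add (hangle.sin.smul (J.hasFDerivAt.comp_hasDerivAt t hy))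
  convert! hsum using 1
  simp only [rotation_apply, map_add, map_smul, hJ.apply_apply, Function.comp]
  module

end IsOrthogonalComplexStructure

/-- Vector-valued Fourier coefficients with frequencies in the finite set `I`, with the `ℓ²`
norm. -/
abbrev TrigCoeffs (V : Type*) [NormedAddCommGroup V] (I : Finset ℤ) := PiLp 2 (fun _ : I ↦ V)

variable {I : Finset ℤ}

/-- The trigonometric polynomial `t ↦ ∑ₖ exp (2πkt J) cₖ`. -/
def trigSum (J : V →L[ℝ] V) (c : TrigCoeffs V I) (t : ℝ) : V :=
  ∑ k : I, rotation J (2 * π * k * t) (c k)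

/-- The Fourier coefficient `∫₀¹ exp (-2πkt J) f(t) dt`. -/
def modeCoeff (J : V →L[ℝ] V) (f : ℝ → V) (k : ℤ) : V :=
  ∫ t in (0 : ℝ)..1, rotation J (-(2 * π * k * t)) (f t)

/-- The operator `-J d/dt` on Fourier coefficients: multiplication of the `k`-th one by `2πk`. -/
def freqMul (I : Finset ℤ) : TrigCoeffs V I →ₗ[ℝ] TrigCoeffs V I where
  toFun c := WithLp.toLp 2 fun k ↦ (2 * π * k) • c k
  map_add' c d := by ext; simp
  map_smul' r c := by ext; simp [smul_comm r]

@[simp]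
lemma freqMul_apply (c : TrigCoeffs V I) (k : I) : freqMul I c k = (2 * π * k) • c k := rfl

lemma norm_freqMul_sq (c : TrigCoeffs V I) :
    ‖freqMul I c‖ ^ 2 = ∑ k : I, (2 * π * k) ^ 2 * ‖c k‖ ^ 2 := by
  simp only [PiLp.norm_sq_eq_of_L2, freqMul_apply, norm_smul, mul_pow, norm_eq_abs, sq_abs]

@[fun_prop]
lemma continuous_trigSum (J : V →L[ℝ] V) (c : TrigCoeffs V I) : Continuous (trigSum J c) := by
  unfold trigSum
  fun_prop

lemma continuous_uncurry_trigSum (J : V →L[ℝ] V) :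
    Continuous fun q : TrigCoeffs V I × ℝ ↦ trigSum J q.1 q.2 := by
  unfold trigSum
  fun_prop

lemma trigSum_add (J : V →L[ℝ] V) (c d : TrigCoeffs V I) (t : ℝ) :
    trigSum J (c + d) t = trigSum J c t + trigSum J d t := by
  simp [trigSum, Finset.sum_add_distrib]

lemma trigSum_one_eq_trigSum_zero (J : V →L[ℝ] V) (c : TrigCoeffs V I) :
    trigSum J c 1 = trigSum J c 0 := by
  simp [trigSum, rotation_two_pi_mul_intCast]

section Parseval

variable (hJ : IsOrthogonalComplexStructure J)
include hJ

lemma inner_map_trigSum {B : V →L[ℝ] V} (hB : ∀ x, B (J x) = J (B x)) (c d : TrigCoeffs V I)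
    (t : ℝ) :
    inner ℝ (B (trigSum J c t)) (trigSum J d t)
      = ∑ k : I, ∑ l : I, inner ℝ (rotation J (2 * π * (k - l : ℤ) * t) (B (c k))) (d l) := by
  simp only [trigSum, map_sum, sum_inner, inner_sum]
  refine Finset.sum_comm.trans <| Finset.sum_congr rfl fun k _ ↦ Finset.sum_congr rfl fun l _ ↦ ?_
  rw [map_rotation hB, real_inner_comm, hJ.inner_rotation_left, hJ.rotation_rotation,
    real_inner_comm]
  congr 3
  push_cast
  ring

lemma integral_inner_map_trigSum {B : V →L[ℝ] V} (hB : ∀ x, B (J x) = J (B x))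
    (c d : TrigCoeffs V I) :
    ∫ t in (0 : ℝ)..1, inner ℝ (B (trigSum J c t)) (trigSum J d t)
      = ∑ k : I, inner ℝ (B (c k)) (d k) := by
  simp only [inner_map_trigSum hJ hB]
  rw [intervalIntegral.integral_finsetSum
    fun k _ ↦ Continuous.intervalIntegrable (by fun_prop) _ _]
  refine Finset.sum_congr rfl fun k _ ↦ ?_
  rw [intervalIntegral.integral_finsetSum
    fun l _ ↦ Continuous.intervalIntegrable (by fun_prop) _ _]
  simp only [integral_inner_rotation, sub_eq_zero, Subtype.coe_inj, Finset.sum_ite_eq,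
    Finset.mem_univ, if_true]

lemma integral_inner_trigSum_trigSum (c d : TrigCoeffs V I) :
    ∫ t in (0 : ℝ)..1, inner ℝ (trigSum J c t) (trigSum J d t) = inner ℝ c d :=
  integral_inner_map_trigSum hJ (B := ContinuousLinearMap.id ℝ V) (fun _ ↦ rfl) c d

lemma integral_norm_trigSum_sq (c : TrigCoeffs V I) :
    ∫ t in (0 : ℝ)..1, ‖trigSum J c t‖ ^ 2 = ‖c‖ ^ 2 := by
  simpa only [real_inner_self_eq_norm_sq] using integral_inner_trigSum_trigSum hJ c c

variable [CompleteSpace V]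

lemma integral_inner_trigSum {f : ℝ → V} (hf : Continuous f) (d : TrigCoeffs V I) :
    ∫ t in (0 : ℝ)..1, inner ℝ (f t) (trigSum J d t)
      = ∑ k : I, inner ℝ (modeCoeff J f k) (d k) := by
  have hexpand (t : ℝ) : inner ℝ (f t) (trigSum J d t)
      = ∑ k : I, inner ℝ (d k) (rotation J (-(2 * π * k * t)) (f t)) := by
    simp only [trigSum, inner_sum]
    exact Finset.sum_congr rfl fun k _ ↦ by rw [real_inner_comm, hJ.inner_rotation_left]
  simp only [hexpand]
  rw [intervalIntegral.integral_finsetSum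
    fun k _ ↦ Continuous.intervalIntegrable (by fun_prop) _ _]
  refine Finset.sum_congr rfl fun k _ ↦ ?_
  rw [real_inner_comm, modeCoeff]
  exact (innerSL ℝ (d k)).intervalIntegral_comp_comm
    (Continuous.intervalIntegrable (by fun_prop) _ _)

lemma sum_norm_modeCoeff_sq_le {f : ℝ → V} (hf : Continuous f) (I : Finset ℤ) :
    ∑ k : I, ‖modeCoeff J f k‖ ^ 2 ≤ ∫ t in (0 : ℝ)..1, ‖f t‖ ^ 2 := by
  let d : TrigCoeffs V I := WithLp.toLp 2 fun k ↦ modeCoeff J f k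
  have hcross : ∫ t in (0 : ℝ)..1, inner ℝ (f t) (trigSum J d t) = ‖d‖ ^ 2 := by
    rw [integral_inner_trigSum hJ hf, PiLp.norm_sq_eq_of_L2]
    exact Finset.sum_congr rfl fun k _ ↦ real_inner_self_eq_norm_sq _
  have hnonneg : 0 ≤ ∫ t in (0 : ℝ)..1, ‖f t - trigSum J d t‖ ^ 2 :=
    intervalIntegral.integral_nonneg zero_le_one fun t _ ↦ by positivity
  simp only [norm_sub_sq_real] at hnonneg
  rw [intervalIntegral.integral_add (Continuous.intervalIntegrable (by fun_prop) _ _)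
      (Continuous.intervalIntegrable (by fun_prop) _ _),
    intervalIntegral.integral_sub (Continuous.intervalIntegrable (by fun_prop) _ _)
      (Continuous.intervalIntegrable (by fun_prop) _ _),
    intervalIntegral.integral_const_mul, hcross, integral_norm_trigSum_sq hJ,
    PiLp.norm_sq_eq_of_L2] at hnonneg
  change ∑ k : I, ‖d k‖ ^ 2 ≤ _
  linarith

lemma modeCoeff_trigSum (c : TrigCoeffs V I) (k : I) : modeCoeff J (trigSum J c) k = c k := by
  let d : TrigCoeffs V I := WithLp.toLp 2 fun k ↦ modeCoeff J (trigSum J c) k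
  have hd : d = c := ext_inner_right ℝ fun e ↦ by
    rw [← integral_inner_trigSum_trigSum hJ c, integral_inner_trigSum hJ (continuous_trigSum J c)]
    rfl
  exact congrArg (fun c : TrigCoeffs V I ↦ c k) hd

end Parseval

section ModeCoeff

variable [CompleteSpace V] {f g : ℝ → V}

lemma modeCoeff_map {B : V →L[ℝ] V} (hB : ∀ x, B (J x) = J (B x)) (hf : Continuous f) (k : ℤ) :
    modeCoeff J (fun t ↦ B (f t)) k = B (modeCoeff J f k) := by
  simp only [modeCoeff, ← map_rotation hB]
  exact B.intervalIntegral_comp_comm (Continuous.intervalIntegrable (by fun_prop) _ _)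

omit [CompleteSpace V] in
lemma modeCoeff_sub (J : V →L[ℝ] V) (hf : Continuous f) (hg : Continuous g) (k : ℤ) :
    modeCoeff J (fun t ↦ f t - g t) k = modeCoeff J f k - modeCoeff J g k := by
  simp only [modeCoeff, map_sub]
  exact intervalIntegral.integral_sub (Continuous.intervalIntegrable (by fun_prop) _ _)
    (Continuous.intervalIntegrable (by fun_prop) _ _)

lemma modeCoeff_deriv (hJ : IsOrthogonalComplexStructure J) {y y' : ℝ → V} (hy' : Continuous y')
    (hderiv : ∀ t, HasDerivAt y (y' t) t) (hper : y 0 = y 1) (k : ℤ) :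
    modeCoeff J y' k = (2 * π * k) • J (modeCoeff J y k) := by
  have hy : Continuous y := continuous_iff_continuousAt.2 fun t ↦ (hderiv t).continuousAt
  have hparts := intervalIntegral.integral_eq_sub_of_hasDerivAt (a := 0) (b := 1)
    (fun t _ ↦ hJ.hasDerivAt_rotation_mul (-(2 * π * k)) (hderiv t))
    (Continuous.intervalIntegrable (by fun_prop) _ _)
  have hend : rotation J (-(2 * π * k)) (y 1) = y 1 := by
    simpa using rotation_two_pi_mul_intCast J (-k) (y 1)
  rw [intervalIntegral.integral_add (Continuous.intervalIntegrable (by fun_prop) _ _)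
      (Continuous.intervalIntegrable (by fun_prop) _ _), intervalIntegral.integral_smul,
    J.intervalIntegral_comp_comm (Continuous.intervalIntegrable (by fun_prop) _ _),
    mul_one, mul_zero, rotation_zero, hend, hper, sub_self, neg_smul, ← sub_eq_add_neg,
    sub_eq_zero] at hparts
  simpa only [modeCoeff, neg_mul] using hparts

end ModeCoeff

section Regularity

variable (hJ : IsOrthogonalComplexStructure J)
include hJ

lemma hasDerivAt_trigSum (c : TrigCoeffs V I) (t : ℝ) :
    HasDerivAt (trigSum J c) (J (trigSum J (freqMul I c) t)) t := by
  unfold trigSum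
  have hsum := HasDerivAt.fun_sum (u := (Finset.univ : Finset I)) fun k _ ↦
    hJ.hasDerivAt_rotation_mul (2 * π * k) (hasDerivAt_const t (c k))
  simpa using hsum

omit hJ in
lemma norm_sq_intervalIntegral_le [CompleteSpace V] {f : ℝ → V} (hf : Continuous f) {a b : ℝ}
    (hab : a ≤ b) : ‖∫ t in a..b, f t‖ ^ 2 ≤ (b - a) * ∫ t in a..b, ‖f t‖ ^ 2 := by
  rcases hab.eq_or_lt with rfl | hlt
  · simp
  set v := ∫ t in a..b, f t
  have hinner : ∫ t in a..b, inner ℝ v (f t) = ‖v‖ ^ 2 := by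
    rw [← real_inner_self_eq_norm_sq]
    exact (innerSL ℝ v).intervalIntegral_comp_comm (hf.intervalIntegrable _ _)
  have hnonneg : 0 ≤ ∫ t in a..b, ‖v - (b - a) • f t‖ ^ 2 :=
    intervalIntegral.integral_nonneg hab fun t _ ↦ by positivity
  simp only [norm_sub_sq_real, real_inner_smul_right, norm_smul, mul_pow, norm_eq_abs,
    sq_abs] at hnonneg
  rw [intervalIntegral.integral_add (Continuous.intervalIntegrable (by fun_prop) _ _)
      (Continuous.intervalIntegrable (by fun_prop) _ _),
    intervalIntegral.integral_sub (Continuous.intervalIntegrable (by fun_prop) _ _)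
      (Continuous.intervalIntegrable (by fun_prop) _ _),
    intervalIntegral.integral_const_mul, intervalIntegral.integral_const_mul,
    intervalIntegral.integral_const_mul, intervalIntegral.integral_const, hinner,
    smul_eq_mul] at hnonneg
  have hpos : 0 < b - a := sub_pos.2 hlt
  refine le_of_mul_le_mul_left ?_ hpos
  linarith

variable [CompleteSpace V]

lemma dist_trigSum_sq_le (c : TrigCoeffs V I) {s t : ℝ} (hs : s ∈ Icc (0 : ℝ) 1)
    (ht : t ∈ Icc (0 : ℝ) 1) :
    dist (trigSum J c s) (trigSum J c t) ^ 2 ≤ dist s t * ‖freqMul I c‖ ^ 2 := by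
  wlog hst : s ≤ t generalizing s t
  · rw [dist_comm, dist_comm s]
    exact this ht hs (le_of_not_ge hst)
  have hftc : trigSum J c t - trigSum J c s = ∫ u in s..t, J (trigSum J (freqMul I c) u) :=
    (intervalIntegral.integral_eq_sub_of_hasDerivAt (fun u _ ↦ hasDerivAt_trigSum hJ c u)
      (Continuous.intervalIntegrable (by fun_prop) _ _)).symm
  calc dist (trigSum J c s) (trigSum J c t) ^ 2
      = ‖∫ u in s..t, J (trigSum J (freqMul I c) u)‖ ^ 2 := by rw [← hftc, dist_eq_norm']
    _ ≤ (t - s) * ∫ u in s..t, ‖J (trigSum J (freqMul I c) u)‖ ^ 2 :=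
        norm_sq_intervalIntegral_le (by fun_prop) hst
    _ ≤ (t - s) * ∫ u in (0 : ℝ)..1, ‖trigSum J (freqMul I c) u‖ ^ 2 := by
        simp only [hJ.norm_apply]
        refine mul_le_mul_of_nonneg_left ?_ (sub_nonneg.2 hst)
        exact intervalIntegral.integral_mono_interval hs.1 hst ht.2
          (Filter.Eventually.of_forall fun u ↦ by positivity)
          (Continuous.intervalIntegrable (by fun_prop) _ _)
    _ = dist s t * ‖freqMul I c‖ ^ 2 := by
        rw [integral_norm_trigSum_sq hJ, dist_comm, Real.dist_eq, abs_of_nonneg (sub_nonneg.2 hst)]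

lemma norm_trigSum_sq_le (c : TrigCoeffs V I) {t : ℝ} (ht : t ∈ Icc (0 : ℝ) 1) :
    ‖trigSum J c t‖ ^ 2 ≤ 2 * ‖c‖ ^ 2 + 2 * ‖freqMul I c‖ ^ 2 := by
  have hpoint : ∀ s ∈ Icc (0 : ℝ) 1,
      ‖trigSum J c t‖ ^ 2 ≤ 2 * ‖trigSum J c s‖ ^ 2 + 2 * ‖freqMul I c‖ ^ 2 := by
    intro s hs
    have hosc := dist_trigSum_sq_le hJ c hs ht
    have hdist : dist s t ≤ 1 := by simpa using Real.dist_le_of_mem_Icc hs ht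
    have hosc' : dist s t * ‖freqMul I c‖ ^ 2 ≤ ‖freqMul I c‖ ^ 2 :=
      mul_le_of_le_one_left (by positivity) hdist
    have htri : ‖trigSum J c t‖ ≤ ‖trigSum J c s‖ + dist (trigSum J c s) (trigSum J c t) := by
      rw [dist_eq_norm']
      exact norm_le_norm_add_norm_sub' _ _
    nlinarith [add_sq_le (a := ‖trigSum J c s‖) (b := dist (trigSum J c s) (trigSum J c t)),
      norm_nonneg (trigSum J c t)]
  have hint := intervalIntegral.integral_mono_on (μ := volume) zero_le_one
    (by simp) (Continuous.intervalIntegrable (by fun_prop) _ _) hpoint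
  rw [intervalIntegral.integral_add (Continuous.intervalIntegrable (by fun_prop) _ _) (by simp),
    intervalIntegral.integral_const_mul, integral_norm_trigSum_sq hJ] at hint
  simpa using hint

end Regularity

section Uniqueness

lemma eq_fourierCoeff_zero_of_fourierCoeff_eq_zero {T : ℝ} [Fact (0 < T)]
    {F : C(AddCircle T, ℂ)} (hF : ∀ k ≠ 0, fourierCoeff F k = 0) (x : AddCircle T) :
    F x = fourierCoeff F 0 := by
  have hsummable : Summable (fourierCoeff F) :=
    summable_of_ne_finset_zero (s := {0}) fun k hk ↦ hF k (by simpa using hk)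
  have hseries := has_pointwise_sum_fourier_series_of_summable hsummable x
  have hsingle := hasSum_single (f := fun k ↦ fourierCoeff F k • (fourier k x : ℂ)) 0
    fun k hk ↦ by simp [hF k hk]
  simpa using hseries.unique hsingle

lemma eq_apply_zero_of_fourierCoeffOn_eq_zero {f : ℝ → ℂ} (hf : Continuous f)
    (hper : f 0 = f 1) (hcoeff : ∀ k ≠ 0, fourierCoeffOn (zero_lt_one' ℝ) f k = 0) {t : ℝ}
    (ht : t ∈ Icc (0 : ℝ) 1) : f t = f 0 := by
  have : Fact ((0 : ℝ) < 1) := ⟨one_pos⟩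
  let F : C(AddCircle (1 : ℝ), ℂ) :=
    ⟨AddCircle.liftIco 1 0 f, AddCircle.liftIco_continuous (by simpa using hper) hf.continuousOn⟩
  have hF : ∀ k ≠ 0, fourierCoeff F k = 0 := fun k hk ↦ by
    refine (fourierCoeff_liftIco_eq f k).trans ?_
    simpa only [zero_add] using hcoeff k hk
  have hconst : ∀ s ∈ Ico (0 : ℝ) 1, f s = fourierCoeff F 0 := fun s hs ↦ by
    rw [← eq_fourierCoeff_zero_of_fourierCoeff_eq_zero hF s]
    exact (AddCircle.liftIco_coe_apply (by simpa using hs)).symm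
  rcases ht.2.eq_or_lt with rfl | hlt
  · exact hper.symm
  · rw [hconst t ⟨ht.1, hlt⟩, hconst 0 ⟨le_rfl, one_pos⟩]

variable [CompleteSpace V] (hJ : IsOrthogonalComplexStructure J)
include hJ

lemma fourierCoeffOn_inner_add_inner_mul_I {z : ℝ → V} (hz : Continuous z) (v : V) (k : ℤ) :
    fourierCoeffOn (zero_lt_one' ℝ)
        (fun t ↦ (inner ℝ v (z t) + inner ℝ (J v) (z t) * Complex.I : ℂ)) k
      = inner ℝ v (modeCoeff J z k) + inner ℝ (J v) (modeCoeff J z k) * Complex.I := by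
  have hinner (w : V) : ((inner ℝ w (modeCoeff J z k) : ℝ) : ℂ)
      = ∫ t in (0 : ℝ)..1, ((inner ℝ w (rotation J (-(2 * π * k * t)) (z t)) : ℝ) : ℂ) := by
    rw [intervalIntegral.integral_ofReal]
    congr 1
    exact ((innerSL ℝ w).intervalIntegral_comp_comm
      (Continuous.intervalIntegrable (by fun_prop) _ _)).symm
  rw [fourierCoeffOn_eq_integral, hinner, hinner, ← intervalIntegral.integral_mul_const,
    ← intervalIntegral.integral_add (Continuous.intervalIntegrable (by fun_prop) _ _)
      (Continuous.intervalIntegrable (by fun_prop) _ _)]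
  simp only [sub_zero, one_div, inv_one, one_smul]
  refine intervalIntegral.integral_congr fun t _ ↦ ?_
  have hexp : (fourier (-k) (t : AddCircle ((1 : ℝ) - 0)) : ℂ)
      = cos (2 * π * k * t) - sin (2 * π * k * t) * Complex.I := by
    have hangle : 2 * (π : ℂ) * Complex.I * ((-k : ℤ) : ℂ) * t / ((1 - 0 : ℝ) : ℂ)
        = ((-(2 * π * k * t) : ℝ) : ℂ) * Complex.I := by push_cast; ring
    rw [fourier_coe_apply, hangle, Complex.exp_mul_I, ← Complex.ofReal_cos, ← Complex.ofReal_sin,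
      cos_neg, sin_neg]
    push_cast
    ring
  simp only [hexp, smul_eq_mul, rotation_apply, cos_neg, sin_neg, inner_add_right,
    real_inner_smul_right, hJ.inner_left, map_add, map_smul, hJ.apply_apply, inner_neg_right]
  push_cast
  linear_combination Complex.sin (2 * π * k * t) * inner ℝ v (J (z t)) * Complex.I_sq

lemma eq_apply_zero_of_modeCoeff_eq_zero {z : ℝ → V} (hz : Continuous z) (hper : z 0 = z 1)
    (hcoeff : ∀ k ≠ 0, modeCoeff J z k = 0) {t : ℝ} (ht : t ∈ Icc (0 : ℝ) 1) : z t = z 0 := by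
  refine ext_inner_left ℝ fun v ↦ ?_
  have hconst := eq_apply_zero_of_fourierCoeffOn_eq_zero
    (f := fun t ↦ (inner ℝ v (z t) + inner ℝ (J v) (z t) * Complex.I : ℂ)) (by fun_prop)
    (by simp only [hper])
    (fun k hk ↦ by simp [fourierCoeffOn_inner_add_inner_mul_I hJ hz, hcoeff k hk]) ht
  simpa using congrArg Complex.re hconst

end Uniqueness

section Limits

lemma tendsto_intervalIntegral_comp_of_bounded [FiniteDimensional ℝ V] {W : Type*}
    [NormedAddCommGroup W] [NormedSpace ℝ W] {F : ℝ × V → W} (hF : Continuous F) {x : ℕ → ℝ → V}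
    {y : ℝ → V} (hx : ∀ j, Continuous (x j)) {B : ℝ}
    (hB : ∀ j, ∀ t ∈ Icc (0 : ℝ) 1, ‖x j t‖ ≤ B)
    (hlim : ∀ t ∈ Icc (0 : ℝ) 1, Filter.Tendsto (fun j ↦ x j t) Filter.atTop (nhds (y t))) :
    Filter.Tendsto (fun j ↦ ∫ t in (0 : ℝ)..1, F (t, x j t)) Filter.atTop
      (nhds (∫ t in (0 : ℝ)..1, F (t, y t))) := by
  have huIoc : ∀ t ∈ uIoc (0 : ℝ) 1, t ∈ Icc (0 : ℝ) 1 := fun t ht ↦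
    Ioc_subset_Icc_self (by rwa [uIoc_of_le zero_le_one] at ht)
  obtain ⟨D, hD⟩ := ((isCompact_Icc (a := (0 : ℝ)) (b := 1)).prod
    (isCompact_closedBall (0 : V) B)).exists_bound_of_continuousOn hF.continuousOn
  refine intervalIntegral.tendsto_integral_filter_of_dominated_convergence (fun _ ↦ D)
    (.of_forall fun j ↦ (hF.comp (continuous_id.prodMk (hx j))).aestronglyMeasurable)
    (.of_forall fun j ↦ .of_forall fun t ht ↦ ?_) (by simp) (.of_forall fun t ht ↦ ?_)
  · exact hD _ ⟨huIoc t ht, by simpa using hB j t (huIoc t ht)⟩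
  · exact (hF.tendsto _).comp (tendsto_const_nhds.prodMk_nhds (hlim t (huIoc t ht)))

end Limits

end Fourier

section GradientDescent

variable {F : Type*} [NormedAddCommGroup F] [InnerProductSpace ℝ F] {Φ : F → ℝ} {grad : F → F}
  {Λ h : ℝ}

/-- One step of gradient descent with step size `h`. -/
def gradientStep (grad : F → F) (h : ℝ) (c : F) : F := c - h • grad c

lemma continuous_iterate_gradientStep (hgrad : Continuous grad) (m : ℕ) :
    Continuous fun p : ℝ × F ↦ (gradientStep grad p.1)^[m] p.2 := by
  induction m with
  | zero => exact continuous_snd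
  | succ m ih =>
    simp only [Function.iterate_succ_apply']
    unfold gradientStep at ih ⊢
    fun_prop

lemma iterate_gradientStep_zero (grad : F → F) (m : ℕ) (c : F) :
    (gradientStep grad 0)^[m] c = c := by
  have hid : gradientStep grad 0 = id := by
    funext c
    simp [gradientStep]
  rw [hid, Function.iterate_id, id]

variable (hΦ : ∀ c d, Φ (c + d) ≤ Φ c + inner ℝ (grad c) d + Λ * ‖d‖ ^ 2)
  (hh : 0 ≤ h) (hΛh : Λ * h ≤ 1 / 2)
include hΦ hh hΛh

lemma apply_gradientStep_le (c : F) : Φ (gradientStep grad h c) ≤ Φ c - h / 2 * ‖grad c‖ ^ 2 := by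
  have hstep := hΦ c (-(h • grad c))
  rw [inner_neg_right, real_inner_smul_right, real_inner_self_eq_norm_sq, norm_neg, norm_smul,
    mul_pow, Real.norm_eq_abs, sq_abs, ← sub_eq_add_neg] at hstep
  have hquad : Λ * h * (h * ‖grad c‖ ^ 2) ≤ 1 / 2 * (h * ‖grad c‖ ^ 2) := by gcongr
  unfold gradientStep
  linarith

lemma apply_iterate_gradientStep_le (m : ℕ) (c : F) :
    Φ ((gradientStep grad h)^[m] c) ≤ Φ c := by
  induction m with
  | zero => rfl
  | succ m ih =>
    rw [Function.iterate_succ_apply']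
    have hdecrease : 0 ≤ h / 2 * ‖grad ((gradientStep grad h)^[m] c)‖ ^ 2 := by positivity
    linarith [apply_gradientStep_le hΦ hh hΛh ((gradientStep grad h)^[m] c)]

lemma apply_iterate_gradientStep_le_sub {β ε : ℝ} (hε : 0 ≤ ε)
    (hbig : ∀ c, β ≤ Φ c → ε ≤ ‖grad c‖) {m : ℕ} {c : F}
    (hm : β ≤ Φ ((gradientStep grad h)^[m] c)) :
    Φ ((gradientStep grad h)^[m] c) ≤ Φ c - m * (h / 2 * ε ^ 2) := by
  induction m with
  | zero => simp
  | succ m ih =>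
    rw [Function.iterate_succ_apply'] at hm ⊢
    set x := (gradientStep grad h)^[m] c
    have hstep := apply_gradientStep_le hΦ hh hΛh x
    have hdecrease : 0 ≤ h / 2 * ‖grad x‖ ^ 2 := by positivity
    have hx : β ≤ Φ x := by linarith
    have hlarge : h / 2 * ε ^ 2 ≤ h / 2 * ‖grad x‖ ^ 2 := by
      have := hbig x hx
      gcongr
    push_cast
    linarith [ih hx]

end GradientDescent

section Linking

variable {F : Type*} [NormedAddCommGroup F] [InnerProductSpace ℝ F] {Φ : F → ℝ}
  {N : F →L[ℝ] F} {ν : F → ℝ} {e c₀ : F} {α : ℝ}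

/-- The half-cylinder `{N w + r e : 0 ≤ r}` links with `{N c = c₀, ν c = α}`: a deformation `D` of
the half-cylinder which keeps the boundary of the box `‖w‖ ≤ τ`, `0 ≤ r ≤ τ` off that set cannot
push the box off it. -/
lemma exists_deformation_mem_of_linking [FiniteDimensional ℝ F] (hN : ∀ x, N (N x) = N x)
    (hν : Continuous ν) (hNe : N e = 0)
    (hνe : ∀ (w : F) (r : ℝ), 0 ≤ r → ν (N w + r • e) = r)
    (hc₀ : N c₀ = c₀) (hα : 0 ≤ α) {τ : ℝ} (hτ : 0 < τ) (hc₀τ : ‖c₀‖ ≤ τ) (hατ : α ≤ τ)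
    {D : ℝ → F → F} (hD : Continuous fun p : ℝ × F ↦ D p.1 p.2) (hD₀ : ∀ x, D 0 x = x)
    (hbdry : ∀ (w : F) (r : ℝ), N w = w → ‖w‖ = τ ∨ r = 0 ∨ r = τ → ∀ s ∈ Icc (0 : ℝ) 1,
      N (D s (w + r • e)) = c₀ → ν (D s (w + r • e)) ≠ α) :
    ∃ (w : F) (r : ℝ), N (D 1 (N w + r • e)) = c₀ ∧ ν (D 1 (N w + r • e)) = α := by
  let y (s : ℝ) (x : F × ℝ) : F := D s (N x.1 + x.2 • e)
  let T (s : ℝ) (x : F × ℝ) : F × ℝ := (N (y s x) - c₀ + (x.1 - N x.1), ν (y s x) - α)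
  have hy : Continuous fun z : ℝ × F × ℝ ↦ y z.1 z.2 :=
    hD.comp (by fun_prop : Continuous fun z : ℝ × F × ℝ ↦ (z.1, N z.2.1 + z.2.2 • e))
  have hT_zero {s x} (hx : T s x = 0) : N (y s x) = c₀ ∧ ν (y s x) = α ∧ N x.1 = x.1 := by
    obtain ⟨hfst, hsnd⟩ := Prod.ext_iff.1 hx
    simp only [T, Prod.fst_zero, Prod.snd_zero] at hfst hsnd
    have hNy : N (y s x) = c₀ := by
      have := congrArg N hfst
      simpa only [map_add, map_sub, hN, hc₀, sub_self, add_zero, map_zero, sub_eq_zero] using this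
    refine ⟨hNy, sub_eq_zero.1 hsnd, ?_⟩
    rw [hNy, sub_self, zero_add, sub_eq_zero] at hfst
    exact hfst.symm
  have hT₀ : ∀ x ∈ closedBall (0 : F) τ ×ˢ Icc 0 τ, T 0 x = x - (c₀, α) := by
    rintro ⟨w, r⟩ ⟨-, hr⟩
    simp only [T, y, hD₀, map_add, map_smul, hN, hNe, hνe w r hr.1, Prod.mk_sub_mk, smul_zero,
      add_zero]
    congr 1
    abel
  have hfrontier : ∀ x ∈ frontier (closedBall (0 : F) τ ×ˢ Icc 0 τ), ∀ s ∈ Icc (0 : ℝ) 1,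
      T s x ≠ 0 := by
    rintro ⟨w, r⟩ hx s hs hzero
    obtain ⟨hNy, hνy, hNw⟩ := hT_zero hzero
    have hyw : y s (w, r) = D s (w + r • e) := by simp only [y, hNw]
    rw [hyw] at hNy hνy
    refine hbdry w r hNw ?_ s hs hNy hνy
    rw [frontier_prod_eq, frontier_closedBall _ hτ.ne', frontier_Icc hτ.le] at hx
    rcases hx with ⟨-, hr⟩ | ⟨hw, -⟩
    · exact Or.inr (by simpa using hr)
    · exact Or.inl (by simpa using hw)
  have hmem : (c₀, α) ∈ closedBall (0 : F) τ ×ˢ Icc 0 τ :=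
    ⟨mem_closedBall_zero_iff.2 hc₀τ, hα, hατ⟩
  obtain ⟨x, -, hx⟩ := exists_homotopy_end_eq_zero
    ((isCompact_closedBall (0 : F) τ).prod isCompact_Icc) hmem
    (by simp only [T, Function.uncurry_def]; fun_prop) hT₀ hfrontier
  exact ⟨x.1, x.2, (hT_zero hx).1, (hT_zero hx).2.1⟩

/-- Otherwise gradient descent would push the half-cylinder off `{N c = c₀, ν c = α}`, without ever
moving its boundary there since `Φ ≤ 0` on the latter. -/
theorem exists_le_norm_gradient_le_of_linking [FiniteDimensional ℝ F] {grad : F → F} {Λ : ℝ}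
    (hΛ : 0 < Λ) (hgrad : Continuous grad)
    (hΦ : ∀ c d, Φ (c + d) ≤ Φ c + inner ℝ (grad c) d + Λ * ‖d‖ ^ 2)
    (hN : ∀ x, N (N x) = N x) (hν : Continuous ν) (hNe : N e = 0)
    (hνe : ∀ (w : F) (r : ℝ), 0 ≤ r → ν (N w + r • e) = r) (hc₀ : N c₀ = c₀) (hα : 0 ≤ α)
    {β η M : ℝ} (hβ : 0 < β) (hη : 0 < η) (hlower : ∀ c, N c = c₀ → ν c = α → β ≤ Φ c)
    (hupper : ∀ w r, Φ (N w + r • e) ≤ M - η * (‖N w‖ ^ 2 + r ^ 2))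
    (hnonpos : ∀ w, Φ (N w) ≤ 0) {ε : ℝ} (hε : 0 < ε) :
    ∃ c, β ≤ Φ c ∧ ‖grad c‖ ≤ ε := by
  by_contra! hbig
  have hstep {s : ℝ} (hs : s ∈ Icc (0 : ℝ) 1) : 0 ≤ s / (2 * Λ) ∧ Λ * (s / (2 * Λ)) ≤ 1 / 2 := by
    refine ⟨div_nonneg hs.1 (by positivity), ?_⟩
    rw [show Λ * (s / (2 * Λ)) = s / 2 by field_simp]
    linarith [hs.2]
  obtain ⟨m, hm⟩ := exists_nat_gt (M / (1 / (2 * Λ) / 2 * ε ^ 2))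
  rw [div_lt_iff₀ (by positivity)] at hm
  let D (s : ℝ) (x : F) : F := (gradientStep grad (s / (2 * Λ)))^[m] x
  have hD : Continuous fun p : ℝ × F ↦ D p.1 p.2 :=
    (continuous_iterate_gradientStep hgrad m).comp
      (by fun_prop : Continuous fun p : ℝ × F ↦ (p.1 / (2 * Λ), p.2))
  set τ := ‖c₀‖ + α + |M| / η + 1
  have hMη : 0 ≤ |M| / η := by positivity
  have hτ : 1 ≤ τ := by linarith [norm_nonneg c₀]
  have hMτ : M ≤ η * τ ^ 2 := by
    have hle : |M| / η ≤ τ := by linarith [norm_nonneg c₀]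
    calc M ≤ |M| := le_abs_self M
      _ ≤ η * τ := by rwa [div_le_iff₀' hη] at hle
      _ ≤ η * τ ^ 2 := by gcongr; exact le_self_pow₀ hτ two_ne_zero
  have hbox_nonpos (w : F) (r : ℝ) (hw : N w = w) (hwr : ‖w‖ = τ ∨ r = 0 ∨ r = τ) :
      Φ (w + r • e) ≤ 0 := by
    have hup := hupper w r
    rw [hw, mul_add] at hup
    rcases hwr with hw' | rfl | rfl
    · rw [hw'] at hup
      linarith [mul_nonneg hη.le (sq_nonneg r)]
    · simpa [hw] using hnonpos w
    · linarith [mul_nonneg hη.le (sq_nonneg ‖w‖)]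
  obtain ⟨w, r, hNw, hνw⟩ := exists_deformation_mem_of_linking hN hν hNe hνe hc₀ hα
    (by linarith : 0 < τ) (by linarith) (by linarith [norm_nonneg c₀]) hD
    (fun x ↦ by simp only [D, zero_div, iterate_gradientStep_zero])
    fun w r hw hwr s hs hNy hνy ↦ (hlower _ hNy hνy).not_gt <|
      ((apply_iterate_gradientStep_le hΦ (hstep hs).1 (hstep hs).2 m _).trans
        (hbox_nonpos w r hw hwr)).trans_lt hβ
  have hlow := hlower _ hNw hνw
  have hdrop := apply_iterate_gradientStep_le_sub hΦ (hstep (right_mem_Icc.2 zero_le_one)).1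
    (hstep (right_mem_Icc.2 zero_le_one)).2 hε.le (fun c hc ↦ (hbig c hc).le) hlow
  have hpos : 0 ≤ η * (‖N w‖ ^ 2 + r ^ 2) := by positivity
  linarith [hupper w r]

end Linking

section ModeProjection

variable {V : Type*} [NormedAddCommGroup V] {I : Finset ℤ}

/-- The homogeneous `H^{1/2}` seminorm of the part of positive frequency. -/
noncomputable def positiveSeminorm (c : TrigCoeffs V I) : ℝ :=
  Real.sqrt (∑ k : I, max (k : ℝ) 0 * ‖c k‖ ^ 2)

lemma continuous_positiveSeminorm :
    Continuous (positiveSeminorm : TrigCoeffs V I → ℝ) := by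
  unfold positiveSeminorm
  fun_prop

lemma positiveSeminorm_sq (c : TrigCoeffs V I) :
    positiveSeminorm c ^ 2 = ∑ k : I, max (k : ℝ) 0 * ‖c k‖ ^ 2 :=
  Real.sq_sqrt (Finset.sum_nonneg fun k _ ↦ by positivity)

lemma norm_apply_le_positiveSeminorm (c : TrigCoeffs V I) {k : I} (hk : 0 < (k : ℤ)) :
    ‖c k‖ ≤ positiveSeminorm c := by
  have hk1 : (1 : ℝ) ≤ max (k : ℝ) 0 := le_max_of_le_left (by exact_mod_cast hk)
  refine Real.le_sqrt_of_sq_le ?_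
  calc ‖c k‖ ^ 2 ≤ max (k : ℝ) 0 * ‖c k‖ ^ 2 := le_mul_of_one_le_left (sq_nonneg _) hk1
    _ ≤ ∑ k : I, max (k : ℝ) 0 * ‖c k‖ ^ 2 :=
      Finset.single_le_sum (f := fun k : I ↦ max (k : ℝ) 0 * ‖c k‖ ^ 2)
        (fun k _ ↦ by positivity) (Finset.mem_univ k)

variable [InnerProductSpace ℝ V]

/-- The projection of Fourier coefficients onto the frequencies satisfying `p`. -/
noncomputable def modeProj (p : ℤ → Prop) [DecidablePred p] :
    TrigCoeffs V I →L[ℝ] TrigCoeffs V I where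
  toFun c := WithLp.toLp 2 fun k ↦ if p k then c k else 0
  map_add' c d := by ext k; by_cases hk : p k <;> simp [hk]
  map_smul' r c := by ext k; by_cases hk : p k <;> simp [hk]
  cont := (PiLp.continuous_toLp 2 _).comp
    (continuous_pi fun k ↦ by by_cases hk : p k <;> simp only [hk, if_true, if_false] <;> fun_prop)

lemma modeProj_apply (p : ℤ → Prop) [DecidablePred p] (c : TrigCoeffs V I) (k : I) :
    modeProj p c k = if p k then c k else 0 := rfl

lemma modeProj_modeProj (p : ℤ → Prop) [DecidablePred p] (c : TrigCoeffs V I) :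
    modeProj p (modeProj p c) = modeProj p c := by
  ext k
  by_cases hk : p k <;> simp [modeProj_apply, hk]

lemma modeProj_single (p : ℤ → Prop) [DecidablePred p] (j : I) (v : V) :
    modeProj p (PiLp.single 2 j v : TrigCoeffs V I) = if p j then PiLp.single 2 j v else 0 := by
  ext k
  by_cases hk : k = j
  · subst hk
    by_cases hp : p k <;> simp [modeProj_apply, hp]
  · by_cases hp : p j <;> simp [modeProj_apply, hp, hk]

lemma trigSum_single_zero (J : V →L[ℝ] V) (h0 : (0 : ℤ) ∈ I) (v : V) (t : ℝ) :
    trigSum J (PiLp.single 2 (⟨0, h0⟩ : I) v) t = v := by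
  rw [trigSum, Finset.sum_eq_single ⟨0, h0⟩ (fun k _ hk ↦ by simp [hk]) (by simp)]
  simp

lemma inner_freqMul_self (c : TrigCoeffs V I) :
    inner ℝ (freqMul I c) c = ∑ k : I, 2 * Real.pi * k * ‖c k‖ ^ 2 := by
  simp only [PiLp.inner_apply, freqMul_apply, real_inner_smul_left, real_inner_self_eq_norm_sq]

lemma inner_freqMul_modeProj_nonpos (w : TrigCoeffs V I) :
    inner ℝ (freqMul I (modeProj (· ≤ 0) w)) (modeProj (· ≤ 0) w) ≤ 0 := by
  rw [inner_freqMul_self]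
  refine Finset.sum_nonpos fun k _ ↦ ?_
  rw [modeProj_apply]
  split_ifs with hk
  · have hk' : (k : ℝ) ≤ 0 := by exact_mod_cast hk
    exact mul_nonpos_of_nonpos_of_nonneg
      (mul_nonpos_of_nonneg_of_nonpos Real.two_pi_pos.le hk') (sq_nonneg _)
  · simp

lemma inner_freqMul_left (c d : TrigCoeffs V I) :
    inner ℝ (freqMul I c) d = inner ℝ c (freqMul I d) := by
  simp only [PiLp.inner_apply, freqMul_apply, real_inner_smul_left, real_inner_smul_right]

lemma inner_freqMul_self_eq_positiveSeminorm_sq {c : TrigCoeffs V I}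
    (hc : ∀ k : I, (k : ℤ) < 0 → c k = 0) :
    inner ℝ (freqMul I c) c = 2 * Real.pi * positiveSeminorm c ^ 2 := by
  rw [inner_freqMul_self, positiveSeminorm_sq, Finset.mul_sum]
  refine Finset.sum_congr rfl fun k _ ↦ ?_
  rcases lt_or_ge (k : ℤ) 0 with hk | hk
  · simp [hc k hk]
  · rw [max_eq_left (by exact_mod_cast hk), mul_assoc]

lemma positiveSeminorm_modeProj_add_smul_single (h1 : (1 : ℤ) ∈ I) {e : V} (he : ‖e‖ = 1)
    (w : TrigCoeffs V I) {r : ℝ} (hr : 0 ≤ r) :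
    positiveSeminorm (modeProj (· ≤ 0) w + r • PiLp.single 2 (⟨1, h1⟩ : I) e) = r := by
  rw [positiveSeminorm, Finset.sum_eq_single ⟨1, h1⟩]
  · simp [modeProj_apply, norm_smul, he, Real.sqrt_sq hr]
  · intro k _ hk
    rcases le_or_gt (k : ℤ) 0 with hk0 | hk0
    · rw [max_eq_right (by exact_mod_cast hk0), zero_mul]
    · simp [modeProj_apply, hk, hk0.not_ge]
  · simp

lemma norm_trigSum_modeProj_le {J : V →L[ℝ] V} (hJ : IsOrthogonalComplexStructure J)
    (c : TrigCoeffs V I) (K : ℕ) (t : ℝ) :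
    ‖trigSum J (modeProj (fun k ↦ 0 < k ∧ k ≤ K) c) t‖ ≤ K * positiveSeminorm c := by
  have hcard : (I.filter fun k : ℤ ↦ 0 < k ∧ k ≤ (K : ℤ)).card ≤ K := by
    have hsub : (I.filter fun k : ℤ ↦ 0 < k ∧ k ≤ (K : ℤ)) ⊆ Finset.Ioc 0 (K : ℤ) :=
      fun k hk ↦ by simpa using (Finset.mem_filter.1 hk).2
    simpa using Finset.card_le_card hsub
  calc ‖trigSum J (modeProj (fun k ↦ 0 < k ∧ k ≤ K) c) t‖
      ≤ ∑ k : I, ‖modeProj (fun k ↦ 0 < k ∧ k ≤ K) c k‖ :=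
        norm_sum_le_of_le _ fun k _ ↦ (hJ.norm_rotation _ _).le
    _ ≤ ∑ k : I, if 0 < (k : ℤ) ∧ (k : ℤ) ≤ K then positiveSeminorm c else 0 := by
        refine Finset.sum_le_sum fun k _ ↦ ?_
        rw [modeProj_apply]
        split_ifs with hk
        · exact norm_apply_le_positiveSeminorm c hk.1
        · exact norm_zero.le
    _ = (I.filter fun k : ℤ ↦ 0 < k ∧ k ≤ (K : ℤ)).card * positiveSeminorm c := by
        rw [Finset.sum_coe_sort I
          (fun k ↦ if 0 < k ∧ k ≤ (K : ℤ) then positiveSeminorm c else 0),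
          ← Finset.sum_filter, Finset.sum_const, nsmul_eq_mul]
    _ ≤ K * positiveSeminorm c := by
        gcongr
        exact Real.sqrt_nonneg _

lemma mul_norm_modeProj_sq_le (c : TrigCoeffs V I) (K : ℕ) :
    K * ‖modeProj (fun k ↦ (K : ℤ) < k) c‖ ^ 2 ≤ positiveSeminorm c ^ 2 := by
  rw [positiveSeminorm_sq, PiLp.norm_sq_eq_of_L2, Finset.mul_sum]
  refine Finset.sum_le_sum fun k _ ↦ ?_
  rw [modeProj_apply]
  split_ifs with hk
  · gcongr
    exact le_max_of_le_left (by exact_mod_cast hk.le)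
  · simp only [norm_zero, ne_eq, OfNat.ofNat_ne_zero, not_false_eq_true, zero_pow, mul_zero]
    positivity

lemma eq_single_add_modeProj_add_modeProj {c : TrigCoeffs V I} {c₀ : TrigCoeffs V I}
    (hc : modeProj (· ≤ 0) c = c₀) (K : ℕ) :
    c = c₀ + (modeProj (fun k ↦ 0 < k ∧ k ≤ K) c + modeProj (fun k ↦ (K : ℤ) < k) c) := by
  rw [← hc]
  ext k
  simp only [PiLp.add_apply, modeProj_apply]
  rcases le_or_gt (k : ℤ) 0 with hk | hk
  · simp [hk, hk.not_gt, (hk.trans K.cast_nonneg).not_gt]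
  · rcases le_or_gt (k : ℤ) K with hkK | hkK
    · simp [hk, hk.not_ge, hkK, hkK.not_gt]
    · simp [hk.not_ge, hkK, hkK.not_ge]

end ModeProjection

noncomputable section Hamiltonian

/-- A Hamiltonian `H` on `(V, J)` which is asymptotically quadratic, equal to `½⟪A x, x⟫` up to a
bounded error with bounded gradient, and vanishes near `c₀`. The form `A` commutes with `J`, is
non-resonant with the operators `2πk` (`γ` measures the gap) and its eigenvalue `a₁ > 2π` forces the
nonconstant periodic orbit which the linking argument produces. -/
structure AsymptoticallyQuadraticHamiltonian (V : Type*) [NormedAddCommGroup V]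
    [InnerProductSpace ℝ V] [CompleteSpace V] where
  J : V →L[ℝ] V
  hJ : IsOrthogonalComplexStructure J
  H : V → ℝ
  gradH : V → V
  hasGradientAt : ∀ x, HasGradientAt H (gradH x) x
  L : NNReal
  lipschitzWith_gradH : LipschitzWith L gradH
  A : V →L[ℝ] V
  A_comm : ∀ x, A (J x) = J (A x)
  M : ℝ
  abs_H_sub_le : ∀ x, |H x - 1 / 2 * inner ℝ (A x) x| ≤ M
  norm_gradH_sub_le : ∀ x, ‖gradH x - A x‖ ≤ M
  a₀ : ℝ
  a₀_pos : 0 < a₀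
  A_pos : ∀ x, a₀ * ‖x‖ ^ 2 ≤ inner ℝ (A x) x
  e : V
  norm_e : ‖e‖ = 1
  a₁ : ℝ
  A_e : A e = a₁ • e
  two_pi_lt_a₁ : 2 * Real.pi < a₁
  γ : ℝ
  γ_pos : 0 < γ
  gap : ∀ (k : ℤ) (v : V), γ * (1 + |(k : ℝ)|) * ‖v‖ ≤ ‖(2 * Real.pi * k) • v - A v‖
  H_nonneg : ∀ x, 0 ≤ H x
  c₀ : V
  ρ : ℝ
  ρ_pos : 0 < ρ
  H_eq_zero : ∀ z, ‖z‖ ≤ ρ → H (c₀ + z) = 0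
  Q : ℝ
  H_le : ∀ z, H (c₀ + z) ≤ Q * ‖z‖ ^ 2

namespace AsymptoticallyQuadraticHamiltonian

variable {V : Type*} [NormedAddCommGroup V] [InnerProductSpace ℝ V] [CompleteSpace V]
  (P : AsymptoticallyQuadraticHamiltonian V) {I : Finset ℤ}

@[fun_prop]
lemma continuous_gradH : Continuous P.gradH := P.lipschitzWith_gradH.continuous

@[fun_prop]
lemma continuous_H : Continuous P.H :=
  continuous_iff_continuousAt.2 fun x ↦ (P.hasGradientAt x).continuousAt

lemma H_add_inner_sub_le (x y : V) :
    P.H x + inner ℝ (P.gradH x) y - P.L * ‖y‖ ^ 2 ≤ P.H (x + y) := by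
  have htaylor : ‖P.H (x + y) - P.H x - inner ℝ (P.gradH x) y‖ ≤ P.L * ‖y‖ * ‖y‖ := by
    have hmvt := (convex_closedBall x ‖y‖).norm_image_sub_le_of_norm_hasFDerivWithin_le'
      (f := P.H) (f' := fun z ↦ InnerProductSpace.toDual ℝ V (P.gradH z))
      (φ := InnerProductSpace.toDual ℝ V (P.gradH x)) (C := P.L * ‖y‖) (x := x) (y := x + y)
      (fun z _ ↦ (P.hasGradientAt z).hasFDerivAt.hasFDerivWithinAt) (fun z hz ↦ ?_) (by simp)
      (by simp)
    · simpa using hmvt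
    · rw [← map_sub, LinearIsometryEquiv.norm_map]
      refine (P.lipschitzWith_gradH.norm_sub_le z x).trans ?_
      gcongr
      exact mem_closedBall_iff_norm.1 hz
  have hlow := (abs_le.1 htaylor).1
  linarith

/-- The action functional `½⟪-J x', x⟫ - ∫ H(x)` on trigonometric polynomials `x`. -/
def action (c : TrigCoeffs V I) : ℝ :=
  1 / 2 * inner ℝ (freqMul I c) c - ∫ t in (0 : ℝ)..1, P.H (trigSum P.J c t)

/-- The gradient of `action`. -/
def gradAction (c : TrigCoeffs V I) : TrigCoeffs V I :=
  freqMul I c - WithLp.toLp 2 fun k : I ↦ modeCoeff P.J (fun t ↦ P.gradH (trigSum P.J c t)) k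

lemma gradAction_apply (c : TrigCoeffs V I) (k : I) :
    P.gradAction c k
      = (2 * Real.pi * k) • c k - modeCoeff P.J (fun t ↦ P.gradH (trigSum P.J c t)) k := rfl

lemma continuous_gradAction [FiniteDimensional ℝ V] : Continuous (P.gradAction (I := I)) := by
  have hS := continuous_uncurry_trigSum (I := I) P.J
  refine (freqMul I).continuous_of_finiteDimensional.sub ((PiLp.continuous_toLp 2 _).comp
    (continuous_pi fun k ↦ ?_))
  apply intervalIntegral.continuous_parametric_intervalIntegral_of_continuous'
  fun_prop

lemma inner_gradAction (c d : TrigCoeffs V I) :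
    inner ℝ (P.gradAction c) d = inner ℝ (freqMul I c) d
      - ∫ t in (0 : ℝ)..1, inner ℝ (P.gradH (trigSum P.J c t)) (trigSum P.J d t) := by
  rw [integral_inner_trigSum P.hJ (by fun_prop), gradAction, inner_sub_left]
  rfl

lemma action_add_le {Λ : ℝ} (hΛ : ∀ k ∈ I, Real.pi * k + P.L ≤ Λ) (c d : TrigCoeffs V I) :
    P.action (c + d) ≤ P.action c + inner ℝ (P.gradAction c) d + Λ * ‖d‖ ^ 2 := by
  have hpotential : (∫ t in (0 : ℝ)..1, P.H (trigSum P.J c t))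
      + (∫ t in (0 : ℝ)..1, inner ℝ (P.gradH (trigSum P.J c t)) (trigSum P.J d t))
      - P.L * ‖d‖ ^ 2 ≤ ∫ t in (0 : ℝ)..1, P.H (trigSum P.J (c + d) t) := by
    rw [← integral_norm_trigSum_sq P.hJ d, ← intervalIntegral.integral_const_mul,
      ← intervalIntegral.integral_add (Continuous.intervalIntegrable (by fun_prop) _ _)
        (Continuous.intervalIntegrable (by fun_prop) _ _),
      ← intervalIntegral.integral_sub (Continuous.intervalIntegrable (by fun_prop) _ _)
        (Continuous.intervalIntegrable (by fun_prop) _ _)]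
    refine intervalIntegral.integral_mono_on zero_le_one
      (Continuous.intervalIntegrable (by fun_prop) _ _)
      (Continuous.intervalIntegrable (by fun_prop) _ _) fun t _ ↦ ?_
    rw [trigSum_add]
    exact P.H_add_inner_sub_le _ _
  have hquadratic : 1 / 2 * inner ℝ (freqMul I d) d + P.L * ‖d‖ ^ 2 ≤ Λ * ‖d‖ ^ 2 := by
    rw [inner_freqMul_self, PiLp.norm_sq_eq_of_L2, Finset.mul_sum, Finset.mul_sum, Finset.mul_sum,
      ← Finset.sum_add_distrib]
    refine Finset.sum_le_sum fun k _ ↦ ?_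
    linarith [mul_le_mul_of_nonneg_right (hΛ k k.2) (sq_nonneg ‖d k‖)]
  simp only [action, inner_gradAction, map_add, inner_add_left, inner_add_right]
  rw [inner_freqMul_left d c, real_inner_comm (freqMul I c) d]
  linarith

section Linking

lemma H_add_le_of_norm_le {u : V} (hu : ‖u‖ ≤ P.ρ / 2) (w : V) :
    P.H (P.c₀ + (u + w)) ≤ 4 * |P.Q| * ‖w‖ ^ 2 := by
  by_cases hball : ‖u + w‖ ≤ P.ρ
  · rw [P.H_eq_zero _ hball]
    positivity
  · have hnorm : ‖u + w‖ ≤ 2 * ‖w‖ := by linarith [norm_add_le u w]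
    calc P.H (P.c₀ + (u + w)) ≤ P.Q * ‖u + w‖ ^ 2 := P.H_le _
      _ ≤ |P.Q| * (2 * ‖w‖) ^ 2 := by gcongr; exact le_abs_self _
      _ = 4 * |P.Q| * ‖w‖ ^ 2 := by ring

lemma integral_H_trigSum_le (h0 : (0 : ℤ) ∈ I) {c : TrigCoeffs V I}
    (hc : modeProj (· ≤ 0) c = PiLp.single 2 (⟨0, h0⟩ : I) P.c₀) {K : ℕ}
    (hK : K * positiveSeminorm c ≤ P.ρ / 2) :
    ∫ t in (0 : ℝ)..1, P.H (trigSum P.J c t)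
      ≤ 4 * |P.Q| * ‖modeProj (fun k ↦ (K : ℤ) < k) c‖ ^ 2 := by
  rw [← integral_norm_trigSum_sq P.hJ, ← intervalIntegral.integral_const_mul]
  refine intervalIntegral.integral_mono_on zero_le_one
    (Continuous.intervalIntegrable (by fun_prop) _ _)
    (Continuous.intervalIntegrable (by fun_prop) _ _) fun t _ ↦ ?_
  conv_lhs => rw [eq_single_add_modeProj_add_modeProj hc K]
  rw [trigSum_add, trigSum_add, trigSum_single_zero]
  exact P.H_add_le_of_norm_le ((norm_trigSum_modeProj_le P.hJ c K t).trans hK) _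

lemma exists_le_action_of_modeProj_eq : ∃ α > 0, ∃ β > 0, ∀ (I : Finset ℤ) (h0 : (0 : ℤ) ∈ I)
    (c : TrigCoeffs V I), modeProj (· ≤ 0) c = PiLp.single 2 (⟨0, h0⟩ : I) P.c₀ →
      positiveSeminorm c = α → β ≤ P.action c := by
  obtain ⟨K, hK⟩ := exists_nat_gt (8 * |P.Q| + 1)
  have hK1 : (1 : ℝ) < K := by linarith [abs_nonneg P.Q]
  have hρ := P.ρ_pos
  set α := P.ρ / (2 * K) with hα
  refine ⟨α, by positivity, α ^ 2 / 2, by positivity, fun I h0 c hc hcα ↦ ?_⟩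
  have hneg (k : I) (hk : (k : ℤ) < 0) : c k = 0 := by
    have hck := congrArg (fun d : TrigCoeffs V I ↦ d k) hc
    have hk0 : k ≠ ⟨0, h0⟩ := fun h ↦ hk.ne (congrArg Subtype.val h)
    simpa [modeProj_apply, hk.le, hk0] using hck
  have hquadratic : 1 / 2 * inner ℝ (freqMul I c) c = Real.pi * α ^ 2 := by
    rw [inner_freqMul_self_eq_positiveSeminorm_sq hneg, hcα]
    ring
  have hhigh := mul_norm_modeProj_sq_le c K
  set b := ‖modeProj (fun k ↦ (K : ℤ) < k) c‖ ^ 2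
  have hpotential : ∫ t in (0 : ℝ)..1, P.H (trigSum P.J c t) ≤ α ^ 2 / 2 := by
    calc ∫ t in (0 : ℝ)..1, P.H (trigSum P.J c t) ≤ 4 * |P.Q| * b :=
          P.integral_H_trigSum_le h0 hc (by rw [hcα, hα]; apply le_of_eq; field_simp)
      _ ≤ K / 2 * b := by gcongr; linarith
      _ ≤ α ^ 2 / 2 := by rw [hcα] at hhigh; linarith
  rw [action, hquadratic]
  nlinarith [Real.pi_gt_three, sq_nonneg α]

lemma action_modeProj_nonpos (w : TrigCoeffs V I) : P.action (modeProj (· ≤ 0) w) ≤ 0 := by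
  have hpotential : 0 ≤ ∫ t in (0 : ℝ)..1, P.H (trigSum P.J (modeProj (· ≤ 0) w) t) :=
    intervalIntegral.integral_nonneg zero_le_one fun t _ ↦ P.H_nonneg _
  rw [action]
  linarith [inner_freqMul_modeProj_nonpos w]

lemma action_le_sum (c : TrigCoeffs V I) :
    P.action c ≤ 1 / 2 * ∑ k : I, (2 * Real.pi * k * ‖c k‖ ^ 2 - inner ℝ (P.A (c k)) (c k))
      + P.M := by
  have hpotential : 1 / 2 * ∑ k : I, inner ℝ (P.A (c k)) (c k) - P.M
      ≤ ∫ t in (0 : ℝ)..1, P.H (trigSum P.J c t) := by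
    have hmono := intervalIntegral.integral_mono_on (μ := MeasureTheory.volume) zero_le_one
      (f := fun t ↦ 1 / 2 * inner ℝ (P.A (trigSum P.J c t)) (trigSum P.J c t) - P.M)
      (g := fun t ↦ P.H (trigSum P.J c t)) (Continuous.intervalIntegrable (by fun_prop) _ _)
      (Continuous.intervalIntegrable (by fun_prop) _ _)
      fun t _ ↦ by linarith [(abs_le.1 (P.abs_H_sub_le (trigSum P.J c t))).1]
    rw [intervalIntegral.integral_sub (Continuous.intervalIntegrable (by fun_prop) _ _)
      (by simp), intervalIntegral.integral_const_mul,
      integral_inner_map_trigSum P.hJ P.A_comm] at hmono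
    simpa using hmono
  rw [action, inner_freqMul_self, Finset.sum_sub_distrib]
  linarith

lemma action_modeProj_add_smul_single_le (h1 : (1 : ℤ) ∈ I) (w : TrigCoeffs V I) (r : ℝ) :
    P.action (modeProj (· ≤ 0) w + r • PiLp.single 2 (⟨1, h1⟩ : I) P.e)
      ≤ -(P.a₀ / 2) * ‖modeProj (· ≤ 0) w‖ ^ 2 + (Real.pi - P.a₁ / 2) * r ^ 2 + P.M := by
  have hr : (2 * Real.pi - P.a₁) * r ^ 2
      = ∑ k : I, if k = (⟨1, h1⟩ : I) then (2 * Real.pi - P.a₁) * r ^ 2 else 0 := by simp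
  set c := modeProj (· ≤ 0) w + r • PiLp.single 2 (⟨1, h1⟩ : I) P.e with hc
  suffices hsum : ∑ k : I, (2 * Real.pi * k * ‖c k‖ ^ 2 - inner ℝ (P.A (c k)) (c k))
      ≤ -P.a₀ * ‖modeProj (· ≤ 0) w‖ ^ 2 + (2 * Real.pi - P.a₁) * r ^ 2 by
    linarith [P.action_le_sum c]
  rw [hr, PiLp.norm_sq_eq_of_L2, Finset.mul_sum, ← Finset.sum_add_distrib]
  refine Finset.sum_le_sum fun k _ ↦ ?_
  by_cases hk1 : k = ⟨1, h1⟩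
  · subst hk1
    have hw1 : modeProj (· ≤ 0) w ⟨1, h1⟩ = 0 := by simp [modeProj_apply]
    have hc1 : c ⟨1, h1⟩ = r • P.e := by simp [hc, hw1]
    rw [hw1, hc1, map_smul, P.A_e, norm_smul, P.norm_e, real_inner_smul_left, real_inner_smul_left,
      real_inner_smul_right, real_inner_self_eq_norm_sq, P.norm_e, Real.norm_eq_abs, mul_one,
      sq_abs, norm_zero, if_pos rfl]
    push_cast
    linarith
  · rcases le_or_gt (k : ℤ) 0 with hk | hk
    · have hk' : (k : ℝ) ≤ 0 := by exact_mod_cast hk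
      have hwk : modeProj (· ≤ 0) w k = w k := by simp [modeProj_apply, hk]
      have hck : c k = w k := by simp [hc, hwk, hk1]
      rw [hck, hwk, if_neg hk1]
      have hfreq : 2 * Real.pi * k * ‖w k‖ ^ 2 ≤ 0 := mul_nonpos_of_nonpos_of_nonneg
        (mul_nonpos_of_nonneg_of_nonpos Real.two_pi_pos.le hk') (sq_nonneg _)
      linarith [P.A_pos (w k)]
    · simp [hc, modeProj_apply, hk1, hk.not_ge]

theorem exists_le_action_norm_gradAction_le [FiniteDimensional ℝ V] :
    ∃ β > 0, ∀ I : Finset ℤ, (0 : ℤ) ∈ I → (1 : ℤ) ∈ I → ∀ ε > 0,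
      ∃ c : TrigCoeffs V I, β ≤ P.action c ∧ ‖P.gradAction c‖ ≤ ε := by
  obtain ⟨α, hα, β, hβ, hlower⟩ := P.exists_le_action_of_modeProj_eq
  refine ⟨β, hβ, fun I h0 h1 ε hε ↦ ?_⟩
  obtain ⟨Λ₀, hΛ₀⟩ := (I.image fun k : ℤ ↦ Real.pi * k + P.L).bddAbove
  have hΛ (k : ℤ) (hk : k ∈ I) : Real.pi * k + P.L ≤ max Λ₀ 1 :=
    le_max_of_le_left (hΛ₀ (Finset.mem_coe.2 (Finset.mem_image_of_mem _ hk)))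
  set η := min (P.a₀ / 2) (P.a₁ / 2 - Real.pi)
  have hη : 0 < η := lt_min (by linarith [P.a₀_pos]) (by linarith [P.two_pi_lt_a₁])
  have hupper (w : TrigCoeffs V I) (r : ℝ) :
      P.action (modeProj (· ≤ 0) w + r • PiLp.single 2 (⟨1, h1⟩ : I) P.e)
        ≤ P.M - η * (‖modeProj (· ≤ 0) w‖ ^ 2 + r ^ 2) := by
    have hw := mul_le_mul_of_nonneg_right (min_le_left (P.a₀ / 2) (P.a₁ / 2 - Real.pi))
      (sq_nonneg ‖modeProj (· ≤ 0) w‖)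
    have hr := mul_le_mul_of_nonneg_right (min_le_right (P.a₀ / 2) (P.a₁ / 2 - Real.pi))
      (sq_nonneg r)
    linarith [P.action_modeProj_add_smul_single_le h1 w r]
  exact exists_le_norm_gradient_le_of_linking (by positivity) P.continuous_gradAction
    (P.action_add_le hΛ) (modeProj_modeProj _) continuous_positiveSeminorm
    (by simp [modeProj_single])
    (fun w r hr ↦ positiveSeminorm_modeProj_add_smul_single h1 P.norm_e w hr)
    (by simp [modeProj_single]) hα.le hβ hη (hlower I h0) hupper P.action_modeProj_nonpos hε

end Linking

end AsymptoticallyQuadraticHamiltonian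

end Hamiltonian

section Compactness

variable {V : Type*} [NormedAddCommGroup V] [InnerProductSpace ℝ V] {J : V →L[ℝ] V}

/-- Arzelà–Ascoli: the derivatives being bounded in `L²`, the sums are uniformly ½-Hölder. -/
lemma exists_subseq_tendsto_trigSum [FiniteDimensional ℝ V] (hJ : IsOrthogonalComplexStructure J)
    {C : ℝ} {I : ℕ → Finset ℤ} {c : ∀ j, TrigCoeffs V (I j)} (hc : ∀ j, ‖c j‖ ^ 2 ≤ C)
    (hfreq : ∀ j, ‖freqMul (I j) (c j)‖ ^ 2 ≤ C) :
    ∃ σ : ℕ → ℕ, StrictMono σ ∧ ∃ y : ℝ → V, Continuous y ∧ ∀ t ∈ Icc (0 : ℝ) 1,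
      Filter.Tendsto (fun j ↦ trigSum J (c (σ j)) t) Filter.atTop (nhds (y t)) := by
  let f (j : ℕ) : BoundedContinuousFunction (Icc (0 : ℝ) 1) V :=
    .mkOfCompact ⟨fun t ↦ trigSum J (c j) t, by fun_prop⟩
  have hbounded (j : ℕ) (t : Icc (0 : ℝ) 1) : f j t ∈ closedBall (0 : V) (√(4 * C)) := by
    refine mem_closedBall_zero_iff.2 (Real.le_sqrt_of_sq_le ?_)
    exact (norm_trigSum_sq_le hJ (c j) t.2).trans (by linarith [hc j, hfreq j])
  have hholder (j : ℕ) (s t : Icc (0 : ℝ) 1) : dist (f j s) (f j t) ≤ √(C * dist s t) := by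
    refine Real.le_sqrt_of_sq_le ((dist_trigSum_sq_le hJ (c j) s.2 t.2).trans ?_)
    rw [mul_comm]
    exact mul_le_mul_of_nonneg_right (hfreq j) dist_nonneg
  have hmodulus : Filter.Tendsto (fun d : ℝ ↦ √(C * d)) (nhds 0) (nhds 0) := by
    simpa using (show Continuous fun d : ℝ ↦ √(C * d) by fun_prop).tendsto 0
  have hequi : UniformEquicontinuous fun (g : range f) ↦ (g : Icc (0 : ℝ) 1 → V) :=
    uniformEquicontinuous_of_continuity_modulus _ hmodulus _ fun s t ⟨_, j, hj⟩ ↦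
      hj ▸ hholder j s t
  have hcompact : IsCompact (closure (range f)) :=
    BoundedContinuousFunction.arzela_ascoli _ (isCompact_closedBall (0 : V) (√(4 * C))) _
      (by rintro _ t ⟨j, rfl⟩; exact hbounded j t) hequi.equicontinuous
  obtain ⟨F, -, σ, hσ, hlim⟩ := hcompact.tendsto_subseq fun j ↦ subset_closure (mem_range_self j)
  refine ⟨σ, hσ, fun t ↦ F (projIcc 0 1 zero_le_one t), by fun_prop, fun t ht ↦ ?_⟩
  simp only [projIcc_of_mem _ ht]
  exact ((continuous_eval_const (⟨t, ht⟩ : Icc (0 : ℝ) 1)).tendsto F).comp hlim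

lemma eq_add_integral_of_modeCoeff_eq [CompleteSpace V] (hJ : IsOrthogonalComplexStructure J)
    {y f : ℝ → V} (hy : Continuous y) (hf : Continuous f) (hper : y 0 = y 1)
    (hcoeff : ∀ k : ℤ, (2 * Real.pi * k) • modeCoeff J y k = modeCoeff J f k) {t : ℝ}
    (ht : t ∈ Icc (0 : ℝ) 1) : y t = y 0 + ∫ s in (0 : ℝ)..t, J (f s) := by
  let x (t : ℝ) : V := y 0 + ∫ s in (0 : ℝ)..t, J (f s)
  have hJf : Continuous fun s ↦ J (f s) := by fun_prop
  have hx (t : ℝ) : HasDerivAt x (J (f t)) t :=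
    (hJf.integral_hasStrictDerivAt 0 t).hasDerivAt.const_add (y 0)
  have hx_cont : Continuous x := continuous_iff_continuousAt.2 fun t ↦ (hx t).continuousAt
  have hx₀ : x 0 = y 0 := by simp [x]
  have hx₁ : x 1 = y 0 := by
    have hmean : ∫ s in (0 : ℝ)..1, f s = 0 := by simpa [modeCoeff] using (hcoeff 0).symm
    simp [x, J.intervalIntegral_comp_comm (hf.intervalIntegrable 0 1), hmean]
  have hcoeff_sub (k : ℤ) (hk : k ≠ 0) : modeCoeff J (fun t ↦ y t - x t) k = 0 := by
    have hfreq : 2 * Real.pi * (k : ℝ) ≠ 0 := by positivity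
    have hxk := modeCoeff_deriv hJ hJf hx (hx₀.trans hx₁.symm) k
    rw [modeCoeff_map (fun _ ↦ rfl) hf, ← hcoeff k, map_smul] at hxk
    have hJk := congrArg J (smul_right_injective V hfreq hxk)
    rw [hJ.apply_apply, hJ.apply_apply] at hJk
    rw [modeCoeff_sub J hy hx_cont, neg_injective hJk, sub_self]
  have hconst := eq_apply_zero_of_modeCoeff_eq_zero (z := fun t ↦ y t - x t) hJ
    (by fun_prop) (by simp only [← hper, hx₀, hx₁]) hcoeff_sub ht
  simpa only [hx₀, sub_self, sub_eq_zero] using hconst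

end Compactness

namespace AsymptoticallyQuadraticHamiltonian

variable {V : Type*} [NormedAddCommGroup V] [InnerProductSpace ℝ V]

section Estimates

variable [CompleteSpace V] (P : AsymptoticallyQuadraticHamiltonian V) {I : Finset ℤ}

lemma smul_sub_map_eq_gradAction_add (c : TrigCoeffs V I) (k : I) :
    (2 * Real.pi * k) • c k - P.A (c k) = P.gradAction c k
      + modeCoeff P.J (fun t ↦ P.gradH (trigSum P.J c t) - P.A (trigSum P.J c t)) k := by
  rw [modeCoeff_sub P.J (by fun_prop) (by fun_prop), modeCoeff_map P.A_comm (by fun_prop),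
    modeCoeff_trigSum P.hJ, gradAction_apply]
  abel

lemma sum_norm_sq_le {c : TrigCoeffs V I} (hc : ‖P.gradAction c‖ ≤ 1) :
    P.γ ^ 2 * ∑ k : I, (1 + |(k : ℝ)|) ^ 2 * ‖c k‖ ^ 2 ≤ 2 + 2 * P.M ^ 2 := by
  set err : ℤ → V :=
    modeCoeff P.J fun t ↦ P.gradH (trigSum P.J c t) - P.A (trigSum P.J c t)
  have hmode (k : I) : P.γ ^ 2 * ((1 + |(k : ℝ)|) ^ 2 * ‖c k‖ ^ 2)
      ≤ 2 * ‖P.gradAction c k‖ ^ 2 + 2 * ‖err k‖ ^ 2 := by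
    have hγ := P.γ_pos
    have hgap := P.gap k (c k)
    rw [smul_sub_map_eq_gradAction_add] at hgap
    calc P.γ ^ 2 * ((1 + |(k : ℝ)|) ^ 2 * ‖c k‖ ^ 2) = (P.γ * (1 + |(k : ℝ)|) * ‖c k‖) ^ 2 := by
          ring
      _ ≤ (‖P.gradAction c k‖ + ‖err k‖) ^ 2 := by
          gcongr
          exact hgap.trans (norm_add_le _ _)
      _ ≤ 2 * ‖P.gradAction c k‖ ^ 2 + 2 * ‖err k‖ ^ 2 := by
          linarith [add_sq_le (a := ‖P.gradAction c k‖) (b := ‖err k‖)]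
  have herr_sum : ∑ k : I, ‖err k‖ ^ 2 ≤ P.M ^ 2 := by
    refine (sum_norm_modeCoeff_sq_le P.hJ (by fun_prop) I).trans ?_
    have hmono := intervalIntegral.integral_mono_on (μ := MeasureTheory.volume) zero_le_one
      (f := fun t ↦ ‖P.gradH (trigSum P.J c t) - P.A (trigSum P.J c t)‖ ^ 2)
      (g := fun _ ↦ P.M ^ 2) (Continuous.intervalIntegrable (by fun_prop) _ _) (by simp)
      fun t _ ↦ pow_le_pow_left₀ (norm_nonneg _) (P.norm_gradH_sub_le _) 2
    simpa using hmono
  calc P.γ ^ 2 * ∑ k : I, (1 + |(k : ℝ)|) ^ 2 * ‖c k‖ ^ 2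
      ≤ ∑ k : I, (2 * ‖P.gradAction c k‖ ^ 2 + 2 * ‖err k‖ ^ 2) := by
        rw [Finset.mul_sum]
        exact Finset.sum_le_sum fun k _ ↦ hmode k
    _ = 2 * ‖P.gradAction c‖ ^ 2 + 2 * ∑ k : I, ‖err k‖ ^ 2 := by
        rw [Finset.sum_add_distrib, ← Finset.mul_sum, ← Finset.mul_sum, PiLp.norm_sq_eq_of_L2]
    _ ≤ 2 + 2 * P.M ^ 2 := by linarith [pow_le_one₀ (norm_nonneg _) hc (n := 2)]

lemma exists_bound_of_norm_gradAction_le_one : ∃ C : ℝ, ∀ (I : Finset ℤ) (c : TrigCoeffs V I),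
    ‖P.gradAction c‖ ≤ 1 → ‖c‖ ^ 2 ≤ C ∧ ‖freqMul I c‖ ^ 2 ≤ C := by
  set D := (2 + 2 * P.M ^ 2) / P.γ ^ 2 with hD
  refine ⟨(2 * Real.pi) ^ 2 * D, fun I c hc ↦ ?_⟩
  have hγ := P.γ_pos
  have hsum : ∑ k : I, (1 + |(k : ℝ)|) ^ 2 * ‖c k‖ ^ 2 ≤ D := by
    rw [hD, le_div_iff₀' (by positivity)]
    exact P.sum_norm_sq_le hc
  constructor
  · calc ‖c‖ ^ 2 = ∑ k : I, ‖c k‖ ^ 2 := PiLp.norm_sq_eq_of_L2 _ c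
      _ ≤ ∑ k : I, (1 + |(k : ℝ)|) ^ 2 * ‖c k‖ ^ 2 := Finset.sum_le_sum fun k _ ↦
          le_mul_of_one_le_left (sq_nonneg _) (one_le_pow₀ (by linarith [abs_nonneg (k : ℝ)]))
      _ ≤ D := hsum
      _ ≤ (2 * Real.pi) ^ 2 * D := le_mul_of_one_le_left (by positivity)
          (one_le_pow₀ (by linarith [Real.pi_gt_three]))
  · calc ‖freqMul I c‖ ^ 2 = ∑ k : I, (2 * Real.pi * k) ^ 2 * ‖c k‖ ^ 2 := norm_freqMul_sq c
      _ ≤ ∑ k : I, (2 * Real.pi) ^ 2 * ((1 + |(k : ℝ)|) ^ 2 * ‖c k‖ ^ 2) := by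
          refine Finset.sum_le_sum fun k _ ↦ ?_
          rw [← mul_assoc, mul_pow, ← sq_abs (k : ℝ)]
          gcongr
          linarith
      _ ≤ (2 * Real.pi) ^ 2 * D := by
          rw [← Finset.mul_sum]
          gcongr

lemma action_eq_inner_gradAction_add_integral (c : TrigCoeffs V I) :
    P.action c = 1 / 2 * inner ℝ (P.gradAction c) c
      + ∫ t in (0 : ℝ)..1, (1 / 2 * inner ℝ (P.gradH (trigSum P.J c t)) (trigSum P.J c t)
        - P.H (trigSum P.J c t)) := by
  rw [intervalIntegral.integral_sub (Continuous.intervalIntegrable (by fun_prop) _ _)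
    (Continuous.intervalIntegrable (by fun_prop) _ _), intervalIntegral.integral_const_mul,
    inner_gradAction, action]
  ring

end Estimates

section Limit

variable [FiniteDimensional ℝ V] (P : AsymptoticallyQuadraticHamiltonian V) {I : ℕ → Finset ℤ}
  {c : ∀ j, TrigCoeffs V (I j)} {y : ℝ → V} {B : ℝ}
  (hbdd : ∀ j, ∀ t ∈ Icc (0 : ℝ) 1, ‖trigSum P.J (c j) t‖ ≤ B)
  (hlim : ∀ t ∈ Icc (0 : ℝ) 1,
    Filter.Tendsto (fun j ↦ trigSum P.J (c j) t) Filter.atTop (nhds (y t)))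
  (hgrad : Filter.Tendsto (fun j ↦ ‖P.gradAction (c j)‖) Filter.atTop (nhds 0))
include hbdd hlim hgrad

lemma smul_modeCoeff_eq_of_tendsto (hI : ∀ k, ∀ᶠ j in Filter.atTop, k ∈ I j) (k : ℤ) :
    (2 * Real.pi * k) • modeCoeff P.J y k = modeCoeff P.J (fun t ↦ P.gradH (y t)) k := by
  have hcoeff : Filter.Tendsto (fun j ↦ modeCoeff P.J (trigSum P.J (c j)) k) Filter.atTop
      (nhds (modeCoeff P.J y k)) := tendsto_intervalIntegral_comp_of_bounded
    (F := fun p : ℝ × V ↦ rotation P.J (-(2 * Real.pi * k * p.1)) p.2) (by fun_prop)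
    (fun j ↦ continuous_trigSum _ _) hbdd hlim
  have hgradH : Filter.Tendsto (fun j ↦ modeCoeff P.J (fun t ↦ P.gradH (trigSum P.J (c j) t)) k)
      Filter.atTop (nhds (modeCoeff P.J (fun t ↦ P.gradH (y t)) k)) :=
    tendsto_intervalIntegral_comp_of_bounded
      (F := fun p : ℝ × V ↦ rotation P.J (-(2 * Real.pi * k * p.1)) (P.gradH p.2)) (by fun_prop)
      (fun j ↦ continuous_trigSum _ _) hbdd hlim
  have hdiff := (hcoeff.const_smul (2 * Real.pi * (k : ℝ))).sub hgradH
  refine sub_eq_zero.1 (tendsto_nhds_unique hdiff (squeeze_zero_norm' ?_ hgrad))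
  filter_upwards [hI k] with j hkj
  have hle := PiLp.norm_apply_le (P.gradAction (c j)) ⟨k, hkj⟩
  rwa [gradAction_apply, ← modeCoeff_trigSum P.hJ (c j) ⟨k, hkj⟩] at hle

lemma tendsto_action {R : ℝ} (hc : ∀ j, ‖c j‖ ≤ R) :
    Filter.Tendsto (fun j ↦ P.action (c j)) Filter.atTop
      (nhds (∫ t in (0 : ℝ)..1, (1 / 2 * inner ℝ (P.gradH (y t)) (y t) - P.H (y t)))) := by
  simp only [action_eq_inner_gradAction_add_integral]
  have hinner : Filter.Tendsto (fun j ↦ inner ℝ (P.gradAction (c j)) (c j)) Filter.atTop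
      (nhds 0) := by
    refine squeeze_zero_norm (fun j ↦ (norm_inner_le_norm _ _).trans
      (mul_le_mul_of_nonneg_left (hc j) (norm_nonneg _))) ?_
    simpa using hgrad.mul_const R
  have hintegral := tendsto_intervalIntegral_comp_of_bounded
    (F := fun p : ℝ × V ↦ 1 / 2 * inner ℝ (P.gradH p.2) p.2 - P.H p.2) (by fun_prop)
    (fun j ↦ continuous_trigSum _ _) hbdd hlim
  have hsum := (hinner.const_mul (1 / 2)).add hintegral
  rwa [mul_zero, zero_add] at hsum

end Limit

variable [FiniteDimensional ℝ V] (P : AsymptoticallyQuadraticHamiltonian V)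

lemma exists_almost_critical_seq : ∃ β > 0, ∃ C : ℝ, ∃ c : ∀ j : ℕ,
    TrigCoeffs V (Finset.Icc (-(j + 1 : ℤ)) (j + 1)), ∀ j, β ≤ P.action (c j) ∧
      ‖P.gradAction (c j)‖ ≤ 1 / ((j : ℝ) + 1) ∧ ‖c j‖ ^ 2 ≤ C ∧ ‖freqMul _ (c j)‖ ^ 2 ≤ C := by
  obtain ⟨β, hβ, hlinking⟩ := P.exists_le_action_norm_gradAction_le
  obtain ⟨C, hC⟩ := P.exists_bound_of_norm_gradAction_le_one
  choose c hcβ hcgrad using fun j : ℕ ↦ hlinking (Finset.Icc (-(j + 1 : ℤ)) (j + 1))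
    (by rw [Finset.mem_Icc]; lia) (by rw [Finset.mem_Icc]; lia) (1 / ((j : ℝ) + 1)) (by positivity)
  refine ⟨β, hβ, C, c, fun j ↦ ⟨hcβ j, hcgrad j, hC _ _ ((hcgrad j).trans ?_)⟩⟩
  rw [div_le_one (by positivity)]
  linarith [j.cast_nonneg (α := ℝ)]

theorem exists_periodic_orbit_action_pos : ∃ x : ℝ → V, x 0 = x 1 ∧
    (∀ t ∈ Icc (0 : ℝ) 1, HasDerivAt x (P.J (P.gradH (x t))) t) ∧
    0 < ∫ t in (0 : ℝ)..1, (1 / 2 * inner ℝ (P.gradH (x t)) (x t) - P.H (x t)) := by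
  obtain ⟨β, hβ, C, c, hc⟩ := P.exists_almost_critical_seq
  choose hcβ hcgrad hcC hcfreq using hc
  obtain ⟨σ, hσ, y, hy, hlim⟩ := exists_subseq_tendsto_trigSum P.hJ hcC hcfreq
  have hbdd (j : ℕ) (t : ℝ) (ht : t ∈ Icc (0 : ℝ) 1) :
      ‖trigSum P.J (c (σ j)) t‖ ≤ √(4 * C) := Real.le_sqrt_of_sq_le <|
    (norm_trigSum_sq_le P.hJ _ ht).trans (by linarith [hcC (σ j), hcfreq (σ j)])
  have hgrad : Filter.Tendsto (fun j ↦ ‖P.gradAction (c (σ j))‖) Filter.atTop (nhds 0) :=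
    squeeze_zero (fun j ↦ norm_nonneg _) (fun j ↦ hcgrad (σ j))
      (tendsto_one_div_add_atTop_nhds_zero_nat.comp hσ.tendsto_atTop)
  have hI (k : ℤ) : ∀ᶠ j in Filter.atTop, k ∈ Finset.Icc (-(σ j + 1 : ℤ)) (σ j + 1) := by
    filter_upwards [Filter.eventually_ge_atTop k.natAbs] with j hj
    have hσj : j ≤ σ j := hσ.id_le j
    rw [Finset.mem_Icc]
    lia
  have hper : y 0 = y 1 := tendsto_nhds_unique (hlim 0 (by simp)) <| by
    simpa only [trigSum_one_eq_trigSum_zero] using hlim 1 (by simp)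
  let x (t : ℝ) : V := y 0 + ∫ s in (0 : ℝ)..t, P.J (P.gradH (y s))
  have hyx (t : ℝ) (ht : t ∈ Icc (0 : ℝ) 1) : y t = x t :=
    eq_add_integral_of_modeCoeff_eq P.hJ hy (by fun_prop) hper
      (P.smul_modeCoeff_eq_of_tendsto hbdd hlim hgrad hI) ht
  refine ⟨x, by rw [← hyx 0 (by simp), ← hyx 1 (by simp), hper], fun t ht ↦ ?_, ?_⟩
  · rw [← hyx t ht]
    have hcont : Continuous fun s ↦ P.J (P.gradH (y s)) := by fun_prop
    exact (hcont.integral_hasStrictDerivAt 0 t).hasDerivAt.const_add (y 0)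
  · have haction := P.tendsto_action hbdd hlim hgrad fun j ↦ Real.le_sqrt_of_sq_le (hcC (σ j))
    refine hβ.trans_le ((ge_of_tendsto' haction fun j ↦ hcβ (σ j)).trans_eq ?_)
    refine intervalIntegral.integral_congr fun t ht ↦ ?_
    rw [uIcc_of_le zero_le_one] at ht
    simp only [hyx t ht]

end AsymptoticallyQuadraticHamiltonian

section Autonomous

lemma eq_of_hasDerivAt_zero {E : Type*} [NormedAddCommGroup E] [NormedSpace ℝ E] {f : ℝ → E}
    {a b t : ℝ} (hf : ∀ t ∈ Icc a b, HasDerivAt f 0 t) (ht : t ∈ Icc a b) : f t = f a :=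
  constant_of_has_deriv_right_zero (fun t ht ↦ (hf t ht).continuousAt.continuousWithinAt)
    (fun t ht ↦ (hf t (Ico_subset_Icc_self ht)).hasDerivWithinAt) t ht

lemma eq_of_hasDerivAt_of_apply_eq_zero {E : Type*} [NormedAddCommGroup E] [NormedSpace ℝ E]
    {v : E → E} {K : NNReal} (hv : LipschitzWith K v) {x : ℝ → E} {a b t₀ t : ℝ}
    (hx : ∀ t ∈ Icc a b, HasDerivAt x (v (x t)) t) (ht₀ : t₀ ∈ Icc a b) (hzero : v (x t₀) = 0)
    (ht : t ∈ Icc a b) : x t = x t₀ := by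
  have hx_cont : ContinuousOn x (Icc a b) := fun t ht ↦ (hx t ht).continuousAt.continuousWithinAt
  rcases le_total t t₀ with htt₀ | htt₀
  · exact ODE_solution_unique_of_mem_Icc_left (v := fun _ ↦ v) (s := fun _ ↦ univ)
      (g := fun _ ↦ x t₀) (fun _ _ ↦ hv.lipschitzOnWith)
      (hx_cont.mono (Icc_subset_Icc_right ht₀.2))
      (fun t ht ↦ (hx t ⟨ht.1.le, ht.2.trans ht₀.2⟩).hasDerivWithinAt) (fun _ _ ↦ mem_univ _)
      continuousOn_const (fun _ _ ↦ hzero ▸ hasDerivWithinAt_const _ _ _) (fun _ _ ↦ mem_univ _)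
      rfl ⟨ht.1, htt₀⟩
  · exact ODE_solution_unique_of_mem_Icc_right (v := fun _ ↦ v) (s := fun _ ↦ univ)
      (g := fun _ ↦ x t₀) (fun _ _ ↦ hv.lipschitzOnWith)
      (hx_cont.mono (Icc_subset_Icc_left ht₀.1))
      (fun t ht ↦ (hx t ⟨ht₀.1.trans ht.1, ht.2.le⟩).hasDerivWithinAt) (fun _ _ ↦ mem_univ _)
      continuousOn_const (fun _ _ ↦ hzero ▸ hasDerivWithinAt_const _ _ _) (fun _ _ ↦ mem_univ _)
      rfl ⟨htt₀, ht.2⟩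

end Autonomous

section SlowRotation

variable {V : Type*} [NormedAddCommGroup V] [InnerProductSpace ℝ V] {J : V →L[ℝ] V}
  (hJ : IsOrthogonalComplexStructure J)

include hJ

lemma IsOrthogonalComplexStructure.inner_self (v : V) : inner ℝ v (J v) = 0 := by
  have hskew := hJ.inner_left v v
  rw [real_inner_comm] at hskew
  linarith

lemma smul_eq_zero_of_periodic_rotation {y : ℝ → V} {a : ℝ} (ha₀ : 0 ≤ a)
    (ha₁ : a < 2 * Real.pi) (hy : ∀ t ∈ Icc (0 : ℝ) 1, HasDerivAt y (a • J (y t)) t)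
    (hper : y 0 = y 1) : a • y 0 = 0 := by
  have hderiv (t : ℝ) (ht : t ∈ Icc (0 : ℝ) 1) :
      HasDerivAt (fun t ↦ rotation J (-a * t) (y t)) 0 t := by
    refine (hJ.hasDerivAt_rotation_mul (-a) (hy t ht)).congr_deriv ?_
    rw [map_smul, map_rotation (fun _ ↦ rfl), neg_smul, add_neg_cancel]
  have hfixed : rotation J (-a) (y 0) = y 0 := by
    simpa [← hper] using eq_of_hasDerivAt_zero hderiv (right_mem_Icc.2 zero_le_one)
  have hcos : (Real.cos a - 1) * ‖y 0‖ ^ 2 = 0 := by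
    have hinner := congrArg (inner ℝ (y 0)) hfixed
    rw [rotation_apply, inner_add_right, real_inner_smul_right, real_inner_smul_right,
      hJ.inner_self, real_inner_self_eq_norm_sq, Real.cos_neg] at hinner
    linarith
  rcases mul_eq_zero.1 hcos with hcos | hnorm
  · have ha : a = 0 := (Real.cos_eq_one_iff_of_lt_of_lt (by linarith [Real.pi_pos]) ha₁).1
      (sub_eq_zero.1 hcos)
    rw [ha, zero_smul]
  · rw [norm_eq_zero.1 (pow_eq_zero_iff two_ne_zero |>.1 hnorm), smul_zero]

lemma smul_eq_zero_of_periodic_radial {y : ℝ → V} {l : ℝ → ℝ} (hl₀ : ∀ s, 0 ≤ l s)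
    (hl₁ : ∀ s, l s < 2 * Real.pi)
    (hy : ∀ t ∈ Icc (0 : ℝ) 1, HasDerivAt y (J (l (‖y t‖ ^ 2) • y t)) t) (hper : y 0 = y 1) :
    l (‖y 0‖ ^ 2) • y 0 = 0 := by
  have hnorm (t : ℝ) (ht : t ∈ Icc (0 : ℝ) 1) : ‖y t‖ ^ 2 = ‖y 0‖ ^ 2 := by
    refine eq_of_hasDerivAt_zero (f := fun t ↦ ‖y t‖ ^ 2) (fun t ht ↦ ?_) ht
    refine (hy t ht).norm_sq.congr_deriv ?_
    rw [map_smul, real_inner_smul_right, hJ.inner_self, mul_zero, mul_zero]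
  refine smul_eq_zero_of_periodic_rotation hJ (hl₀ _) (hl₁ _) (fun t ht ↦ ?_) hper
  rw [← hnorm t ht, ← map_smul]
  exact hy t ht

end SlowRotation

section SymplecticEmbedding

variable {V : Type*} [NormedAddCommGroup V] [InnerProductSpace ℝ V]

/-- A symplectic embedding of class `C²` of an open set `s`, for the symplectic form
`ω(u, v) = ⟪J u, v⟫`. Being a topological embedding follows from the inverse function theorem. -/
structure IsSymplecticEmbeddingOn (J : V →L[ℝ] V) (φ : V → V) (s : Set V) : Prop where
  isOpen : IsOpen s
  contDiffOn : ContDiffOn ℝ 2 φ s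
  injOn : InjOn φ s
  inner_fderiv : ∀ x ∈ s, ∀ u v,
    inner ℝ (J (fderiv ℝ φ x u)) (fderiv ℝ φ x v) = inner ℝ (J u) v

namespace IsSymplecticEmbeddingOn

variable {J : V →L[ℝ] V} {φ : V → V} {s : Set V} {x : V}

section

variable (hφ : IsSymplecticEmbeddingOn J φ s) (hx : x ∈ s)

include hφ hx

lemma contDiffAt : ContDiffAt ℝ 2 φ x :=
  hφ.contDiffOn.contDiffAt (hφ.isOpen.mem_nhds hx)

lemma hasFDerivAt : HasFDerivAt φ (fderiv ℝ φ x) x :=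
  ((hφ.contDiffAt hx).differentiableAt two_ne_zero).hasFDerivAt

lemma inner_gradient_fderiv [CompleteSpace V] {H : V → ℝ} {G g : V}
    (hH : HasGradientAt H G (φ x)) (hHφ : HasGradientAt (fun w ↦ H (φ w)) g x) (v : V) :
    inner ℝ G (fderiv ℝ φ x v) = inner ℝ g v :=
  congrArg (fun l : V →L[ℝ] ℝ ↦ l v)
    ((hH.hasFDerivAt.comp x (hφ.hasFDerivAt hx)).unique hHφ.hasFDerivAt)

lemma injective_fderiv (hJ : IsOrthogonalComplexStructure J) :
    Function.Injective (fderiv ℝ φ x) := by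
  rw [injective_iff_map_eq_zero]
  intro u hu
  have hJu : J u = 0 := ext_inner_right ℝ fun v ↦ by simp [← hφ.inner_fderiv x hx, hu]
  rw [← norm_eq_zero, ← hJ.norm_apply, hJu, norm_zero]

variable [FiniteDimensional ℝ V] (hJ : IsOrthogonalComplexStructure J)

include hJ

lemma exists_hasFDerivAt_equiv : ∃ E : V ≃L[ℝ] V, HasFDerivAt φ (E : V →L[ℝ] V) x :=
  ⟨(LinearEquiv.ofInjectiveEndo (fderiv ℝ φ x : V →ₗ[ℝ] V)
    (hφ.injective_fderiv hx hJ)).toContinuousLinearEquiv, hφ.hasFDerivAt hx⟩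

lemma eq_zero_of_hasGradientAt_comp_zero {H : V → ℝ} {G : V} (hH : HasGradientAt H G (φ x))
    (hHφ : HasGradientAt (fun w ↦ H (φ w)) 0 x) : G = 0 := by
  obtain ⟨v, hv⟩ := LinearMap.injective_iff_surjective.1 (hφ.injective_fderiv hx hJ) G
  have hinner := hφ.inner_gradient_fderiv hx hH hHφ v
  rw [inner_zero_left, ← hv] at hinner
  rw [← hv]
  exact inner_self_eq_zero.1 hinner

lemma contDiffAt_invFunOn : ContDiffAt ℝ 2 (Function.invFunOn φ s) (φ x) := by
  obtain ⟨E, hE⟩ := hφ.exists_hasFDerivAt_equiv hx hJ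
  have hφx := hφ.contDiffAt hx
  have hinv := hφx.to_localInverse hE two_ne_zero
  refine hinv.congr_of_eventuallyEq ?_
  have hmem : ∀ᶠ z in nhds (φ x), hφx.localInverse hE two_ne_zero z ∈ s :=
    hinv.continuousAt.eventually_mem <| by
      rw [hφx.localInverse_apply_image hE]
      exact hφ.isOpen.mem_nhds hx
  filter_upwards [(hφx.hasStrictFDerivAt' hE two_ne_zero).eventually_right_inverse, hmem]
    with z hz hzs
  conv_lhs => rw [← hz]
  exact hφ.injOn.leftInvOn_invFunOn hzs

end

variable [FiniteDimensional ℝ V]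

lemma isOpen_image (hφ : IsSymplecticEmbeddingOn J φ s) (hJ : IsOrthogonalComplexStructure J) :
    IsOpen (φ '' s) := by
  rw [isOpen_iff_mem_nhds]
  rintro _ ⟨x, hx, rfl⟩
  obtain ⟨E, hE⟩ := hφ.exists_hasFDerivAt_equiv hx hJ
  rw [← ((hφ.contDiffAt hx).hasStrictFDerivAt' hE two_ne_zero).map_nhds_eq_of_equiv]
  exact Filter.image_mem_map (hφ.isOpen.mem_nhds hx)

/-- Symplectic maps conjugate Hamiltonian flows: `ψ ∘ x` is an orbit of `H ∘ φ`. -/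
lemma hasDerivAt_invFunOn_comp (hφ : IsSymplecticEmbeddingOn J φ s)
    (hJ : IsOrthogonalComplexStructure J) {H : V → ℝ} {x : ℝ → V} {G g : V} {t : ℝ}
    (hx : HasDerivAt x (J G) t) (hxt : x t ∈ φ '' s) (hH : HasGradientAt H G (x t))
    (hHφ : HasGradientAt (fun w ↦ H (φ w)) g (Function.invFunOn φ s (x t))) :
    HasDerivAt (fun τ ↦ Function.invFunOn φ s (x τ)) (J g) t := by
  obtain ⟨w, hw, hφw⟩ := hxt
  have hψ : Function.invFunOn φ s (x t) = w := hφw ▸ hφ.injOn.leftInvOn_invFunOn hw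
  have hdiff := (hφ.contDiffAt_invFunOn hw hJ).differentiableAt two_ne_zero
  rw [hφw] at hdiff
  have hy := hdiff.hasFDerivAt.comp_hasDerivAt t hx
  set y' := fderiv ℝ (Function.invFunOn φ s) (x t) (J G)
  have hDy' : fderiv ℝ φ w y' = J G := by
    refine ((hφ.hasFDerivAt hw).comp_hasDerivAt_of_eq t hy hψ.symm).unique
      (hx.congr_of_eventuallyEq ?_)
    filter_upwards [hx.continuousAt.eventually_mem
      ((hφ.isOpen_image hJ).mem_nhds ⟨w, hw, hφw⟩)] with τ hτ
    exact Function.invFunOn_eq hτ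
  rw [hψ] at hHφ
  rw [← hφw] at hH
  have hJy' : J y' = -g := ext_inner_right ℝ fun v ↦ by
    rw [← hφ.inner_fderiv w hw, hDy', hJ.apply_apply, inner_neg_left, inner_neg_left,
      hφ.inner_gradient_fderiv hw hH hHφ]
  have hy'_eq : y' = J g := by
    rw [← neg_inj, ← hJ.apply_apply, hJy', map_neg]
  exact hy'_eq ▸ hy

end IsSymplecticEmbeddingOn

end SymplecticEmbedding

section Contradiction

variable {V : Type*} [NormedAddCommGroup V] [InnerProductSpace ℝ V]

lemma hasGradientAt_comp_norm_sq [CompleteSpace V] {h : ℝ → ℝ} {h' : ℝ} {x : V}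
    (hh : HasDerivAt h h' (‖x‖ ^ 2)) :
    HasGradientAt (fun w : V ↦ h (‖w‖ ^ 2)) ((2 * h') • x) x := by
  rw [hasGradientAt_iff_hasFDerivAt]
  refine (hh.comp_hasFDerivAt x (hasStrictFDerivAt_norm_sq x).hasFDerivAt).congr_fderiv ?_
  ext v
  simp
  ring

namespace AsymptoticallyQuadraticHamiltonian

variable [FiniteDimensional ℝ V] (P : AsymptoticallyQuadraticHamiltonian V)

lemma exists_periodic_orbit_gradH_ne_zero : ∃ x : ℝ → V, x 0 = x 1 ∧
    (∀ t ∈ Icc (0 : ℝ) 1, HasDerivAt x (P.J (P.gradH (x t))) t) ∧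
    (∀ t ∈ Icc (0 : ℝ) 1, P.gradH (x t) ≠ 0) ∧
    ∃ t ∈ Icc (0 : ℝ) 1, P.H (x t) < 1 / 2 * inner ℝ (P.gradH (x t)) (x t) := by
  obtain ⟨x, hper, hx, haction⟩ := P.exists_periodic_orbit_action_pos
  obtain ⟨t₁, ht₁, hlt⟩ : ∃ t ∈ Icc (0 : ℝ) 1,
      P.H (x t) < 1 / 2 * inner ℝ (P.gradH (x t)) (x t) := by
    by_contra! hle
    have hneg := intervalIntegral.integral_nonneg (μ := MeasureTheory.volume) zero_le_one
      fun t ht ↦ neg_nonneg.2 (sub_nonpos.2 (hle t ht))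
    rw [intervalIntegral.integral_neg] at hneg
    linarith
  refine ⟨x, hper, hx, fun t ht hzero ↦ ?_, t₁, ht₁, hlt⟩
  rw [eq_of_hasDerivAt_of_apply_eq_zero (v := fun z ↦ P.J (P.gradH z))
    (P.J.lipschitz.comp P.lipschitzWith_gradH) hx ht (by rw [hzero, map_zero]) ht₁, hzero,
    inner_zero_left, mul_zero] at hlt
  exact hlt.not_ge (P.H_nonneg _)

variable {φ : V → V} {s : Set V}

lemma gradH_eq_zero_of_periodic_orbit_mem_image (hφ : IsSymplecticEmbeddingOn P.J φ s)
    {h h' : ℝ → ℝ} (hh : ∀ τ, HasDerivAt h (h' τ) τ) (hh'₀ : ∀ τ, 0 ≤ h' τ)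
    (hh'₁ : ∀ τ, h' τ < Real.pi) (hH : ∀ w ∈ s, P.H (φ w) = h (‖w‖ ^ 2)) {x : ℝ → V}
    (hper : x 0 = x 1) (hx : ∀ t ∈ Icc (0 : ℝ) 1, HasDerivAt x (P.J (P.gradH (x t))) t)
    (hxs : ∀ t ∈ Icc (0 : ℝ) 1, x t ∈ φ '' s) : P.gradH (x 0) = 0 := by
  have hgrad {w : V} (hw : w ∈ s) :
      HasGradientAt (fun w ↦ P.H (φ w)) ((2 * h' (‖w‖ ^ 2)) • w) w :=
    (hasGradientAt_comp_norm_sq (hh _)).congr_of_eventuallyEq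
      (Filter.eventually_of_mem (hφ.isOpen.mem_nhds hw) hH)
  have hmem : (0 : ℝ) ∈ Icc (0 : ℝ) 1 := left_mem_Icc.2 zero_le_one
  obtain ⟨w, hw, hφw⟩ := hxs 0 hmem
  have hw_eq : Function.invFunOn φ s (x 0) = w := hφw ▸ hφ.injOn.leftInvOn_invFunOn hw
  have hzero : (2 * h' (‖w‖ ^ 2)) • w = 0 := by
    rw [← hw_eq]
    refine smul_eq_zero_of_periodic_radial (y := fun t ↦ Function.invFunOn φ s (x t))
      (l := fun τ ↦ 2 * h' τ) P.hJ (fun τ ↦ by linarith [hh'₀ τ]) (fun τ ↦ by linarith [hh'₁ τ])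
      (fun t ht ↦ ?_) (congrArg (Function.invFunOn φ s) hper)
    exact hφ.hasDerivAt_invFunOn_comp P.hJ (hx t ht) (hxs t ht) (P.hasGradientAt _)
      (hgrad (Function.invFunOn_mem (hxs t ht)))
  rw [← hφw]
  exact hφ.eq_zero_of_hasGradientAt_comp_zero hw P.hJ (P.hasGradientAt _) (hzero ▸ hgrad hw)

theorem not_radial_of_isSymplecticEmbeddingOn (hφ : IsSymplecticEmbeddingOn P.J φ s) {W : Set V}
    (hW : IsOpen W) (hdisj : Disjoint (φ '' s) W)
    (hcritical : ∀ z, z ∉ φ '' s → z ∉ W → P.gradH z = 0)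
    (haction : ∀ z ∈ W, 1 / 2 * inner ℝ (P.gradH z) z ≤ P.H z) {h h' : ℝ → ℝ}
    (hh : ∀ τ, HasDerivAt h (h' τ) τ) (hh'₀ : ∀ τ, 0 ≤ h' τ) (hh'₁ : ∀ τ, h' τ < Real.pi) :
    ¬ ∀ w ∈ s, P.H (φ w) = h (‖w‖ ^ 2) := by
  intro hH
  obtain ⟨x, hper, hx, hne, t₁, ht₁, hlt⟩ := P.exists_periodic_orbit_gradH_ne_zero
  have hconn : IsPreconnected (x '' Icc (0 : ℝ) 1) :=
    isPreconnected_Icc.image _ fun t ht ↦ (hx t ht).continuousAt.continuousWithinAt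
  have hcover : x '' Icc (0 : ℝ) 1 ⊆ φ '' s ∪ W := by
    rintro _ ⟨t, ht, rfl⟩
    by_contra hout
    rw [mem_union, not_or] at hout
    exact hne t ht (hcritical _ hout.1 hout.2)
  rcases hconn.subset_or_subset (hφ.isOpen_image P.hJ) hW hdisj hcover with hin | hin
  · exact hne 0 (left_mem_Icc.2 zero_le_one) (P.gradH_eq_zero_of_periodic_orbit_mem_image hφ hh
      hh'₀ hh'₁ hH hper hx fun t ht ↦ hin (mem_image_of_mem x ht))
  · exact hlt.not_ge (haction _ (hin (mem_image_of_mem x ht₁)))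

end AsymptoticallyQuadraticHamiltonian

end Contradiction

section Profiles

/-- The profile `h` of the radial Hamiltonian `x ↦ h (‖x‖²)` on the ball: it vanishes near the
centre and increases to the constant value `m`, with slope less than `π`, so that every orbit
rotates by less than a full turn in unit time. -/
structure IsBallProfile (h : ℝ → ℝ) (ε s₀ m : ℝ) : Prop where
  contDiff : ContDiff ℝ 2 h
  deriv_nonneg : ∀ s, 0 ≤ deriv h s
  deriv_lt_pi : ∀ s, deriv h s < Real.pi
  eq_zero : ∀ s ≤ ε, h s = 0
  eq_const : ∀ s, s₀ ≤ s → h s = m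

/-- The profile `f` of the Hamiltonian `z ↦ f (q z)` outside the image of the ball, for a positive
definite quadratic form `q`: it equals `m` on `{q ≤ a}`, it is asymptotically linear of slope `κ`,
and `s * f' s ≤ f s` makes the action of all orbits of `f ∘ q` nonpositive. -/
structure IsCylinderProfile (f : ℝ → ℝ) (a m κ s₁ c : ℝ) : Prop where
  contDiff : ContDiff ℝ 2 f
  eq_const : ∀ s ≤ a, f s = m
  const_le : ∀ s, m ≤ f s
  mul_deriv_le : ∀ s, 0 ≤ s → s * deriv f s ≤ f s
  eq_affine : ∀ s, s₁ ≤ s → f s = κ * s + c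

lemma contDiff_integral {b : ℝ → ℝ} {n : ℕ} (hb : ContDiff ℝ n b) (a : ℝ) :
    ContDiff ℝ (n + 1) fun s ↦ ∫ t in a..s, b t := by
  have hderiv (s : ℝ) : HasDerivAt (fun s ↦ ∫ t in a..s, b t) (b s) s :=
    (hb.continuous.integral_hasStrictDerivAt a s).hasDerivAt
  have hderiv_eq : deriv (fun s ↦ ∫ t in a..s, b t) = b := funext fun s ↦ (hderiv s).deriv
  rw [contDiff_succ_iff_deriv, hderiv_eq]
  exact ⟨fun s ↦ (hderiv s).differentiableAt, by simp, hb⟩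

lemma integral_eq_of_eqOn_const {b : ℝ → ℝ} {k s t : ℝ} (hb : ∀ τ ∈ uIcc s t, b τ = k) :
    ∫ τ in s..t, b τ = k * (t - s) := by
  rw [intervalIntegral.integral_congr (g := fun _ ↦ k) hb, intervalIntegral.integral_const,
    smul_eq_mul, mul_comm]

lemma two_mul_rIn_le_integral_bump {c : ℝ} (b : ContDiffBump c) :
    2 * b.rIn ≤ ∫ t in (c - b.rOut)..(c + b.rOut), b t := by
  have hplateau : ∫ t in (c - b.rIn)..(c + b.rIn), b t = 2 * b.rIn := by
    rw [integral_eq_of_eqOn_const (k := 1) fun t ht ↦ ?_]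
    · ring
    · rw [uIcc_of_le (by linarith [b.rIn_pos]), ← Real.closedBall_eq_Icc] at ht
      exact b.one_of_mem_closedBall ht
  rw [← hplateau]
  exact intervalIntegral.integral_mono_interval (by linarith [b.rIn_lt_rOut])
    (by linarith [b.rIn_pos]) (by linarith [b.rIn_lt_rOut])
    (Filter.Eventually.of_forall fun _ ↦ b.nonneg) (b.continuous.intervalIntegrable _ _)

lemma IsBallProfile.nonneg {h : ℝ → ℝ} {ε s₀ m : ℝ} (hh : IsBallProfile h ε s₀ m) (s : ℝ) :
    0 ≤ h s := by
  rcases le_total s ε with hs | hs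
  · exact (hh.eq_zero s hs).ge
  · rw [← hh.eq_zero ε le_rfl]
    exact monotone_of_deriv_nonneg (hh.contDiff.differentiable two_ne_zero) hh.deriv_nonneg hs

lemma IsCylinderProfile.deriv_eq_zero {f : ℝ → ℝ} {a m κ s₁ c s : ℝ}
    (hf : IsCylinderProfile f a m κ s₁ c) (hs : s ≤ a) : deriv f s = 0 :=
  IsLocalMin.deriv_eq_zero <| Filter.Eventually.of_forall fun τ ↦
    (hf.eq_const s hs).trans_le (hf.const_le τ)

lemma isBallProfile_integral_bump {c κ : ℝ} (b : ContDiffBump c) (hκ₀ : 0 ≤ κ)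
    (hκ₁ : κ < Real.pi) :
    IsBallProfile (fun s ↦ κ * ∫ t in (c - b.rOut)..s, b t) (c - b.rOut) (c + b.rOut)
      (κ * ∫ t in (c - b.rOut)..(c + b.rOut), b t) := by
  have hderiv (s : ℝ) : deriv (fun s ↦ κ * ∫ t in (c - b.rOut)..s, b t) s = κ * b s :=
    ((b.continuous.integral_hasStrictDerivAt _ s).hasDerivAt.const_mul κ).deriv
  refine ⟨?_, fun s ↦ ?_, fun s ↦ ?_, fun s hs ↦ ?_, fun s hs ↦ ?_⟩
  · exact contDiff_const.mul (contDiff_integral (n := 1) b.contDiff _)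
  · exact hderiv s ▸ mul_nonneg hκ₀ b.nonneg
  · exact hderiv s ▸ (mul_le_of_le_one_right hκ₀ b.le_one).trans_lt hκ₁
  · rw [integral_eq_of_eqOn_const (k := 0) fun t ht ↦ ?_, zero_mul, mul_zero]
    rw [uIcc_of_ge hs] at ht
    refine b.zero_of_le_dist ?_
    rw [dist_comm, Real.dist_eq]
    exact le_trans (by linarith [ht.2]) (le_abs_self _)
  · rw [← intervalIntegral.integral_add_adjacent_intervals
      (b.continuous.intervalIntegrable (c - b.rOut) (c + b.rOut))
      (b.continuous.intervalIntegrable (c + b.rOut) s),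
      integral_eq_of_eqOn_const (k := 0) (s := c + b.rOut) fun t ht ↦ ?_, zero_mul, add_zero]
    rw [uIcc_of_le hs] at ht
    refine b.zero_of_le_dist ?_
    rw [Real.dist_eq]
    exact le_trans (by linarith [ht.1]) (le_abs_self _)

lemma exists_isBallProfile {a S : ℝ} (ha : 0 < a) (haS : a < S) :
    ∃ h ε s₀ m, IsBallProfile h ε s₀ m ∧ 0 < ε ∧ s₀ < S ∧ Real.pi * a < m := by
  obtain ⟨κ, hκ, hκ_pi⟩ : ∃ κ, Real.pi * a / ((S + a) / 2) < κ ∧ κ < Real.pi := by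
    refine exists_between ?_
    rw [div_lt_iff₀ (by linarith)]
    exact mul_lt_mul_of_pos_left (by linarith) Real.pi_pos
  have hκ₀ : 0 < κ := lt_trans (by have := ha.trans haS; positivity) hκ
  let b : ContDiffBump (S / 2) := ⟨(S + a) / 4, (3 * S + a) / 8, by linarith, by linarith⟩
  refine ⟨_, _, _, _, isBallProfile_integral_bump b hκ₀.le hκ_pi,
    show 0 < S / 2 - (3 * S + a) / 8 by linarith, show S / 2 + (3 * S + a) / 8 < S by linarith, ?_⟩
  rw [div_lt_iff₀ (by linarith)] at hκ
  have hb : (S + a) / 2 ≤ ∫ t in (S / 2 - b.rOut)..(S / 2 + b.rOut), b t :=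
    le_of_eq_of_le (by ring) (two_mul_rIn_le_integral_bump b)
  exact hκ.trans_le (mul_le_mul_of_nonneg_left hb hκ₀.le)

lemma exists_smooth_step {a s₁ : ℝ} (has₁ : a < s₁) : ∃ χ : ℝ → ℝ, ContDiff ℝ 1 χ ∧
    (∀ s, 0 ≤ χ s) ∧ (∀ s, χ s ≤ 1) ∧ (∀ s ≤ a, χ s = 0) ∧ ∀ s, s₁ ≤ s → χ s = 1 := by
  refine ⟨fun s ↦ Real.smoothTransition ((s - a) / (s₁ - a)),
    Real.smoothTransition.contDiff.comp ((contDiff_id.sub contDiff_const).div_const _),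
    fun s ↦ Real.smoothTransition.nonneg _, fun s ↦ Real.smoothTransition.le_one _,
    fun s hs ↦ Real.smoothTransition.zero_of_nonpos
      (div_nonpos_of_nonpos_of_nonneg (by linarith) (by linarith)),
    fun s hs ↦ Real.smoothTransition.one_of_one_le ?_⟩
  rw [one_le_div (by linarith)]
  linarith

lemma exists_isCylinderProfile {a m κ : ℝ} (hκ : 0 < κ) (hκa : κ * a < m) :
    ∃ f s₁ c, IsCylinderProfile f a m κ s₁ c := by
  have has₁ : a < m / κ := by rwa [lt_div_iff₀' hκ]
  obtain ⟨χ, hχ, hχ₀, hχ₁, hχ_zero, hχ_one⟩ := exists_smooth_step has₁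
  let F (s : ℝ) : ℝ := ∫ t in a..s, χ t
  have hF (s : ℝ) : HasDerivAt F (χ s) s :=
    (hχ.continuous.integral_hasStrictDerivAt a s).hasDerivAt
  have hF_zero (s : ℝ) (hs : s ≤ a) : F s = 0 := by
    refine (integral_eq_of_eqOn_const (k := 0) fun t ht ↦ ?_).trans (zero_mul _)
    exact hχ_zero t (by rw [uIcc_of_ge hs] at ht; exact ht.2)
  have hF_affine (s : ℝ) (hs : m / κ ≤ s) : F s = F (m / κ) + (s - m / κ) := by
    have htail : ∫ t in (m / κ)..s, χ t = 1 * (s - m / κ) :=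
      integral_eq_of_eqOn_const fun t ht ↦ hχ_one t (by rw [uIcc_of_le hs] at ht; exact ht.1)
    rw [← one_mul (s - m / κ), ← htail]
    exact (intervalIntegral.integral_add_adjacent_intervals (hχ.continuous.intervalIntegrable _ _)
      (hχ.continuous.intervalIntegrable _ _)).symm
  have hF_nonneg (s : ℝ) : 0 ≤ κ * F s := by
    refine mul_nonneg hκ.le ?_
    rcases le_total s a with hs | hs
    · exact (hF_zero s hs).ge
    · exact intervalIntegral.integral_nonneg hs fun t _ ↦ hχ₀ t
  have hκ_mul : κ * (m / κ) = m := mul_div_cancel₀ m hκ.ne'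
  refine ⟨fun s ↦ m + κ * F s, m / κ, m + κ * F (m / κ) - κ * (m / κ),
    contDiff_const.add (contDiff_const.mul (contDiff_integral (n := 1) hχ a)),
    fun s hs ↦ by rw [hF_zero s hs]; ring, fun s ↦ le_add_of_nonneg_right (hF_nonneg s),
    fun s hs ↦ ?_, fun s hs ↦ by rw [hF_affine s hs]; ring⟩
  rw [(((hF s).const_mul κ).const_add m).deriv]
  rcases le_total s (m / κ) with hs₁ | hs₁
  · calc s * (κ * χ s) ≤ m / κ * (κ * 1) :=
          mul_le_mul hs₁ (mul_le_mul_of_nonneg_left (hχ₁ s) hκ.le) (mul_nonneg hκ.le (hχ₀ s))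
            (hs.trans hs₁)
      _ = m := by rw [mul_one, mul_comm, hκ_mul]
      _ ≤ m + κ * F s := le_add_of_nonneg_right (hF_nonneg s)
  · rw [hχ_one s hs₁, hF_affine s hs₁]
    linarith [hF_nonneg (m / κ)]

end Profiles

section SpectralGap

lemma exists_spectral_gap {a : ℝ} {j : ℤ} (hj₀ : 2 * Real.pi * j < a)
    (hj₁ : a < 2 * Real.pi * (j + 1)) :
    ∃ γ > 0, ∀ k : ℤ, γ * (1 + |(k : ℝ)|) ≤ |2 * Real.pi * k - a| := by
  have hpi := Real.pi_gt_three
  obtain ⟨μ, hμ, hμ_le⟩ : ∃ μ > 0, ∀ k : ℤ, μ ≤ |2 * Real.pi * k - a| := by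
    refine ⟨min (a - 2 * Real.pi * j) (2 * Real.pi * (j + 1) - a),
      lt_min (by linarith) (by linarith), fun k ↦ ?_⟩
    rcases le_or_gt k j with hk | hk
    · have hk' : (k : ℝ) ≤ j := mod_cast hk
      rw [abs_sub_comm]
      refine (min_le_left _ _).trans (le_trans ?_ (le_abs_self _))
      gcongr
    · have hk' : (j : ℝ) + 1 ≤ k := mod_cast hk
      refine (min_le_right _ _).trans (le_trans ?_ (le_abs_self _))
      gcongr
  refine ⟨((1 + |a|) / μ + 1)⁻¹, by positivity, fun k ↦ ?_⟩
  rw [inv_mul_le_iff₀ (by positivity)]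
  have hk : |(k : ℝ)| ≤ |2 * Real.pi * k - a| + |a| := by
    calc |(k : ℝ)| ≤ |2 * Real.pi * k| := by
          rw [abs_mul, abs_of_pos Real.two_pi_pos]
          exact le_mul_of_one_le_left (abs_nonneg _) (by linarith)
      _ ≤ |2 * Real.pi * k - a| + |a| := by simpa using abs_add_le (2 * Real.pi * k - a) a
  have hμk : 1 + |a| ≤ (1 + |a|) / μ * |2 * Real.pi * k - a| := by
    rw [div_mul_eq_mul_div, le_div_iff₀ hμ]
    exact mul_le_mul_of_nonneg_left (hμ_le k) (by positivity)
  linarith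

end SpectralGap

section QuadraticAtInfinity

variable {V : Type*} [NormedAddCommGroup V] [InnerProductSpace ℝ V]

lemma exists_le_mul_norm_sq {A : V →L[ℝ] V} {H : V → ℝ} {M ρ : ℝ} {c₀ : V}
    (hM : ∀ x, |H x - 1 / 2 * inner ℝ (A x) x| ≤ M) (hρ : 0 < ρ)
    (hzero : ∀ z, ‖z‖ ≤ ρ → H (c₀ + z) = 0) : ∃ Q, ∀ z, H (c₀ + z) ≤ Q * ‖z‖ ^ 2 := by
  have hM₀ : 0 ≤ M := (abs_nonneg _).trans (hM 0)
  refine ⟨(M + ‖A‖ * ‖c₀‖ ^ 2) / ρ ^ 2 + ‖A‖, fun z ↦ ?_⟩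
  rcases le_total ‖z‖ ρ with hz | hz
  · rw [hzero z hz]
    positivity
  have hquad : inner ℝ (A (c₀ + z)) (c₀ + z) ≤ ‖A‖ * (2 * (‖c₀‖ ^ 2 + ‖z‖ ^ 2)) :=
    calc inner ℝ (A (c₀ + z)) (c₀ + z) ≤ ‖A (c₀ + z)‖ * ‖c₀ + z‖ := real_inner_le_norm _ _
      _ ≤ ‖A‖ * ‖c₀ + z‖ * ‖c₀ + z‖ := by gcongr; exact A.le_opNorm _
      _ = ‖A‖ * ‖c₀ + z‖ ^ 2 := by ring
      _ ≤ ‖A‖ * (2 * (‖c₀‖ ^ 2 + ‖z‖ ^ 2)) := by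
        gcongr
        exact (pow_le_pow_left₀ (norm_nonneg _) (norm_add_le _ _) 2).trans add_sq_le
  have hconst : M + ‖A‖ * ‖c₀‖ ^ 2 ≤ (M + ‖A‖ * ‖c₀‖ ^ 2) / ρ ^ 2 * ‖z‖ ^ 2 := by
    rw [div_mul_eq_mul_div, le_div_iff₀ (by positivity)]
    gcongr
  linarith [(abs_le.1 (hM (c₀ + z))).2]

variable [CompleteSpace V]

lemma hasGradientAt_inner_apply_self {B : V →L[ℝ] V} (hB : (B : V →ₗ[ℝ] V).IsSymmetric) (z : V) :
    HasGradientAt (fun z ↦ inner ℝ (B z) z) ((2 : ℝ) • B z) z := by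
  rw [hasGradientAt_iff_hasFDerivAt]
  refine ((B.hasFDerivAt (x := z)).inner ℝ (hasFDerivAt_id z)).congr_fderiv ?_
  ext v
  have hsymm : inner ℝ (B v) z = inner ℝ (B z) v := (hB v z).trans (real_inner_comm _ _)
  simp [hsymm, two_mul]

lemma exists_lipschitzWith_gradient_of_hasCompactSupport {g : V → ℝ} (hg : ContDiff ℝ 2 g)
    (hsupp : HasCompactSupport g) :
    ∃ (L : NNReal) (M : ℝ), LipschitzWith L (gradient g) ∧ ∀ x, ‖gradient g x‖ ≤ M := by
  let toDualSymm : StrongDual ℝ V ≃L[ℝ] V :=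
    (InnerProductSpace.toDual ℝ V).symm.toContinuousLinearEquiv
  have hgrad : ContDiff ℝ 1 (gradient g) :=
    toDualSymm.contDiff.comp (hg.fderiv_right (by norm_num))
  have hgrad_supp : HasCompactSupport (gradient g) :=
    (hsupp.fderiv (𝕜 := ℝ)).comp_left (g := toDualSymm) (map_zero _)
  obtain ⟨L, hL⟩ := hgrad.lipschitzWith_of_hasCompactSupport hgrad_supp one_ne_zero
  obtain ⟨M, hM⟩ := hgrad_supp.exists_bound_of_continuous hgrad.continuous
  exact ⟨L, M, hL, hM⟩

lemma exists_bounds_of_eq_quadratic_compl_compact {A : V →L[ℝ] V}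
    (hA : (A : V →ₗ[ℝ] V).IsSymmetric) {H : V → ℝ} (hH : ContDiff ℝ 2 H) {K : Set V}
    (hK : IsCompact K) {c : ℝ} (hHK : ∀ z ∉ K, H z = 1 / 2 * inner ℝ (A z) z + c) :
    ∃ (L : NNReal) (M : ℝ), LipschitzWith L (gradient H) ∧
      (∀ x, |H x - 1 / 2 * inner ℝ (A x) x| ≤ M) ∧ ∀ x, ‖gradient H x - A x‖ ≤ M := by
  let g (z : V) : ℝ := H z - 1 / 2 * inner ℝ (A z) z - c
  have hg : ContDiff ℝ 2 g :=
    (hH.sub (contDiff_const.mul (A.contDiff.inner ℝ contDiff_id))).sub contDiff_const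
  have hsupp : HasCompactSupport g := HasCompactSupport.intro hK fun z hz ↦ by simp [g, hHK z hz]
  have hgrad (z : V) : gradient H z = gradient g z + A z := by
    have hsum := ((hg.differentiable two_ne_zero z).hasGradientAt.hasFDerivAt.add
      ((hasGradientAt_inner_apply_self hA z).hasFDerivAt.const_mul (1 / 2))).add_const c
    have hsum' : HasFDerivAt H (InnerProductSpace.toDual ℝ V (gradient g z + A z)) z := by
      refine (hsum.congr_fderiv ?_).congr_of_eventuallyEq (.of_forall fun x ↦ ?_)
      · ext v
        simp
      · simp only [g, Pi.add_apply]
        ring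
    exact (hasGradientAt_iff_hasFDerivAt.2 hsum').gradient
  obtain ⟨L, M₁, hL, hM₁⟩ := exists_lipschitzWith_gradient_of_hasCompactSupport hg hsupp
  obtain ⟨M₀, hM₀⟩ := hsupp.exists_bound_of_continuous hg.continuous
  refine ⟨L + ‖A‖₊, max (M₀ + |c|) M₁, ?_, fun x ↦ le_max_of_le_left ?_,
    fun x ↦ le_max_of_le_right ?_⟩
  · rw [show gradient H = gradient g + A from funext hgrad]
    exact hL.add A.lipschitz
  · calc |H x - 1 / 2 * inner ℝ (A x) x| = |g x + c| := by simp [g]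
      _ ≤ |g x| + |c| := abs_add_le _ _
      _ ≤ M₀ + |c| := by gcongr; exact hM₀ x
  · rw [hgrad, add_sub_cancel_right]
    exact hM₁ x

theorem AsymptoticallyQuadraticHamiltonian.exists_of_contDiff {J : V →L[ℝ] V}
    (hJ : IsOrthogonalComplexStructure J) {A : V →L[ℝ] V} (hA : (A : V →ₗ[ℝ] V).IsSymmetric)
    (hAJ : ∀ x, A (J x) = J (A x)) {a₀ : ℝ} (ha₀ : 0 < a₀)
    (hA_pos : ∀ x, a₀ * ‖x‖ ^ 2 ≤ inner ℝ (A x) x) {e : V} (he : ‖e‖ = 1) {a₁ : ℝ}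
    (hAe : A e = a₁ • e) (ha₁ : 2 * Real.pi < a₁) {γ : ℝ} (hγ : 0 < γ)
    (hgap : ∀ (k : ℤ) (v : V), γ * (1 + |(k : ℝ)|) * ‖v‖ ≤ ‖(2 * Real.pi * k) • v - A v‖)
    {H : V → ℝ} (hH : ContDiff ℝ 2 H) (hH₀ : ∀ x, 0 ≤ H x) {K : Set V} (hK : IsCompact K) {c : ℝ}
    (hHK : ∀ z ∉ K, H z = 1 / 2 * inner ℝ (A z) z + c) {c₀ : V}
    (hHc₀ : ∀ᶠ z in nhds c₀, H z = 0) :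
    ∃ P : AsymptoticallyQuadraticHamiltonian V, P.J = J ∧ P.H = H := by
  obtain ⟨L, M, hL, hM, hM'⟩ := exists_bounds_of_eq_quadratic_compl_compact hA hH hK hHK
  obtain ⟨ρ, hρ, hball⟩ := nhds_basis_closedBall.eventually_iff.1 hHc₀
  have hzero (z : V) (hz : ‖z‖ ≤ ρ) : H (c₀ + z) = 0 := hball (by simpa using hz)
  obtain ⟨Q, hQ⟩ := exists_le_mul_norm_sq hM hρ hzero
  exact ⟨⟨J, hJ, H, gradient H, fun x ↦ (hH.differentiable two_ne_zero x).hasGradientAt, L, hL, A,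
    hAJ, M, hM, hM', a₀, ha₀, hA_pos, e, he, a₁, hAe, ha₁, γ, hγ, hgap, hH₀, c₀, ρ, hρ, hzero, Q,
    hQ⟩, rfl, rfl⟩

end QuadraticAtInfinity

section ComplementScaling

variable {V : Type*} [NormedAddCommGroup V] [InnerProductSpace ℝ V] {T : V →L[ℝ] V} {δ : ℝ}

/-- The operator `T + δ (1 - T)`. For an orthogonal projection `T` onto a symplectic plane and
small `δ`, sublevel sets of its quadratic form are ellipsoids approximating the cylinder over a
disc of that plane. -/
def complementScaling (T : V →L[ℝ] V) (δ : ℝ) : V →L[ℝ] V :=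
  T + δ • (ContinuousLinearMap.id ℝ V - T)

lemma complementScaling_apply (T : V →L[ℝ] V) (δ : ℝ) (v : V) :
    complementScaling T δ v = T v + δ • (v - T v) := rfl

lemma complementScaling_commute {J : V →L[ℝ] V} (hTJ : ∀ x, T (J x) = J (T x)) (x : V) :
    complementScaling T δ (J x) = J (complementScaling T δ x) := by
  simp [complementScaling_apply, hTJ]

lemma complementScaling_of_fixed {e : V} (he : T e = e) : complementScaling T δ e = e := by
  simp [complementScaling_apply, he]

variable [CompleteSpace V] (hT : IsStarProjection T)
include hT

lemma isSymmetric_complementScaling :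
    (complementScaling T δ : V →ₗ[ℝ] V).IsSymmetric := by
  have hsymm : (T : V →ₗ[ℝ] V).IsSymmetric := hT.isSelfAdjoint.isSymmetric
  have hid : (LinearMap.id : V →ₗ[ℝ] V).IsSymmetric := LinearMap.IsSymmetric.id
  exact hsymm.add ((hid.sub hsymm).smul (by simp))

lemma inner_apply_sub_apply (v : V) : inner ℝ (T v) (v - T v) = 0 := by
  have hidem : T (T v) = T v := congrArg (· v) hT.isIdempotentElem.eq
  have hsymm : inner ℝ (T v) (v - T v) = inner ℝ v (T (v - T v)) :=
    hT.isSelfAdjoint.isSymmetric v (v - T v)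
  rw [hsymm, map_sub, hidem, sub_self, inner_zero_right]

lemma norm_sq_smul_apply_add_smul_sub (x y : ℝ) (v : V) :
    ‖x • T v + y • (v - T v)‖ ^ 2 = x ^ 2 * ‖T v‖ ^ 2 + y ^ 2 * ‖v - T v‖ ^ 2 := by
  rw [norm_add_sq_real, real_inner_smul_left, real_inner_smul_right, inner_apply_sub_apply hT,
    norm_smul, norm_smul, mul_pow, mul_pow, Real.norm_eq_abs, Real.norm_eq_abs, sq_abs, sq_abs]
  ring

lemma norm_sq_eq_add_norm_sub_sq (v : V) : ‖v‖ ^ 2 = ‖T v‖ ^ 2 + ‖v - T v‖ ^ 2 := by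
  simpa using norm_sq_smul_apply_add_smul_sub hT 1 1 v

lemma inner_complementScaling_self (v : V) :
    inner ℝ (complementScaling T δ v) v = ‖T v‖ ^ 2 + δ * ‖v - T v‖ ^ 2 := by
  have horth := inner_apply_sub_apply hT v
  calc inner ℝ (complementScaling T δ v) v
      = inner ℝ (T v + δ • (v - T v)) (T v + (v - T v)) := by
        rw [add_sub_cancel, complementScaling_apply]
    _ = ‖T v‖ ^ 2 + δ * ‖v - T v‖ ^ 2 := by
        rw [inner_add_left, inner_add_right, inner_add_right, real_inner_smul_left,
          real_inner_smul_left, horth, real_inner_comm (T v) (v - T v), horth,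
          real_inner_self_eq_norm_sq, real_inner_self_eq_norm_sq]
        ring

lemma mul_norm_sq_le_inner_complementScaling (hδ : δ ≤ 1) (v : V) :
    δ * ‖v‖ ^ 2 ≤ inner ℝ (complementScaling T δ v) v := by
  rw [inner_complementScaling_self hT, norm_sq_eq_add_norm_sub_sq hT, mul_add]
  gcongr
  exact mul_le_of_le_one_left (sq_nonneg _) hδ

lemma inner_complementScaling_le (hδ : 0 ≤ δ) (v : V) :
    inner ℝ (complementScaling T δ v) v ≤ ‖T v‖ ^ 2 + δ * ‖v‖ ^ 2 := by
  rw [inner_complementScaling_self hT, norm_sq_eq_add_norm_sub_sq hT v]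
  gcongr
  exact le_add_of_nonneg_left (sq_nonneg _)

lemma exists_gap_smul_complementScaling {κ : ℝ} (hκ₀ : Real.pi < κ) (hκ₁ : κ < 2 * Real.pi)
    (hδ₀ : 0 < δ) (hδ₁ : δ ≤ 1 / 2) : ∃ γ > 0, ∀ (k : ℤ) (v : V), γ * (1 + |(k : ℝ)|) * ‖v‖ ≤
      ‖(2 * Real.pi * k) • v - ((2 * κ) • complementScaling T δ) v‖ := by
  have hκ : 0 < κ := Real.pi_pos.trans hκ₀
  obtain ⟨γ₁, hγ₁, hgap₁⟩ := exists_spectral_gap (a := 2 * κ) (j := 1) (by push_cast; linarith)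
    (by push_cast; linarith)
  obtain ⟨γ₂, hγ₂, hgap₂⟩ := exists_spectral_gap (a := 2 * κ * δ) (j := 0) 
    (by rw [Int.cast_zero, mul_zero]; positivity) (by push_cast; nlinarith)
  refine ⟨min γ₁ γ₂, lt_min hγ₁ hγ₂, fun k v ↦ ?_⟩
  have hsplit : (2 * Real.pi * k) • v - ((2 * κ) • complementScaling T δ) v
      = (2 * Real.pi * k - 2 * κ) • T v + (2 * Real.pi * k - 2 * κ * δ) • (v - T v) := by
    rw [smul_apply, complementScaling_apply]
    module
  have hsq₁ : (min γ₁ γ₂ * (1 + |(k : ℝ)|)) ^ 2 ≤ (2 * Real.pi * k - 2 * κ) ^ 2 :=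
    sq_le_sq.2 <| (abs_of_nonneg (by positivity)).trans_le <|
      (mul_le_mul_of_nonneg_right (min_le_left _ _) (by positivity)).trans (hgap₁ k)
  have hsq₂ : (min γ₁ γ₂ * (1 + |(k : ℝ)|)) ^ 2 ≤ (2 * Real.pi * k - 2 * κ * δ) ^ 2 :=
    sq_le_sq.2 <| (abs_of_nonneg (by positivity)).trans_le <|
      (mul_le_mul_of_nonneg_right (min_le_right _ _) (by positivity)).trans (hgap₂ k)
  refine (sq_le_sq₀ (by positivity) (norm_nonneg _)).1 ?_
  rw [hsplit, norm_sq_smul_apply_add_smul_sub hT, mul_pow, norm_sq_eq_add_norm_sub_sq hT v, mul_add]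
  gcongr

end ComplementScaling

section Gluing

variable {V : Type*} [NormedAddCommGroup V]

open Classical in
/-- The Hamiltonian that is `h (‖x‖²)` at `φ x` for `x ∈ s`, and `f ∘ q` outside the image
`φ '' s`. -/
noncomputable def gluedHamiltonian (φ : V → V) (s : Set V) (h f : ℝ → ℝ) (q : V → ℝ) (z : V) : ℝ :=
  if z ∈ φ '' s then h (‖Function.invFunOn φ s z‖ ^ 2) else f (q z)

variable {φ : V → V} {s : Set V} {h f : ℝ → ℝ} {q : V → ℝ} {z : V}

lemma gluedHamiltonian_of_mem (hz : z ∈ φ '' s) :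
    gluedHamiltonian φ s h f q z = h (‖Function.invFunOn φ s z‖ ^ 2) := if_pos hz

lemma gluedHamiltonian_of_notMem (hz : z ∉ φ '' s) :
    gluedHamiltonian φ s h f q z = f (q z) := if_neg hz

lemma gluedHamiltonian_apply_of_injOn (hφ : InjOn φ s) {x : V} (hx : x ∈ s) :
    gluedHamiltonian φ s h f q (φ x) = h (‖x‖ ^ 2) := by
  rw [gluedHamiltonian_of_mem (mem_image_of_mem φ hx), hφ.leftInvOn_invFunOn hx]

variable {ε s₀ m a κ s₁ c R : ℝ}

lemma gluedHamiltonian_nonneg (hh : IsBallProfile h ε s₀ m)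
    (hf : IsCylinderProfile f a m κ s₁ c) (z : V) : 0 ≤ gluedHamiltonian φ s h f q z := by
  by_cases hz : z ∈ φ '' s
  · exact (hh.nonneg _).trans_eq (gluedHamiltonian_of_mem hz).symm
  · have hm : 0 ≤ m := hh.eq_const s₀ le_rfl ▸ hh.nonneg s₀
    exact (hm.trans (hf.const_le _)).trans_eq (gluedHamiltonian_of_notMem hz).symm

section InjOn

variable (hφ : InjOn φ (ball 0 R)) (hh : IsBallProfile h ε s₀ m)
  (hf : IsCylinderProfile f a m κ s₁ c) (hq : ∀ x ∈ ball 0 R, q (φ x) ≤ a)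
include hφ hh hf hq

lemma gluedHamiltonian_of_notMem_image_closedBall (hz : z ∉ φ '' closedBall 0 √s₀) :
    gluedHamiltonian φ (ball 0 R) h f q z = f (q z) := by
  by_cases hzR : z ∈ φ '' ball 0 R
  · obtain ⟨x, hx, rfl⟩ := hzR
    have hxs₀ : √s₀ < ‖x‖ := by
      by_contra! hle
      exact hz (mem_image_of_mem φ (mem_closedBall_zero_iff.2 hle))
    rw [gluedHamiltonian_apply_of_injOn hφ hx, hf.eq_const _ (hq x hx),
      hh.eq_const _ (Real.lt_sq_of_sqrt_lt hxs₀).le]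
  · exact gluedHamiltonian_of_notMem hzR

lemma gluedHamiltonian_eventuallyEq [ProperSpace V] (hcont : ContinuousOn φ (closedBall 0 √s₀))
    (hz : z ∉ φ '' closedBall 0 √s₀) :
    gluedHamiltonian φ (ball 0 R) h f q =ᶠ[nhds z] fun z ↦ f (q z) := by
  have hK : IsCompact (φ '' closedBall 0 √s₀) :=
    (isCompact_closedBall 0 √s₀).image_of_continuousOn hcont
  filter_upwards [hK.isClosed.isOpen_compl.mem_nhds hz] with y hy
    using gluedHamiltonian_of_notMem_image_closedBall hφ hh hf hq hy

end InjOn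

variable [InnerProductSpace ℝ V] [FiniteDimensional ℝ V] {J : V →L[ℝ] V}
  (hφ : IsSymplecticEmbeddingOn J φ (ball 0 R)) (hJ : IsOrthogonalComplexStructure J)
  (hh : IsBallProfile h ε s₀ m)
include hφ hJ hh

lemma contDiffAt_gluedHamiltonian_of_mem (hz : z ∈ φ '' ball 0 R) :
    ContDiffAt ℝ 2 (gluedHamiltonian φ (ball 0 R) h f q) z := by
  have hinv : ContDiffAt ℝ 2 (fun y ↦ ‖Function.invFunOn φ (ball 0 R) y‖ ^ 2) z := by
    obtain ⟨x, hx, rfl⟩ := hz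
    exact (hφ.contDiffAt_invFunOn hx hJ).norm_sq ℝ
  refine (hh.contDiff.contDiffAt.comp z hinv).congr_of_eventuallyEq ?_
  filter_upwards [(hφ.isOpen_image hJ).mem_nhds hz] with y hy using gluedHamiltonian_of_mem hy

lemma contDiff_gluedHamiltonian (hf : IsCylinderProfile f a m κ s₁ c)
    (hq : ∀ x ∈ ball 0 R, q (φ x) ≤ a) (hs₀ : √s₀ < R) (hq_smooth : ContDiff ℝ 2 q) :
    ContDiff ℝ 2 (gluedHamiltonian φ (ball 0 R) h f q) := by
  refine contDiff_iff_contDiffAt.2 fun z ↦ ?_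
  have hsub : closedBall (0 : V) √s₀ ⊆ ball 0 R := closedBall_subset_ball hs₀
  by_cases hz : z ∈ φ '' ball 0 R
  · exact contDiffAt_gluedHamiltonian_of_mem hφ hJ hh hz
  · exact (hf.contDiff.comp hq_smooth).contDiffAt.congr_of_eventuallyEq <|
      gluedHamiltonian_eventuallyEq hφ.injOn hh hf hq (hφ.contDiffOn.continuousOn.mono hsub)
        fun hz' ↦ hz (image_mono hsub hz')

lemma eventually_gluedHamiltonian_eq_zero (hε : 0 < ε) (hR : 0 < R) :
    ∀ᶠ z in nhds (φ 0), gluedHamiltonian φ (ball 0 R) h f q z = 0 := by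
  have h0 : (0 : V) ∈ ball 0 R := mem_ball_self hR
  have hsmall : ∀ᶠ z in nhds (φ 0), ‖Function.invFunOn φ (ball 0 R) z‖ ^ 2 < ε := by
    refine ((hφ.contDiffAt_invFunOn h0 hJ).continuousAt.norm.pow 2).eventually_lt
      continuousAt_const ?_
    simpa [hφ.injOn.leftInvOn_invFunOn h0] using hε
  filter_upwards [hsmall, (hφ.isOpen_image hJ).mem_nhds (mem_image_of_mem φ h0)] with z hz hz_mem
  rw [gluedHamiltonian_of_mem hz_mem, hh.eq_zero _ hz.le]

end Gluing

section Nonsqueezing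

variable {V : Type*} [NormedAddCommGroup V] [InnerProductSpace ℝ V] [FiniteDimensional ℝ V]

lemma hasGradientAt_comp_inner_apply_self {B : V →L[ℝ] V} (hB : (B : V →ₗ[ℝ] V).IsSymmetric)
    {f : ℝ → ℝ} (hf : Differentiable ℝ f) (z : V) :
    HasGradientAt (fun z ↦ f (inner ℝ (B z) z)) ((2 * deriv f (inner ℝ (B z) z)) • B z) z := by
  rw [hasGradientAt_iff_hasFDerivAt]
  refine ((hf _).hasDerivAt.comp_hasFDerivAt z
    (hasGradientAt_inner_apply_self hB z).hasFDerivAt).congr_fderiv ?_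
  ext v
  simp only [map_smul, smul_apply, InnerProductSpace.toDual_apply_apply, smul_eq_mul]
  ring

lemma isCompact_setOf_inner_apply_self_le {B : V →L[ℝ] V} {δ : ℝ} (hδ : 0 < δ)
    (hB : ∀ x, δ * ‖x‖ ^ 2 ≤ inner ℝ (B x) x) (b : ℝ) :
    IsCompact {z : V | inner ℝ (B z) z ≤ b} := by
  refine (isCompact_closedBall (0 : V) √(b / δ)).of_isClosed_subset
    (isClosed_le (by fun_prop) continuous_const) fun z hz ↦ ?_
  rw [mem_closedBall_zero_iff]
  refine Real.le_sqrt_of_sq_le ?_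
  rw [le_div_iff₀' hδ]
  exact (hB z).trans hz

variable {J T : V →L[ℝ] V} {φ : V → V} {e : V} {δ a R : ℝ}

lemma hasGradientAt_gluedHamiltonian_of_notMem (hφ : ContinuousOn φ (ball 0 R))
    (hinj : InjOn φ (ball 0 R)) {h f : ℝ → ℝ} {ε s₀ m κ s₁ c : ℝ} (hh : IsBallProfile h ε s₀ m)
    (hf : IsCylinderProfile f a m κ s₁ c) {B : V →L[ℝ] V} (hB : (B : V →ₗ[ℝ] V).IsSymmetric)
    (hφa : ∀ x ∈ ball 0 R, inner ℝ (B (φ x)) (φ x) ≤ a) (hs₀ : √s₀ < R) {z : V}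
    (hz : z ∉ φ '' ball 0 R) :
    HasGradientAt (gluedHamiltonian φ (ball 0 R) h f fun z ↦ inner ℝ (B z) z)
      ((2 * deriv f (inner ℝ (B z) z)) • B z) z := by
  have hsub : closedBall (0 : V) √s₀ ⊆ ball 0 R := closedBall_subset_ball hs₀
  exact (hasGradientAt_comp_inner_apply_self hB (hf.contDiff.differentiable two_ne_zero)
    z).congr_of_eventuallyEq <| gluedHamiltonian_eventuallyEq hinj hh hf hφa (hφ.mono hsub)
      fun hz' ↦ hz (image_mono hsub hz')

lemma exists_asymptoticallyQuadraticHamiltonian_glued (hJ : IsOrthogonalComplexStructure J)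
    (hT : IsStarProjection T) (hTJ : ∀ x, T (J x) = J (T x)) (he : ‖e‖ = 1) (hTe : T e = e)
    (hδ₀ : 0 < δ) (hδ₁ : δ ≤ 1 / 2) (hR : 0 < R) (hφ : IsSymplecticEmbeddingOn J φ (ball 0 R))
    (hφa : ∀ x ∈ ball 0 R, inner ℝ (complementScaling T δ (φ x)) (φ x) ≤ a)
    {h f : ℝ → ℝ} {ε s₀ m κ s₁ c : ℝ} (hh : IsBallProfile h ε s₀ m) (hε : 0 < ε) (hs₀ : √s₀ < R)
    (hf : IsCylinderProfile f a m κ s₁ c) (hκ₀ : Real.pi < κ) (hκ₁ : κ < 2 * Real.pi) :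
    ∃ P : AsymptoticallyQuadraticHamiltonian V, P.J = J ∧ P.H =
      gluedHamiltonian φ (ball 0 R) h f fun z ↦ inner ℝ (complementScaling T δ z) z := by
  have hB := mul_norm_sq_le_inner_complementScaling hT (δ := δ) (by linarith)
  have hκ : 0 < 2 * κ := by linarith [Real.pi_pos]
  have hK : IsCompact (φ '' closedBall 0 √s₀) := (isCompact_closedBall 0 √s₀).image_of_continuousOn
    (hφ.contDiffOn.continuousOn.mono (closedBall_subset_ball hs₀))
  obtain ⟨γ, hγ, hgap⟩ := exists_gap_smul_complementScaling hT hκ₀ hκ₁ hδ₀ hδ₁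
  refine AsymptoticallyQuadraticHamiltonian.exists_of_contDiff hJ
    (A := (2 * κ) • complementScaling T δ) (a₀ := 2 * κ * δ) (a₁ := 2 * κ)
    ((isSymmetric_complementScaling hT).smul (by simp)) (fun x ↦ ?_) (by positivity) (fun x ↦ ?_)
    he ?_ (by linarith) hγ hgap
    (contDiff_gluedHamiltonian hφ hJ hh hf hφa hs₀
      ((complementScaling T δ).contDiff.inner ℝ contDiff_id))
    (gluedHamiltonian_nonneg hh hf) (hK.union (isCompact_setOf_inner_apply_self_le hδ₀ hB s₁))
    (c := c) (fun z hz ↦ ?_) (eventually_gluedHamiltonian_eq_zero hφ hJ hh hε hR)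
  · simp [complementScaling_commute hTJ]
  · rw [smul_apply, real_inner_smul_left, mul_assoc]
    exact mul_le_mul_of_nonneg_left (hB x) hκ.le
  · rw [smul_apply, complementScaling_of_fixed hTe]
  · rw [mem_union, not_or] at hz
    rw [gluedHamiltonian_of_notMem_image_closedBall hφ.injOn hh hf hφa hz.1,
      hf.eq_affine _ (not_le.1 hz.2).le, smul_apply, real_inner_smul_left]
    ring

theorem not_isSymplecticEmbeddingOn_into_ellipsoid (hJ : IsOrthogonalComplexStructure J)
    (hT : IsStarProjection T) (hTJ : ∀ x, T (J x) = J (T x)) (he : ‖e‖ = 1) (hTe : T e = e)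
    (hδ₀ : 0 < δ) (hδ₁ : δ ≤ 1 / 2) (hR : 0 < R) (ha : 0 < a) (haR : a < R ^ 2)
    (hφa : ∀ x ∈ ball 0 R, inner ℝ (complementScaling T δ (φ x)) (φ x) ≤ a) :
    ¬ IsSymplecticEmbeddingOn J φ (ball 0 R) := by
  intro hφ
  obtain ⟨h, ε, s₀, m, hh, hε, hs₀R, hm⟩ := exists_isBallProfile ha haR
  have hs₀ : √s₀ < R := (Real.sqrt_lt' hR).2 hs₀R
  obtain ⟨κ, hκ₀, hκ⟩ : ∃ κ, Real.pi < κ ∧ κ < min (2 * Real.pi) (m / a) :=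
    exists_between (lt_min (by linarith [Real.pi_pos]) ((lt_div_iff₀ ha).2 hm))
  obtain ⟨hκ₁, hκa⟩ := lt_min_iff.1 hκ
  obtain ⟨f, s₁, c, hf⟩ := exists_isCylinderProfile (Real.pi_pos.trans hκ₀) ((lt_div_iff₀ ha).1 hκa)
  obtain ⟨P, rfl, hP⟩ := exists_asymptoticallyQuadraticHamiltonian_glued hJ hT hTJ he hTe hδ₀ hδ₁
    hR hφ hφa hh hε hs₀ hf hκ₀ hκ₁
  set B := complementScaling T δ
  have hB_nonneg (z : V) : 0 ≤ inner ℝ (B z) z :=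
    le_trans (by positivity) (mul_norm_sq_le_inner_complementScaling hT (by linarith) z)
  have hgrad (z : V) (hz : z ∉ φ '' ball 0 R) :
      P.gradH z = (2 * deriv f (inner ℝ (B z) z)) • B z :=
    (P.hasGradientAt z).unique <| hP ▸ hasGradientAt_gluedHamiltonian_of_notMem
      hφ.contDiffOn.continuousOn hφ.injOn hh hf (isSymmetric_complementScaling hT) hφa hs₀ hz
  have hdisj : Disjoint (φ '' ball 0 R) {z | a < inner ℝ (B z) z} := by
    rw [disjoint_left]
    rintro _ ⟨x, hx, rfl⟩ hlt
    exact hlt.not_ge (hφa x hx)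
  refine P.not_radial_of_isSymplecticEmbeddingOn hφ (W := {z | a < inner ℝ (B z) z})
    (isOpen_lt continuous_const (by fun_prop)) hdisj (fun z hz hzW ↦ ?_) (fun z hzW ↦ ?_)
    (fun τ ↦ (hh.contDiff.differentiable two_ne_zero τ).hasDerivAt) hh.deriv_nonneg hh.deriv_lt_pi
    fun w hw ↦ by rw [hP, gluedHamiltonian_apply_of_injOn hφ.injOn hw]
  · rw [hgrad z hz, hf.deriv_eq_zero (not_lt.1 hzW), mul_zero, zero_smul]
  · have hz := disjoint_right.1 hdisj hzW
    rw [hgrad z hz, hP, gluedHamiltonian_of_notMem hz, real_inner_smul_left]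
    linarith [hf.mul_deriv_le _ (hB_nonneg z)]

theorem not_isSymplecticEmbeddingOn_into_cylinder {r : ℝ} (hJ : IsOrthogonalComplexStructure J)
    (hT : IsStarProjection T) (hTJ : ∀ x, T (J x) = J (T x)) (he : ‖e‖ = 1) (hTe : T e = e)
    (hr : 0 ≤ r) (hR : r < R) (hφr : ∀ x ∈ ball 0 R, ‖T (φ x)‖ ≤ r) :
    ¬ IsSymplecticEmbeddingOn J φ (ball 0 R) := by
  intro hφ
  obtain ⟨R', hrR', hR'⟩ := exists_between hR
  obtain ⟨a, hra, haR'⟩ : ∃ a, r ^ 2 < a ∧ a < R' ^ 2 := exists_between (by gcongr)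
  obtain ⟨C, hC⟩ := (isCompact_closedBall (0 : V) R').exists_bound_of_continuousOn
    (hφ.contDiffOn.continuousOn.mono (closedBall_subset_ball hR'))
  let δ := min (1 / 2) ((a - r ^ 2) / (C ^ 2 + 1))
  have hδ₀ : 0 < δ := lt_min (by norm_num) (div_pos (by linarith) (by positivity))
  have hδ : δ * (C ^ 2 + 1) ≤ a - r ^ 2 :=
    (le_div_iff₀ (by positivity)).1 (min_le_right _ _)
  have hsub : ball (0 : V) R' ⊆ ball 0 R := ball_subset_ball hR'.le
  refine not_isSymplecticEmbeddingOn_into_ellipsoid hJ hT hTJ he hTe hδ₀ (min_le_left _ _)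
    (hr.trans_lt hrR') ((sq_nonneg r).trans_lt hra) haR' (fun x hx ↦ ?_)
    ⟨isOpen_ball, hφ.contDiffOn.mono hsub, hφ.injOn.mono hsub,
      fun x hx ↦ hφ.inner_fderiv x (hsub hx)⟩
  calc inner ℝ (complementScaling T δ (φ x)) (φ x) ≤ ‖T (φ x)‖ ^ 2 + δ * ‖φ x‖ ^ 2 :=
        inner_complementScaling_le hT hδ₀.le _
    _ ≤ r ^ 2 + δ * C ^ 2 := by
        gcongr
        exacts [hφr x (hsub hx), hC x (ball_subset_closedBall hx)]
    _ ≤ a := by linarith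

end Nonsqueezing

noncomputable section Coordinates

variable {ι : Type*} [Fintype ι] {n : ℕ}

/-- The complex structure `(p, q) ↦ (-q, p)` on `ℝ^ι × ℝ^ι`, with `p`-coordinates indexed by
`Sum.inl` and `q`-coordinates by `Sum.inr`. -/
def standardComplexStructure (ι : Type*) [Fintype ι] :
    EuclideanSpace ℝ (ι ⊕ ι) →L[ℝ] EuclideanSpace ℝ (ι ⊕ ι) :=
  LinearMap.toContinuousLinearMap
    { toFun u := WithLp.toLp 2 (Sum.elim (fun i ↦ -u (Sum.inr i)) fun i ↦ u (Sum.inl i))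
      map_add' u v := by ext (i | i) <;> simp [add_comm]
      map_smul' c u := by ext (i | i) <;> simp }

@[simp]
lemma standardComplexStructure_inl (u : EuclideanSpace ℝ (ι ⊕ ι)) (i : ι) :
    standardComplexStructure ι u (Sum.inl i) = -u (Sum.inr i) := rfl

@[simp]
lemma standardComplexStructure_inr (u : EuclideanSpace ℝ (ι ⊕ ι)) (i : ι) :
    standardComplexStructure ι u (Sum.inr i) = u (Sum.inl i) := rfl

lemma inner_eq_sum_add_sum (u v : EuclideanSpace ℝ (ι ⊕ ι)) : inner ℝ u v =
    ∑ i, u (Sum.inl i) * v (Sum.inl i) + ∑ i, u (Sum.inr i) * v (Sum.inr i) := by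
  simp [PiLp.inner_apply, mul_comm]

lemma isOrthogonalComplexStructure_standardComplexStructure :
    IsOrthogonalComplexStructure (standardComplexStructure ι) where
  apply_apply u := by ext (i | i) <;> simp
  inner_left u v := by simp [inner_eq_sum_add_sum, add_comm]

lemma omegaSt_eq_inner (u v : EuclideanSpace ℝ (Fin n ⊕ Fin n)) :
    omegaSt u v = inner ℝ (standardComplexStructure (Fin n) u) v := by
  rw [inner_eq_sum_add_sum, omegaSt, ← Finset.sum_add_distrib]
  refine Finset.sum_congr rfl fun i _ ↦ ?_
  rw [standardComplexStructure_inl, standardComplexStructure_inr]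
  ring

variable [DecidableEq ι]

/-- The orthogonal projection of `ℝ^ι × ℝ^ι` onto the plane of the coordinates `(pᵢ, qᵢ)`. -/
def planeProjection (i : ι) : EuclideanSpace ℝ (ι ⊕ ι) →L[ℝ] EuclideanSpace ℝ (ι ⊕ ι) :=
  LinearMap.toContinuousLinearMap
    { toFun u := WithLp.toLp 2 (Sum.elim (Pi.single i (u (Sum.inl i)))
        (Pi.single i (u (Sum.inr i))))
      map_add' u v := by ext (k | k) <;> simp [Pi.single_add]
      map_smul' c u := by ext (k | k) <;> simp [Pi.single_apply] }

@[simp]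
lemma planeProjection_inl (i k : ι) (u : EuclideanSpace ℝ (ι ⊕ ι)) :
    planeProjection i u (Sum.inl k) = (Pi.single i (u (Sum.inl i)) : ι → ℝ) k := rfl

@[simp]
lemma planeProjection_inr (i k : ι) (u : EuclideanSpace ℝ (ι ⊕ ι)) :
    planeProjection i u (Sum.inr k) = (Pi.single i (u (Sum.inr i)) : ι → ℝ) k := rfl

lemma isStarProjection_planeProjection (i : ι) : IsStarProjection (planeProjection i) := by
  rw [ContinuousLinearMap.isStarProjection_iff_isSymmetricProjection]
  refine ⟨?_, fun u v ↦ ?_⟩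
  · ext u (k | k) <;> simp
  · simp [inner_eq_sum_add_sum, Pi.single_apply]

lemma planeProjection_comm (i : ι) (u : EuclideanSpace ℝ (ι ⊕ ι)) :
    planeProjection i (standardComplexStructure ι u)
      = standardComplexStructure ι (planeProjection i u) := by
  ext (k | k) <;> simp [Pi.single_neg]

lemma planeProjection_single_inl (i : ι) :
    planeProjection i (EuclideanSpace.single (Sum.inl i) 1)
      = EuclideanSpace.single (Sum.inl i) 1 := by
  ext (k | k) <;> simp [Pi.single_apply]

lemma norm_planeProjection_sq (i : ι) (u : EuclideanSpace ℝ (ι ⊕ ι)) :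
    ‖planeProjection i u‖ ^ 2 = u (Sum.inl i) ^ 2 + u (Sum.inr i) ^ 2 := by
  simp [EuclideanSpace.real_norm_sq_eq, Pi.single_apply, ite_pow]

end Coordinates

end GromovNonsqueezing

open GromovNonsqueezing in
theorem gromov_nonsqueezing_general {n : ℕ} (i : Fin n) {R r : ℝ} (hr : 0 ≤ r) (hR : r < R) :
    ¬ ∃ φ : EuclideanSpace ℝ (Fin n ⊕ Fin n) → EuclideanSpace ℝ (Fin n ⊕ Fin n),
      ContDiffOn ℝ 2 φ (ball 0 R) ∧ InjOn φ (ball 0 R) ∧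
      MapsTo φ (ball 0 R) {x | x (Sum.inl i) ^ 2 + x (Sum.inr i) ^ 2 ≤ r ^ 2} ∧
      ∀ x ∈ ball 0 R, ∀ u v, omegaSt (fderiv ℝ φ x u) (fderiv ℝ φ x v) = omegaSt u v := by
  rintro ⟨φ, hφ, hinj, hmap, hsymp⟩
  refine not_isSymplecticEmbeddingOn_into_cylinder (φ := φ)
    isOrthogonalComplexStructure_standardComplexStructure (isStarProjection_planeProjection i)
    (planeProjection_comm i) (by simp) (planeProjection_single_inl i) hr hR (fun x hx ↦ ?_)
    ⟨isOpen_ball, hφ, hinj, by simpa only [omegaSt_eq_inner] using hsymp⟩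
  rw [← sq_le_sq₀ (norm_nonneg _) hr, norm_planeProjection_sq]
  exact hmap hx

/-- **Gromov non-squeezing.** For `n ≥ 1` and `R > r > 0` there is no smooth
symplectic embedding of the standard closed ball `B_R ⊆ ℝ^{2n}` into the cylinder
`D²_r × ℝ^{2n-2} = {x : p₁² + q₁² ≤ r²}`, i.e. no smooth injective map
`φ : B_R → ℝ^{2n}` with image in the cylinder such that `φ*ω_st = ω_st`. -/
theorem gromov_nonsqueezing
    {n : ℕ} (hn : 1 ≤ n) {R r : ℝ} (hr : 0 < r) (hR : r < R) :
    ¬ ∃ φ : EuclideanSpace ℝ (Fin n ⊕ Fin n) → EuclideanSpace ℝ (Fin n ⊕ Fin n),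
      ContDiffOn ℝ (⊤ : ℕ∞) φ (closedBall 0 R) ∧
      InjOn φ (closedBall 0 R) ∧
      MapsTo φ (closedBall 0 R)
        {x : EuclideanSpace ℝ (Fin n ⊕ Fin n) |
          x (Sum.inl ⟨0, hn⟩) ^ 2 + x (Sum.inr ⟨0, hn⟩) ^ 2 ≤ r ^ 2} ∧
      ∀ x ∈ closedBall (0 : EuclideanSpace ℝ (Fin n ⊕ Fin n)) R, ∀ u v,
        omegaSt (fderivWithin ℝ φ (closedBall 0 R) x u)
            (fderivWithin ℝ φ (closedBall 0 R) x v) = omegaSt u v := by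
  rintro ⟨φ, hφ, hinj, hmap, hsymp⟩
  have hsub : ball (0 : EuclideanSpace ℝ (Fin n ⊕ Fin n)) R ⊆ closedBall 0 R :=
    ball_subset_closedBall
  refine gromov_nonsqueezing_general ⟨0, hn⟩ hr.le hR
    ⟨φ, (hφ.mono hsub).of_le (WithTop.coe_le_coe.2 le_top), hinj.mono hsub,
      hmap.mono_left hsub, fun x hx ↦ ?_⟩
  rw [← fderivWithin_of_mem_nhds (closedBall_mem_nhds_of_mem hx)]
  exact hsymp x (hsub hx)
end
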